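/- Let α∈(1/2,1) and let F satisfy the regular right tail condition (with exponent α) and the converging tail ratio condition. Then the SRT holds for F. -/

import Mathlib

open MeasureTheory Filter Set Real Asymptotics

attribute [local instance] Classical.propDecidable

noncomputable section

namespace SRT

/-- Convolution of two measures on `ℝ`. -/
def mconv (μ ν : Measure ℝ) : Measure ℝ := μ.bind fun x => ν.map fun y => x + y

/-- `n`-fold self-convolution of `μ`, with the 0-th power the unit mass at `0`. -/
def convPow (μ : Measure ℝ) : ℕ → Measure ℝ
  | 0 => Measure.dirac 0
  | n + 1 => mconv (convPow μ n) μ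

/-- The renewal measure `U = ∑ₙ F^{*n}`. -/
def renewal (μ : Measure ℝ) : Measure ℝ := Measure.sum fun n => convPow μ n

/-- Right tail `F̄(x) = μ((x,∞))`. -/
def rtail (μ : Measure ℝ) (x : ℝ) : ℝ := (μ (Set.Ioi x)).toReal

/-- `f` is strictly positive on `(0,∞)` and regularly varying at `∞` with exponent `β`. -/
def RegVary (f : ℝ → ℝ) (β : ℝ) : Prop :=
  (∀ x > 0, 0 < f x) ∧
    ∀ c > 0, Tendsto (fun x => f (c * x) / f x) atTop (nhds (c ^ β))

/-- `f` is regularly varying at `∞` with some exponent. -/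
def RegVaryAny (f : ℝ → ℝ) : Prop := ∃ β : ℝ, RegVary f β

/-- Regular right tail condition: `F̄(x) ∼ 1/ℓ(x)` as `x → ∞`. -/
def RightTail (μ : Measure ℝ) (ℓ : ℝ → ℝ) : Prop :=
  Tendsto (fun x => rtail μ x * ℓ x) atTop (nhds 1)

/-- Converging tail ratio condition: `F(-x)/F̄(x)` converges to a finite limit. -/
def TailRatio (μ : Measure ℝ) : Prop :=
  ∃ p : ℝ, Tendsto (fun x => (μ (Set.Iic (-x))).toReal / rtail μ x) atTop (nhds p)

/-- `μ` is concentrated on `dℤ`. -/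
def ConcOn (μ : Measure ℝ) (d : ℝ) : Prop := μ {x : ℝ | ∃ k : ℤ, x = k * d} = 1

/-- `μ` is arithmetic. -/
def Arith (μ : Measure ℝ) : Prop := ∃ d > 0, ConcOn μ d

/-- `h` is admissible: any positive number if `μ` is non-arithmetic, and
the span of `μ` if `μ` is arithmetic. -/
def SpanOK (μ : Measure ℝ) (h : ℝ) : Prop :=
  0 < h ∧ (¬ Arith μ ∨ (ConcOn μ h ∧ ∀ d > 0, ConcOn μ d → d ≤ h))

/-- `μ` is concentrated on `a + dℤ`. -/
def ConcOnLat (μ : Measure ℝ) (a d : ℝ) : Prop :=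
  μ {x : ℝ | ∃ k : ℤ, x = a + k * d} = 1

/-- `μ` is lattice. -/
def IsLattice (μ : Measure ℝ) : Prop := ∃ a d : ℝ, 0 ≤ a ∧ a < d ∧ ConcOnLat μ a d

/-- `h` is admissible: any positive number if `μ` is non-lattice, and
the span of `μ` if `μ` is lattice. -/
def LatSpanOK (μ : Measure ℝ) (h : ℝ) : Prop :=
  0 < h ∧ (¬ IsLattice μ ∨
    ((∃ a, 0 ≤ a ∧ a < h ∧ ConcOnLat μ a h) ∧
      ∀ a d : ℝ, 0 ≤ a → a < d → ConcOnLat μ a d → d ≤ h))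

/-- Generalized inverse `ℓ⁻(x) = inf {t ≥ 1 : ℓ(t) > x}`. -/
def linv (ℓ : ℝ → ℝ) (x : ℝ) : ℝ := sInf {t : ℝ | 1 ≤ t ∧ x < ℓ t}

/-- `ω(x) = x F((x,x+h]) / F̄(x)`. -/
def omegaFn (μ : Measure ℝ) (h x : ℝ) : ℝ :=
  x * (μ (Set.Ioc x (x + h))).toReal / rtail μ x

/-- `I_η(x,T) = ∫_{(1-η)x}^x (ω(y)-T)⁺ dy`. -/
def Iof (μ : Measure ℝ) (h η x T : ℝ) : ℝ :=
  ∫ y in (1 - η) * x..x, max (omegaFn μ h y - T) 0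

/-- `Î_{η,n,r}(x,T) = ∫_{(1-η)x}^x e^{-(x-y)/(r aₙ)} (ω(y)-T)⁺ dy`. -/
def IofHat (μ : Measure ℝ) (ℓ : ℝ → ℝ) (h η : ℝ) (n : ℕ) (r x T : ℝ) : ℝ :=
  ∫ y in (1 - η) * x..x,
    Real.exp (-(x - y) / (r * linv ℓ (n : ℝ))) * max (omegaFn μ h y - T) 0

/-- `Sₙ/aₙ` converges in distribution to a law with density `g`. -/
def StableLimit (F : Measure ℝ) (ℓ : ℝ → ℝ) (g : ℝ → ℝ) : Prop :=
  ∀ f : BoundedContinuousFunction ℝ ℝ,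
    Tendsto (fun n : ℕ =>
        ∫ x, f x ∂((convPow F n).map fun y => y / linv ℓ (n : ℝ))) atTop
      (nhds (∫ x, f x * g x))

/-- `Sₙ/aₙ` converges in distribution to the law `μζ`. -/
def WeakLimit (F : Measure ℝ) (ℓ : ℝ → ℝ) (μζ : Measure ℝ) : Prop :=
  ∀ f : BoundedContinuousFunction ℝ ℝ,
    Tendsto (fun n : ℕ =>
        ∫ x, f x ∂((convPow F n).map fun y => y / linv ℓ (n : ℝ))) atTop
      (nhds (∫ x, f x ∂μζ))

/-- The law `μ` is stable: for each `n`, the `n`-fold convolution is the law of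
`cₙ X + dₙ` for some `cₙ > 0`, `dₙ`. -/
def IsStable (μ : Measure ℝ) : Prop :=
  ∀ n : ℕ, 0 < n → ∃ c : ℝ, 0 < c ∧ ∃ d : ℝ, convPow μ n = μ.map fun x => c * x + d

/-- The strong renewal theorem:
`x F̄(x) U((x,x+h]) → α h ∫₀^∞ t^{-α} g(t) dt`. -/
def SRTholds (F : Measure ℝ) (h α : ℝ) (g : ℝ → ℝ) : Prop :=
  Tendsto (fun x : ℝ => x * rtail F x * ((renewal F) (Set.Ioc x (x + h))).toReal)
    atTop (nhds (α * h * ∫ t in Set.Ioi (0:ℝ), t ^ (-α) * g t))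

variable {Ω : Type*} [MeasurableSpace Ω]

/-- Partial sums `Sₙ = X₁ + ⋯ + Xₙ`. -/
def pSum (X : ℕ → Ω → ℝ) (n : ℕ) (ω : Ω) : ℝ := ∑ i ∈ Finset.range n, X i ω

/-- `X` is an i.i.d. sequence with common law `F` under `P`. -/
def IIDseq (P : Measure Ω) (F : Measure ℝ) (X : ℕ → Ω → ℝ) : Prop :=
  (∀ i, Measurable (X i)) ∧ (∀ i, P.map (X i) = F) ∧
    ProbabilityTheory.iIndepFun X P

/-- `Nₙ = #{i ≤ n : Xᵢ > 0}`. -/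
def Ncount (X : ℕ → Ω → ℝ) (n : ℕ) (ω : Ω) : ℕ :=
  ((Finset.range n).filter fun i => 0 < X i ω).card

/-- `Sₙ⁻ = ∑_{i ≤ n} Xᵢ⁻`. -/
def sMinus (X : ℕ → Ω → ℝ) (n : ℕ) (ω : Ω) : ℝ :=
  ∑ i ∈ Finset.range n, max (-(X i ω)) 0

/-- The quantity `R_{T,η,r,c₁,c₂}(x,δ)` of Theorem `t:sum-small-n`, with
`xₙ = x + Sₙ⁻` and `κ = ⌊1/α⌋`. -/
def Rquant (F : Measure ℝ) (ℓ : ℝ → ℝ) (h α : ℝ) (P : Measure Ω) (X : ℕ → Ω → ℝ)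
    (L : ℝ → ℝ) (T η r c₁ c₂ x δ : ℝ) : ℝ :=
  (x / ℓ x) * ∑ n ∈ Finset.Ico ⌈L x⌉₊ ⌈ℓ (δ * x)⌉₊,
    ∫ ω, ((Ncount X n ω : ℝ) / linv ℓ ((Ncount X n ω : ℕ) : ℝ)) *
        (rtail F (x + sMinus X n ω) / (x + sMinus X n ω)) *
        sSup ((fun t => IofHat F ℓ h η (Ncount X n ω) r t T) ''
          Set.Icc (c₁ * (x + sMinus X n ω) / (⌊1/α⌋₊ : ℝ))
            (c₂ * (x + sMinus X n ω) + 2 * h)) ∂P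

/-- Strict ascending ladder epochs. -/
def ladderTime (X : ℕ → Ω → ℝ) : ℕ → Ω → ℕ
  | 0 => fun _ => 0
  | k + 1 => fun ω =>
      sInf {n : ℕ | ladderTime X k ω < n ∧ pSum X (ladderTime X k ω) ω < pSum X n ω}

/-- Strict ascending ladder heights `H_k`. -/
def ladderHeight (X : ℕ → Ω → ℝ) (k : ℕ) (ω : Ω) : ℝ := pSum X (ladderTime X k ω) ω

/-- Weak descending ladder epochs (weak ascending epochs of `-S`). -/
def wLadderTimeDesc (X : ℕ → Ω → ℝ) : ℕ → Ω → ℕ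
  | 0 => fun _ => 0
  | k + 1 => fun ω =>
      sInf {n : ℕ | wLadderTimeDesc X k ω < n ∧
        pSum X n ω ≤ pSum X (wLadderTimeDesc X k ω) ω}

/-- Weak descending ladder heights (ladder heights of the walk `-S`). -/
def wLadderHeightDesc (X : ℕ → Ω → ℝ) (k : ℕ) (ω : Ω) : ℝ :=
  - pSum X (wLadderTimeDesc X k ω) ω

/-- `X_{n:k}`, the `k`-th largest among `X₁,…,Xₙ`; by convention `0` if `k > n`. -/
def ordStat (X : ℕ → Ω → ℝ) (n k : ℕ) (ω : Ω) : ℝ :=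
  sSup {t : ℝ | k ≤ ((Finset.range n).filter fun i => t ≤ X i ω).card}

/-- `S_{n:k} = X_{n:1} + ⋯ + X_{n:k}`. -/
def topSum (X : ℕ → Ω → ℝ) (n k : ℕ) (ω : Ω) : ℝ :=
  ∑ j ∈ Finset.Icc 1 k, ordStat X n j ω

/-- `ζ_{n,x} = aₙ^{1-γ} x^γ`. -/
def zetaCut (ℓ : ℝ → ℝ) (γ : ℝ) (n : ℕ) (x : ℝ) : ℝ :=
  (linv ℓ (n : ℝ)) ^ (1 - γ) * x ^ γ

/-- The event `E_{n,k,x} = {Sₙ ∈ (x,x+h], X_{n:k} > ζ_{n,x} ≥ X_{n:k+1}}`,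
with the convention `X_{n:0} = ∞`. -/
def Eevent (X : ℕ → Ω → ℝ) (ℓ : ℝ → ℝ) (h γ : ℝ) (n k : ℕ) (x : ℝ) : Set Ω :=
  {ω | pSum X n ω ∈ Set.Ioc x (x + h) ∧
    (k = 0 ∨ zetaCut ℓ γ n x < ordStat X n k ω) ∧
    ordStat X n (k + 1) ω ≤ zetaCut ℓ γ n x}

end SRT

open SRT

namespace SRT

open scoped Topology

/-- A positive antitone function bounded by `1` and regularly varying with exponent `-α`. -/
structure RegTail (G : ℝ → ℝ) (α : ℝ) : Prop where
  pos : ∀ x, 0 < G x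
  anti : Antitone G
  le_one : ∀ x, G x ≤ 1
  ratio : ∀ c > 0, Tendsto (fun x => G (c * x) / G x) atTop (𝓝 (c ^ (-α)))

lemma rtail_antitone (F : Measure ℝ) [IsProbabilityMeasure F] : Antitone (rtail F) := by
  intro x y hxy
  exact ENNReal.toReal_mono (measure_ne_top _ _) (measure_mono (Ioi_subset_Ioi hxy))

lemma rtail_pos {F : Measure ℝ} [IsProbabilityMeasure F] {ℓ : ℝ → ℝ}
    (hRT : RightTail F ℓ) (x : ℝ) : 0 < rtail F x := by
  have h1 : ∀ᶠ y in atTop, 0 < rtail F y * ℓ y := hRT.eventually (lt_mem_nhds one_pos)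
  obtain ⟨y, hy, hxy⟩ := (h1.and (eventually_ge_atTop x)).exists
  have h0 : 0 ≤ rtail F y := ENNReal.toReal_nonneg
  have h2 : 0 < rtail F y := by
    rcases h0.eq_or_lt with h | h
    · rw [← h] at hy; simp at hy
    · exact h
  exact h2.trans_le (rtail_antitone F hxy)

lemma rtail_regTail {F : Measure ℝ} [IsProbabilityMeasure F] {ℓ : ℝ → ℝ} {α : ℝ}
    (hℓ : RegVary ℓ α) (hRT : RightTail F ℓ) : RegTail (rtail F) α where
  pos := rtail_pos hRT
  anti := rtail_antitone F
  le_one x := ENNReal.toReal_le_of_le_ofReal zero_le_one (by simpa using prob_le_one)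
  ratio c hc := by
    have h1 : Tendsto (fun x => rtail F (c * x) * ℓ (c * x)) atTop (𝓝 1) :=
      hRT.comp (tendsto_id.const_mul_atTop hc)
    have h2 := (h1.div hRT one_ne_zero).div (hℓ.2 c hc) (rpow_pos_of_pos hc α).ne'
    simp only [div_one, one_div, ← rpow_neg hc.le] at h2
    refine h2.congr' ?_
    filter_upwards [eventually_gt_atTop 0] with x hx
    have := (hℓ.1 x hx).ne'
    have := (hℓ.1 (c * x) (mul_pos hc hx)).ne'
    have := (rtail_pos hRT x).ne'
    simp only [Pi.div_apply]
    field_simp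

namespace RegTail

variable {G : ℝ → ℝ} {α : ℝ}

lemma eventually_two_mul_le (hG : RegTail G α) {β : ℝ} (hβ : β < α) :
    ∀ᶠ x in atTop, G (2 * x) ≤ 2 ^ (-β) * G x := by
  have h : (2:ℝ) ^ (-α) < 2 ^ (-β) := rpow_lt_rpow_of_exponent_lt (by norm_num) (by linarith)
  filter_upwards [(hG.ratio 2 two_pos).eventually (gt_mem_nhds h)] with x hx
  exact ((div_lt_iff₀ (hG.pos x)).1 hx).le

lemma eventually_le_two_mul (hG : RegTail G α) {β : ℝ} (hβ : α < β) :
    ∀ᶠ x in atTop, 2 ^ (-β) * G x ≤ G (2 * x) := by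
  have h : (2:ℝ) ^ (-β) < 2 ^ (-α) := rpow_lt_rpow_of_exponent_lt (by norm_num) (by linarith)
  filter_upwards [(hG.ratio 2 two_pos).eventually (lt_mem_nhds h)] with x hx
  exact ((lt_div_iff₀ (hG.pos x)).1 hx).le

lemma two_rpow_neg_pow (β : ℝ) (k : ℕ) : ((2:ℝ) ^ (-β)) ^ k = ((2:ℝ) ^ k) ^ (-β) := by
  rw [← rpow_natCast, ← rpow_mul two_pos.le, mul_comm, rpow_mul two_pos.le, rpow_natCast]

/-- Potter bound from above. -/
lemma potter_upper (hG : RegTail G α) {β b : ℝ} (hβ0 : 0 ≤ β) (hβ : β < α) (hb : 0 < b) :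
    ∃ K > 0, ∀ y ≥ b, ∀ x ≥ y, G x ≤ K * (x / y) ^ (-β) * G y := by
  obtain ⟨x₀, hx₀⟩ := eventually_atTop.1 (hG.eventually_two_mul_le hβ)
  set x₁ := max x₀ b
  have hx₁b : b ≤ x₁ := le_max_right _ _
  have hx₁ : 0 < x₁ := hb.trans_le hx₁b
  have step : ∀ y ≥ x₁, ∀ k : ℕ, G (2 ^ k * y) ≤ (2 ^ (-β)) ^ k * G y := by
    intro y hy k
    induction k with
    | zero => simp
    | succ k ih =>
      have hk : (1:ℝ) ≤ 2 ^ k := one_le_pow₀ (by norm_num)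
      have h1 : x₀ ≤ 2 ^ k * y := by
        calc x₀ ≤ y := (le_max_left _ _).trans hy
          _ ≤ 2 ^ k * y := le_mul_of_one_le_left (hx₁.le.trans hy) hk
      calc G (2 ^ (k + 1) * y) = G (2 * (2 ^ k * y)) := by ring_nf
        _ ≤ 2 ^ (-β) * G (2 ^ k * y) := hx₀ _ h1
        _ ≤ 2 ^ (-β) * ((2 ^ (-β)) ^ k * G y) := by gcongr
        _ = _ := by ring
  have main : ∀ y ≥ x₁, ∀ x ≥ y, G x ≤ 2 ^ β * (x / y) ^ (-β) * G y := by
    intro y hy x hx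
    have hy0 : 0 < y := hx₁.trans_le hy
    have hxy : 1 ≤ x / y := (one_le_div hy0).2 hx
    obtain ⟨k, hk1, hk2⟩ := exists_nat_pow_near hxy (one_lt_two)
    have h1 : G x ≤ G (2 ^ k * y) := hG.anti ((le_div_iff₀ hy0).1 hk1)
    have h2 : ((2:ℝ) ^ (-β)) ^ k ≤ 2 ^ β * (x / y) ^ (-β) := by
      rw [two_rpow_neg_pow]
      have h3 : (x / y / 2) ≤ 2 ^ k := by rw [div_le_iff₀ two_pos, ← pow_succ]; exact hk2.le
      calc ((2:ℝ) ^ k) ^ (-β) ≤ (x / y / 2) ^ (-β) :=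
            rpow_le_rpow_of_nonpos (by positivity) h3 (by linarith)
        _ = 2 ^ β * (x / y) ^ (-β) := by
            rw [div_rpow (by positivity) two_pos.le, rpow_neg two_pos.le, div_inv_eq_mul, mul_comm]
    exact (h1.trans (step y hy k)).trans (mul_le_mul_of_nonneg_right h2 (hG.pos y).le)
  have h21 : (1:ℝ) ≤ 2 ^ β := one_le_rpow (by norm_num) hβ0
  refine ⟨2 ^ β * (x₁ / b) ^ β, by positivity, fun y hy x hx => ?_⟩
  have hy0 : 0 < y := hb.trans_le hy
  have hx0 : 0 < x := hy0.trans_le hx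
  have hxb1 : 1 ≤ (x₁ / b) ^ β := one_le_rpow ((one_le_div hb).2 hx₁b) hβ0
  rcases le_total x₁ y with h | h
  · refine (main y h x hx).trans (mul_le_mul_of_nonneg_right ?_ (hG.pos y).le)
    gcongr
    exact le_mul_of_one_le_right (by positivity) hxb1
  · have hyx : (x₁ / y) ^ β ≤ (x₁ / b) ^ β := rpow_le_rpow (by positivity) (by gcongr) hβ0
    rcases le_total x x₁ with h' | h'
    · refine (hG.anti hx).trans (le_mul_of_one_le_left (hG.pos y).le ?_)
      have : (x₁ / b) ^ (-β) ≤ (x / y) ^ (-β) :=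
        rpow_le_rpow_of_nonpos (by positivity) (by gcongr) (by linarith)
      calc (1:ℝ) = 1 * ((x₁ / b) ^ β * (x₁ / b) ^ (-β)) := by
            rw [← rpow_add (by positivity)]; simp
        _ ≤ 2 ^ β * ((x₁ / b) ^ β * (x / y) ^ (-β)) := by gcongr
        _ = _ := by ring
    · calc G x ≤ 2 ^ β * (x / x₁) ^ (-β) * G x₁ := main x₁ le_rfl x h'
        _ ≤ 2 ^ β * ((x₁ / b) ^ β * (x / y) ^ (-β)) * G y := by
            have e : (x / x₁) ^ (-β) = (x₁ / y) ^ β * (x / y) ^ (-β) := by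
              rw [show x / x₁ = (x / y) * (x₁ / y)⁻¹ by field_simp,
                mul_rpow (by positivity) (by positivity), inv_rpow (by positivity),
                rpow_neg (x := x₁ / y) (by positivity), inv_inv, mul_comm]
            rw [e]
            have := hG.anti h
            have := (hG.pos x₁).le
            gcongr
        _ = _ := by ring

/-- Potter bound from below. -/
lemma potter_lower (hG : RegTail G α) {β : ℝ} (hβ0 : 0 ≤ β) (hβ : α < β) :
    ∃ K > 0, ∀ y > 0, ∀ x ≥ y, G y ≤ K * (x / y) ^ β * G x := by
  obtain ⟨x₀, hx₀⟩ := eventually_atTop.1 (hG.eventually_le_two_mul hβ)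
  set x₁ := max x₀ 1
  have hx₁ : 0 < x₁ := one_pos.trans_le (le_max_right _ _)
  have step : ∀ y ≥ x₁, ∀ k : ℕ, (2 ^ (-β)) ^ k * G y ≤ G (2 ^ k * y) := by
    intro y hy k
    induction k with
    | zero => simp
    | succ k ih =>
      have hk : (1:ℝ) ≤ 2 ^ k := one_le_pow₀ (by norm_num)
      have h1 : x₀ ≤ 2 ^ k * y := by
        calc x₀ ≤ y := (le_max_left _ _).trans hy
          _ ≤ 2 ^ k * y := le_mul_of_one_le_left (hx₁.le.trans hy) hk
      calc (2 ^ (-β)) ^ (k + 1) * G y = 2 ^ (-β) * ((2 ^ (-β)) ^ k * G y) := by ring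
        _ ≤ 2 ^ (-β) * G (2 ^ k * y) := by gcongr
        _ ≤ G (2 * (2 ^ k * y)) := hx₀ _ h1
        _ = _ := by ring_nf
  have main : ∀ y ≥ x₁, ∀ x ≥ y, G y ≤ 2 ^ β * (x / y) ^ β * G x := by
    intro y hy x hx
    have hy0 : 0 < y := hx₁.trans_le hy
    have hxy : 1 ≤ x / y := (one_le_div hy0).2 hx
    obtain ⟨k, hk1, hk2⟩ := exists_nat_pow_near hxy (one_lt_two)
    have h1 : G (2 ^ (k + 1) * y) ≤ G x := hG.anti ((div_le_iff₀ hy0).1 hk2.le)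
    have h2 := (step y hy (k + 1)).trans h1
    rw [two_rpow_neg_pow, rpow_neg (by positivity), inv_mul_le_iff₀ (by positivity)] at h2
    refine h2.trans (mul_le_mul_of_nonneg_right ?_ (hG.pos x).le)
    rw [pow_succ', mul_rpow (by positivity) (by positivity)]
    gcongr
  have h21 : (1:ℝ) ≤ 2 ^ β := one_le_rpow (by norm_num) hβ0
  have hG1 : 1 ≤ (G x₁)⁻¹ := (one_le_inv₀ (hG.pos _)).2 (hG.le_one _)
  have hGp := hG.pos x₁
  refine ⟨2 ^ β * (G x₁)⁻¹, by positivity, fun y hy x hx => ?_⟩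
  have hx0 : 0 < x := hy.trans_le hx
  have hxy : 1 ≤ (x / y) ^ β := one_le_rpow ((one_le_div hy).2 hx) hβ0
  have hGx := hG.pos x
  rcases le_total x₁ y with h | h
  · refine (main y h x hx).trans (mul_le_mul_of_nonneg_right ?_ (hG.pos x).le)
    gcongr
    exact le_mul_of_one_le_right (by positivity) hG1
  · have hy1 : G y ≤ (G x₁)⁻¹ * G x₁ := by
      rw [inv_mul_cancel₀ (hG.pos _).ne']; exact hG.le_one y
    refine hy1.trans ?_
    rcases le_total x x₁ with h' | h'
    · calc (G x₁)⁻¹ * G x₁ ≤ (G x₁)⁻¹ * G x := by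
            have := hG.anti h'; gcongr
        _ = 1 * (G x₁)⁻¹ * 1 * G x := by ring
        _ ≤ _ := by gcongr
    · calc (G x₁)⁻¹ * G x₁ ≤ (G x₁)⁻¹ * (2 ^ β * (x / x₁) ^ β * G x) := by
            have := main x₁ le_rfl x h'; gcongr
        _ ≤ (G x₁)⁻¹ * (2 ^ β * (x / y) ^ β * G x) := by gcongr
        _ = _ := by ring

/-- A shift does not change a regularly varying tail asymptotically. -/
lemma tendsto_add_ratio (hG : RegTail G α) {h : ℝ} (hh : 0 ≤ h) :
    Tendsto (fun x => G (x + h) / G x) atTop (𝓝 1) := by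
  have hc : Tendsto (fun c : ℝ => c ^ (-α)) (𝓝[>] 1) (𝓝 1) := by
    have : ContinuousAt (fun c : ℝ => c ^ (-α)) 1 :=
      continuousAt_rpow_const _ _ (Or.inl one_ne_zero)
    simpa using this.tendsto.mono_left nhdsWithin_le_nhds
  rw [tendsto_order]
  refine ⟨fun a ha => ?_, fun a ha => ?_⟩
  · obtain ⟨c, hca, hc1⟩ := ((hc.eventually (lt_mem_nhds ha)).and self_mem_nhdsWithin).exists
    have hc1 : 1 < c := hc1
    filter_upwards [(hG.ratio c (by linarith)).eventually (lt_mem_nhds hca),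
      eventually_ge_atTop (h / (c - 1))] with x hx hx2
    refine hx.trans_le (div_le_div_of_nonneg_right (hG.anti ?_) (hG.pos x).le)
    have := (div_le_iff₀ (by linarith)).1 hx2
    linarith
  · filter_upwards with x
    refine lt_of_le_of_lt ((div_le_one (hG.pos x)).2 (hG.anti (by linarith))) ha

end RegTail

lemma intervalIntegral_indicator_Iio {g : ℝ → ℂ} {A : ℝ} (hA : 0 ≤ A) (v : ℝ) :
    ∫ s in (0:ℝ)..A, (Iio v).indicator g s = ∫ s in (0:ℝ)..max 0 (min v A), g s := by
  rw [intervalIntegral.integral_of_le hA, intervalIntegral.integral_of_le (le_max_left _ _),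
    setIntegral_indicator measurableSet_Iio]
  rcases lt_or_ge A v with h | h
  · have : Ioc 0 A ∩ Iio v = Ioc 0 A := by
      ext s; simp only [mem_inter_iff, mem_Ioc, mem_Iio]
      exact ⟨fun h => h.1, fun h' => ⟨h', h'.2.trans_lt h⟩⟩
    rw [this, min_eq_right h.le, max_eq_right hA]
  · rw [min_eq_left h]
    have : Ioc 0 A ∩ Iio v = Ioo 0 v := by
      ext s; simp only [mem_inter_iff, mem_Ioc, mem_Iio, mem_Ioo]
      exact ⟨fun h => ⟨h.1.1, h.2⟩, fun h' => ⟨⟨h'.1, h'.2.le.trans h⟩, h'.2⟩⟩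
    rw [this, ← integral_Ioc_eq_integral_Ioo]
    rcases le_total 0 v with h0 | h0
    · rw [max_eq_right h0]
    · rw [max_eq_left h0, Ioc_eq_empty (by simpa using h0)]; simp

/-- Layer-cake formula for a truncated primitive. -/
lemma integral_primitive_clamp (μ : Measure ℝ) [IsFiniteMeasure μ] {v : ℝ → ℝ}
    (hv : Measurable v) {g : ℝ → ℂ} (hg : Continuous g) {A : ℝ} (hA : 0 ≤ A) :
    ∫ y, (∫ s in (0:ℝ)..max 0 (min (v y) A), g s) ∂μ
      = ∫ s in (0:ℝ)..A, g s * (μ.real {y | s < v y} : ℂ) := by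
  simp_rw [← intervalIntegral_indicator_Iio hA, intervalIntegral.integral_of_le hA]
  have hmeas : MeasurableSet {z : ℝ × ℝ | z.2 < v z.1} :=
    measurableSet_lt measurable_snd (hv.comp measurable_fst)
  have hint : Integrable (Function.uncurry fun (y s : ℝ) => (Iio (v y)).indicator g s)
      (μ.prod (volume.restrict (Ioc 0 A))) := by
    have e : (Function.uncurry fun (y s : ℝ) => (Iio (v y)).indicator g s)
        = {z : ℝ × ℝ | z.2 < v z.1}.indicator (fun z => g z.2) := by
      ext ⟨y, s⟩; simp [Function.uncurry, indicator]
    rw [e]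
    refine Integrable.indicator ?_ hmeas
    have h1 : Integrable g (volume.restrict (Ioc 0 A)) :=
      (hg.integrableOn_Icc).mono_set Ioc_subset_Icc_self
    exact h1.comp_snd μ
  rw [integral_integral_swap hint]
  refine setIntegral_congr_fun measurableSet_Ioc fun s _ => ?_
  have hs : MeasurableSet {y | s < v y} := measurableSet_lt measurable_const hv
  have : (fun y => (Iio (v y)).indicator g s) = {y | s < v y}.indicator (fun _ => g s) := by
    ext y; simp [indicator]
  simp only [this]
  rw [integral_indicator hs, setIntegral_const]
  simp [mul_comm]

lemma tail_abs_le {F : Measure ℝ} [IsProbabilityMeasure F] {α : ℝ}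
    (hG : RegTail (rtail F) α) (hTR : TailRatio F) :
    ∃ K > 0, ∀ u, F.real {y | u < |y|} ≤ K * rtail F u := by
  obtain ⟨p, hp⟩ := hTR
  obtain ⟨u₀, hu₀⟩ := eventually_atTop.1 (hp.eventually (gt_mem_nhds (lt_add_one p)))
  have hpos := hG.pos u₀
  refine ⟨1 + |p + 1| + (rtail F u₀)⁻¹, by positivity, fun u => ?_⟩
  have hGu := hG.pos u
  rcases le_total u₀ u with h | h
  · have h1 : F.real (Iic (-u)) ≤ |p + 1| * rtail F u := by
      have := (div_lt_iff₀ hGu).1 (hu₀ u h)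
      exact this.le.trans (mul_le_mul_of_nonneg_right (le_abs_self _) hGu.le)
    have h2 : {y : ℝ | u < |y|} ⊆ Ioi u ∪ Iic (-u) := by
      intro y hy
      have hy : u < |y| := hy
      rcases lt_abs.1 hy with h | h
      · exact Or.inl h
      · right; simp only [mem_Iic]; linarith
    calc F.real {y | u < |y|} ≤ F.real (Ioi u ∪ Iic (-u)) := measureReal_mono h2
      _ ≤ F.real (Ioi u) + F.real (Iic (-u)) := measureReal_union_le _ _
      _ ≤ rtail F u + |p + 1| * rtail F u := add_le_add le_rfl h1
      _ ≤ _ := by nlinarith [inv_pos.2 hpos, mul_pos (inv_pos.2 hpos) hGu]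
  · calc F.real {y | u < |y|} ≤ 1 := measureReal_le_one
      _ = (rtail F u₀)⁻¹ * rtail F u₀ := (inv_mul_cancel₀ hpos.ne').symm
      _ ≤ (rtail F u₀)⁻¹ * rtail F u := by have := hG.anti h; gcongr
      _ ≤ _ := by nlinarith [abs_nonneg (p+1), mul_nonneg (abs_nonneg (p+1)) hGu.le]

lemma tendsto_left_tail_ratio {F : Measure ℝ} [IsProbabilityMeasure F] {α : ℝ}
    (hG : RegTail (rtail F) α) (hTR : TailRatio F) :
    ∃ p : ℝ, ∀ s > 0,
      Tendsto (fun x => F.real (Iio (-(s * x))) / rtail F x) atTop (𝓝 (p * s ^ (-α))) := by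
  obtain ⟨p, hp⟩ := hTR
  refine ⟨p, ?_⟩
  have hp0 : 0 ≤ p := ge_of_tendsto' hp fun x => by
    have := hG.pos x; positivity
  have hc : Tendsto (fun c : ℝ => p * c ^ (-α)) (𝓝[>] 1) (𝓝 p) := by
    have : ContinuousAt (fun c : ℝ => c ^ (-α)) 1 :=
      continuousAt_rpow_const _ _ (Or.inl one_ne_zero)
    simpa using (this.tendsto.mono_left nhdsWithin_le_nhds).const_mul p
  have base : Tendsto (fun x => F.real (Iio (-x)) / rtail F x) atTop (𝓝 p) := by
    rw [tendsto_order]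
    refine ⟨fun a ha => ?_, fun a ha => ?_⟩
    · obtain ⟨c, hca, hc1⟩ := ((hc.eventually (lt_mem_nhds ha)).and self_mem_nhdsWithin).exists
      have hc1 : 1 < c := hc1
      have h1 : Tendsto (fun x => (F (Iic (-(c * x)))).toReal / rtail F (c * x)
          * (rtail F (c * x) / rtail F x)) atTop (𝓝 (p * c ^ (-α))) :=
        (hp.comp (tendsto_id.const_mul_atTop (by linarith))).mul (hG.ratio c (by linarith))
      filter_upwards [h1.eventually (lt_mem_nhds hca), eventually_gt_atTop 0] with x hx hx0
      rw [div_mul_div_cancel₀ (hG.pos _).ne'] at hx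
      refine hx.trans_le (div_le_div_of_nonneg_right ?_ (hG.pos x).le)
      refine measureReal_mono fun y hy => ?_
      simp only [mem_Iic, mem_Iio] at *
      nlinarith
    · filter_upwards [hp.eventually (gt_mem_nhds ha)] with x hx
      refine lt_of_le_of_lt (div_le_div_of_nonneg_right ?_ (hG.pos x).le) hx
      exact measureReal_mono Iio_subset_Iic_self
  intro s hs
  have h1 := (base.comp (tendsto_id.const_mul_atTop hs)).mul (hG.ratio s hs)
  refine h1.congr fun x => ?_
  simp only [Function.comp, id]
  rw [div_mul_div_cancel₀ (hG.pos _).ne']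

/-- Convergence of truncated integrals against scaled tails. -/
lemma tendsto_integral_scaled_tail {G H : ℝ → ℝ} {α q K A : ℝ} {g : ℝ → ℂ}
    (hG : RegTail G α) (hα0 : 0 < α) (hα1 : α < 1) (hH : Antitone H) (hHG : ∀ u, |H u| ≤ K * G u)
    (hlim : ∀ s > 0, Tendsto (fun x => H (s * x) / G x) atTop (𝓝 (q * s ^ (-α))))
    (hg : Continuous g) (hg1 : ∀ s, ‖g s‖ ≤ 1) (hA : 0 ≤ A) :
    ∃ d : ℂ, Tendsto (fun x => (∫ s in (0:ℝ)..A, g s * (H (s * x) : ℂ)) / (G x : ℂ))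
      atTop (𝓝 d) := by
  have hK : 0 ≤ K := by
    have h1 := (abs_nonneg _).trans (hHG 0)
    by_contra! h
    nlinarith [hG.pos 0]
  obtain ⟨β, hβ, hβ1⟩ := exists_between hα1
  obtain ⟨M, hM0, hM⟩ := hG.potter_lower (hα0.trans hβ).le hβ
  refine ⟨∫ s in (0:ℝ)..A, g s * ((q * s ^ (-α) : ℝ) : ℂ), ?_⟩
  have e : (fun x => (∫ s in (0:ℝ)..A, g s * (H (s * x) : ℂ)) / (G x : ℂ))
      = fun x => ∫ s in (0:ℝ)..A, g s * ((H (s * x) / G x : ℝ) : ℂ) := by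
    ext x
    rw [← intervalIntegral.integral_div]
    congr 1; ext s; push_cast; ring
  rw [e]
  refine intervalIntegral.tendsto_integral_filter_of_dominated_convergence
    (fun s => K * (M * s ^ (-β) + 1)) ?_ ?_ ?_ ?_
  · filter_upwards [eventually_gt_atTop 0] with x hx
    have hm : Measurable fun s => H (s * x) :=
      Antitone.measurable fun a b hab => hH (by gcongr)
    exact (hg.measurable.mul (Complex.measurable_ofReal.comp
      (hm.div_const _))).aestronglyMeasurable
  · filter_upwards [eventually_gt_atTop 0] with x hx
    refine ae_of_all _ fun s hs => ?_
    rw [uIoc_of_le hA] at hs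
    have hGx := hG.pos x
    have hs0 := hs.1
    have h1 : ‖((H (s * x) / G x : ℝ) : ℂ)‖ ≤ K * (G (s * x) / G x) := by
      rw [Complex.norm_real, Real.norm_eq_abs, abs_div, abs_of_pos hGx, ← mul_div_assoc]
      exact div_le_div_of_nonneg_right (hHG _) hGx.le
    have h2 : G (s * x) / G x ≤ M * s ^ (-β) + 1 := by
      rcases le_total s 1 with h | h
      · have h3 := hM (s * x) (mul_pos hs0 hx) x (by nlinarith)
        have h4 : x / (s * x) = s⁻¹ := by field_simp
        rw [h4, inv_rpow hs0.le, ← rpow_neg hs0.le] at h3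
        have := (div_le_iff₀ hGx).2 h3
        linarith
      · have : G (s * x) / G x ≤ 1 := (div_le_one hGx).2 (hG.anti (by nlinarith))
        have : 0 ≤ M * s ^ (-β) := by positivity
        linarith
    calc ‖g s * ((H (s * x) / G x : ℝ) : ℂ)‖ ≤ 1 * (K * (G (s * x) / G x)) := by
          rw [norm_mul]; exact mul_le_mul (hg1 s) h1 (norm_nonneg _) zero_le_one
      _ ≤ _ := by rw [one_mul]; gcongr
  · exact (((intervalIntegral.intervalIntegrable_rpow' (by linarith)).const_mul M).add
      intervalIntegrable_const).const_mul K
  · refine ae_of_all _ fun s hs => ?_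
    rw [uIoc_of_le hA] at hs
    exact ((Complex.continuous_ofReal.tendsto _).comp (hlim s hs.1)).const_mul (g s)

lemma one_sub_charFun_eq (F : Measure ℝ) [IsProbabilityMeasure F] (t : ℝ) :
    1 - charFun F t = ∫ y, (1 - Complex.exp (t * y * Complex.I)) ∂F := by
  rw [charFun_apply_real, integral_sub (integrable_const _)]
  · simp
  · refine (integrable_const (1:ℝ)).mono' (by fun_prop) (ae_of_all _ fun y => ?_)
    rw [← Complex.ofReal_mul, Complex.norm_exp_ofReal_mul_I]

lemma norm_exp_sub_exp_le_two (a b : ℝ) :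
    ‖Complex.exp (a * Complex.I) - Complex.exp (b * Complex.I)‖ ≤ 2 := by
  refine (norm_sub_le _ _).trans ?_
  rw [Complex.norm_exp_ofReal_mul_I, Complex.norm_exp_ofReal_mul_I]; norm_num

lemma integral_exp_mul_I (w : ℝ) :
    ∫ s in (0:ℝ)..w, -Complex.I * Complex.exp (s * Complex.I) = 1 - Complex.exp (w * Complex.I) := by
  have : ∀ s ∈ uIcc 0 w, HasDerivAt (fun s : ℝ => -Complex.exp (s * Complex.I))
      (-Complex.I * Complex.exp (s * Complex.I)) s := by
    intro s _
    have h1 : HasDerivAt (fun s : ℝ => (s : ℂ) * Complex.I) (1 * Complex.I) s :=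
      (Complex.ofRealCLM.hasDerivAt (x := s)).mul_const Complex.I
    exact h1.cexp.fun_neg.congr_deriv (by ring)
  rw [intervalIntegral.integral_eq_sub_of_hasDerivAt this
    (Continuous.intervalIntegrable (by fun_prop) _ _)]
  simp; ring

lemma integral_exp_neg_mul_I (w : ℝ) :
    ∫ s in (0:ℝ)..w, Complex.I * Complex.exp (-s * Complex.I)
      = 1 - Complex.exp (-w * Complex.I) := by
  have : ∀ s ∈ uIcc 0 w, HasDerivAt (fun s : ℝ => -Complex.exp (-s * Complex.I))
      (Complex.I * Complex.exp (-s * Complex.I)) s := by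
    intro s _
    have h1 : HasDerivAt (fun s : ℝ => -(s : ℂ) * Complex.I) (-1 * Complex.I) s :=
      (Complex.ofRealCLM.hasDerivAt (x := s)).neg.mul_const Complex.I
    exact h1.cexp.fun_neg.congr_deriv (by ring)
  rw [intervalIntegral.integral_eq_sub_of_hasDerivAt this
    (Continuous.intervalIntegrable (by fun_prop) _ _)]
  simp; ring

/-- The contribution of the scaled jumps truncated at level `A`. -/
def truncJump (A v : ℝ) : ℂ :=
  (∫ s in (0:ℝ)..max 0 (min v A), -Complex.I * Complex.exp (s * Complex.I)) +
    ∫ s in (0:ℝ)..max 0 (min (-v) A), Complex.I * Complex.exp (-s * Complex.I)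

lemma norm_one_sub_exp_sub_truncJump {A : ℝ} (hA : 0 < A) (v : ℝ) :
    ‖1 - Complex.exp (v * Complex.I) - truncJump A v‖ ≤ {v | A < |v|}.indicator (fun _ => 2) v := by
  rw [truncJump, integral_exp_mul_I, integral_exp_neg_mul_I]
  by_cases h : A < |v|
  · rw [indicator_of_mem (by exact h)]
    rcases lt_abs.1 h with h | h
    · rw [min_eq_right h.le, max_eq_right hA.le, max_eq_left (min_le_of_left_le (by linarith))]
      have := norm_exp_sub_exp_le_two A v
      convert this using 2
      simp
    · rw [min_eq_right h.le, max_eq_right hA.le, max_eq_left (min_le_of_left_le (by linarith))]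
      have := norm_exp_sub_exp_le_two (-A) v
      convert this using 2
      simp
  · rw [indicator_of_notMem (by exact h)]
    have h' := abs_le.1 (not_lt.1 h)
    rw [min_eq_left h'.2, min_eq_left (by linarith)]
    rcases le_total 0 v with h0 | h0
    · rw [max_eq_right h0, max_eq_left (by linarith)]; simp
    · rw [max_eq_left h0, max_eq_right (by linarith)]; simp

lemma norm_primitive_clamp_le {g : ℝ → ℂ} (hg1 : ∀ s, ‖g s‖ ≤ 1) {A : ℝ} (hA : 0 ≤ A) (v : ℝ) :
    ‖∫ s in (0:ℝ)..max 0 (min v A), g s‖ ≤ A := by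
  have := intervalIntegral.norm_integral_le_of_norm_le_const (a := 0) (b := max 0 (min v A))
    (f := g) (C := 1) fun s _ => hg1 s
  refine this.trans ?_
  rw [sub_zero, abs_of_nonneg (le_max_left _ _), one_mul]
  exact max_le hA (min_le_right _ _)

lemma integrable_primitive_clamp (μ : Measure ℝ) [IsFiniteMeasure μ] {g : ℝ → ℂ}
    (hg : Continuous g) (hg1 : ∀ s, ‖g s‖ ≤ 1) {A : ℝ} (hA : 0 ≤ A) {v : ℝ → ℝ}
    (hv : Continuous v) :
    Integrable (fun y => ∫ s in (0:ℝ)..max 0 (min (v y) A), g s) μ := by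
  have hc : Continuous fun w => ∫ s in (0:ℝ)..w, g s :=
    intervalIntegral.continuous_primitive (fun a b => hg.intervalIntegrable a b) 0
  have hc' : Continuous fun y => ∫ s in (0:ℝ)..max 0 (min (v y) A), g s :=
    hc.comp (continuous_const.max (hv.min continuous_const))
  exact (integrable_const A).mono' hc'.aestronglyMeasurable
    (ae_of_all _ fun y => norm_primitive_clamp_le hg1 hA _)

lemma continuous_jump_density : Continuous fun s : ℝ => -Complex.I * Complex.exp (s * Complex.I) := by
  fun_prop

lemma continuous_jump_density_neg :
    Continuous fun s : ℝ => Complex.I * Complex.exp (-s * Complex.I) := by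
  fun_prop

lemma norm_jump_density (s : ℝ) : ‖-Complex.I * Complex.exp (s * Complex.I)‖ ≤ 1 := by
  rw [norm_mul, Complex.norm_exp_ofReal_mul_I]; simp

lemma norm_jump_density_neg (s : ℝ) : ‖Complex.I * Complex.exp (-s * Complex.I)‖ ≤ 1 := by
  rw [norm_mul, ← Complex.ofReal_neg, Complex.norm_exp_ofReal_mul_I]; simp

lemma integrable_truncJump (F : Measure ℝ) [IsProbabilityMeasure F] {A : ℝ} (hA : 0 < A) (x : ℝ) :
    Integrable (fun y => truncJump A (y / x)) F := by
  unfold truncJump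
  exact (integrable_primitive_clamp F continuous_jump_density norm_jump_density hA.le
    (v := fun y => y / x) (by fun_prop)).add
    (integrable_primitive_clamp F continuous_jump_density_neg norm_jump_density_neg hA.le
    (v := fun y => -(y / x)) (by fun_prop))

lemma tendsto_truncJump {F : Measure ℝ} [IsProbabilityMeasure F] {α : ℝ}
    (hα0 : 0 < α) (hα1 : α < 1) (hG : RegTail (rtail F) α) (hTR : TailRatio F)
    {A : ℝ} (hA : 0 < A) :
    ∃ d : ℂ, Tendsto (fun x => (∫ y, truncJump A (y / x) ∂F) / (rtail F x : ℂ))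
      atTop (𝓝 d) := by
  obtain ⟨p, hp⟩ := tendsto_left_tail_ratio hG hTR
  obtain ⟨K, hK, hKb⟩ := tail_abs_le hG hTR
  obtain ⟨d₁, hd₁⟩ := tendsto_integral_scaled_tail (H := rtail F) (q := 1) (K := 1) (A := A)
    hG hα0 hα1 hG.anti (fun u => by rw [abs_of_pos (hG.pos u), one_mul])
    (fun s hs => by simpa using hG.ratio s hs) continuous_jump_density norm_jump_density hA.le
  have hanti : Antitone fun u => F.real (Iio (-u)) := fun a b hab =>
    measureReal_mono (Iio_subset_Iio (by linarith))
  have hbound : ∀ u, |F.real (Iio (-u))| ≤ K * rtail F u := fun u => by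
    rw [abs_of_nonneg measureReal_nonneg]
    refine (measureReal_mono fun y hy => ?_).trans (hKb u)
    have hy : y < -u := hy
    show u < |y|
    exact lt_abs.2 (Or.inr (by linarith))
  obtain ⟨d₂, hd₂⟩ := tendsto_integral_scaled_tail (H := fun u => F.real (Iio (-u))) (A := A)
    hG hα0 hα1 hanti hbound hp continuous_jump_density_neg norm_jump_density_neg hA.le
  refine ⟨d₁ + d₂, (hd₁.add hd₂).congr' ?_⟩
  filter_upwards [eventually_gt_atTop 0] with x hx
  rw [← add_div]
  congr 1
  unfold truncJump
  rw [integral_add (integrable_primitive_clamp F continuous_jump_density norm_jump_density hA.le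
    (v := fun y => y / x) (by fun_prop)) (integrable_primitive_clamp F continuous_jump_density_neg
    norm_jump_density_neg hA.le (v := fun y => -(y / x)) (by fun_prop)),
    integral_primitive_clamp F (v := fun y => y / x) (by fun_prop) continuous_jump_density hA.le,
    integral_primitive_clamp F (v := fun y => -(y / x)) (by fun_prop)
      continuous_jump_density_neg hA.le]
  have e1 : ∀ s : ℝ, {y : ℝ | s < y / x} = Ioi (s * x) := fun s => by
    ext y; simp [lt_div_iff₀ hx]
  have e2 : ∀ s : ℝ, {y : ℝ | s < -(y / x)} = Iio (-(s * x)) := fun s => by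
    ext y
    simp only [mem_ofPred_eq, mem_Iio]
    rw [← neg_div, lt_div_iff₀ hx, lt_neg]
  simp_rw [e1, e2]
  rfl

lemma norm_one_sub_charFun_sub_truncJump {F : Measure ℝ} [IsProbabilityMeasure F] {A x : ℝ}
    (hA : 0 < A) (hx : 0 < x) :
    ‖1 - charFun F (1 / x) - ∫ y, truncJump A (y / x) ∂F‖ ≤ 2 * F.real {y | A * x < |y|} := by
  have hi : Integrable (fun y : ℝ => 1 - Complex.exp (((1 / x : ℝ) : ℂ) * y * Complex.I)) F := by
    refine (integrable_const (2:ℝ)).mono' (by fun_prop) (ae_of_all _ fun y => ?_)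
    have := norm_exp_sub_exp_le_two 0 (1 / x * y)
    simpa using this
  rw [one_sub_charFun_eq, ← integral_sub hi (integrable_truncJump F hA x)]
  have hs : MeasurableSet {y : ℝ | A * x < |y|} := measurableSet_lt (by fun_prop) (by fun_prop)
  have : ∀ᵐ (y : ℝ) ∂F, ‖1 - Complex.exp (((1 / x : ℝ) : ℂ) * y * Complex.I) - truncJump A (y / x)‖
      ≤ {y : ℝ | A * x < |y|}.indicator (fun _ => (2:ℝ)) y := ae_of_all _ fun y => by
    have h := norm_one_sub_exp_sub_truncJump hA (y / x)
    have e : (((1 / x : ℝ) : ℂ) * y * Complex.I) = ((y / x : ℝ) : ℂ) * Complex.I := by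
      push_cast; ring
    rw [e]
    refine h.trans_eq ?_
    simp only [indicator, mem_ofPred_eq, abs_div, abs_of_pos hx, lt_div_iff₀ hx]
  refine (norm_integral_le_of_norm_le ((integrable_const _).indicator hs) this).trans_eq ?_
  rw [integral_indicator hs, setIntegral_const]
  simp [mul_comm]

/-- `1 - φ(1/x)` is asymptotic to a constant multiple of the right tail at `x`. -/
lemma exists_tendsto_one_sub_charFun {F : Measure ℝ} [IsProbabilityMeasure F] {α : ℝ}
    (hα0 : 0 < α) (hα1 : α < 1) (hG : RegTail (rtail F) α) (hTR : TailRatio F) :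
    ∃ C : ℂ, Tendsto (fun x : ℝ => (1 - charFun F (1 / x)) / (rtail F x : ℂ)) atTop (𝓝 C) := by
  obtain ⟨K, hK, hKb⟩ := tail_abs_le hG hTR
  refine cauchySeq_tendsto_of_complete (Metric.cauchySeq_iff.2 fun ε hε => ?_)
  have hz : Tendsto (fun A : ℝ => 2 * (K * A ^ (-α))) atTop (𝓝 0) := by
    simpa using ((tendsto_rpow_neg_atTop hα0).const_mul K).const_mul 2
  obtain ⟨A, hAε, hA⟩ := ((hz.eventually (gt_mem_nhds (show 0 < ε / 4 by linarith))).and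
    (eventually_gt_atTop 0)).exists
  obtain ⟨d, hd⟩ := tendsto_truncJump hα0 hα1 hG hTR hA
  have h1 : ∀ᶠ x in atTop, 2 * (K * (rtail F (A * x) / rtail F x)) < ε / 4 :=
    (((hG.ratio A hA).const_mul K).const_mul 2).eventually (gt_mem_nhds hAε)
  have h2 := Metric.tendsto_nhds.1 hd (ε / 4) (by linarith)
  obtain ⟨N, hN⟩ := eventually_atTop.1 ((h1.and h2).and (eventually_gt_atTop 0))
  have key : ∀ x ≥ N, dist ((1 - charFun F (1 / x)) / (rtail F x : ℂ)) d < ε / 2 := by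
    intro x hx
    obtain ⟨⟨h1, h2⟩, hx0⟩ := hN x hx
    have hGx := hG.pos x
    have h3 : dist ((1 - charFun F (1 / x)) / (rtail F x : ℂ))
        ((∫ y, truncJump A (y / x) ∂F) / (rtail F x : ℂ)) < ε / 4 := by
      rw [dist_eq_norm, ← sub_div, norm_div, Complex.norm_real, Real.norm_eq_abs, abs_of_pos hGx]
      refine lt_of_le_of_lt ?_ h1
      rw [div_le_iff₀ hGx]
      refine (norm_one_sub_charFun_sub_truncJump hA hx0).trans ?_
      calc 2 * F.real {y | A * x < |y|} ≤ 2 * (K * rtail F (A * x)) := by gcongr; exact hKb _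
        _ = _ := by field_simp
    linarith [dist_triangle ((1 - charFun F (1 / x)) / (rtail F x : ℂ))
      ((∫ y, truncJump A (y / x) ∂F) / (rtail F x : ℂ)) d]
  refine ⟨N, fun m hm n hn => ?_⟩
  have := key m hm
  have := key n hn
  linarith [dist_triangle_right ((1 - charFun F (1 / m)) / (rtail F m : ℂ))
    ((1 - charFun F (1 / n)) / (rtail F n : ℂ)) d]

lemma re_pos_of_tendsto_one_sub_charFun {F : Measure ℝ} [IsProbabilityMeasure F] {α : ℝ}
    (hα0 : 0 < α) (hG : RegTail (rtail F) α) {C : ℂ}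
    (hC : Tendsto (fun x : ℝ => (1 - charFun F (1 / x)) / (rtail F x : ℂ)) atTop (𝓝 C)) :
    0 < C.re := by
  have hre := (Complex.continuous_re.tendsto C).comp hC
  have hlow : Tendsto (fun x => (1 - cos 1) * (1 - rtail F (2 * x) / rtail F x)) atTop
      (𝓝 ((1 - cos 1) * (1 - 2 ^ (-α)))) :=
    (tendsto_const_nhds.sub (hG.ratio 2 two_pos)).const_mul _
  have hcos : 0 < 1 - cos 1 := by linarith [Real.cos_one_le]
  have h2 : (0:ℝ) < 1 - 2 ^ (-α) := by
    have := rpow_lt_one_of_one_lt_of_neg (x := 2) (by norm_num) (neg_lt_zero.2 hα0)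
    linarith
  refine (mul_pos hcos h2).trans_le (le_of_tendsto_of_tendsto hlow hre ?_)
  filter_upwards [eventually_gt_atTop 0] with x hx
  have hGx := hG.pos x
  simp only [Function.comp, Complex.div_ofReal_re]
  have e0 : (1 - rtail F (2 * x) / rtail F x) * rtail F x = rtail F x - rtail F (2 * x) := by
    field_simp
  rw [le_div_iff₀ hGx, mul_assoc, e0, one_sub_charFun_eq]
  have hi : Integrable (fun y : ℝ => 1 - Complex.exp (((1 / x : ℝ) : ℂ) * y * Complex.I)) F := by
    refine (integrable_const (2:ℝ)).mono' (by fun_prop) (ae_of_all _ fun y => ?_)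
    have := norm_exp_sub_exp_le_two 0 (1 / x * y)
    simpa using this
  have e : (∫ y : ℝ, (1 - Complex.exp (((1 / x : ℝ) : ℂ) * y * Complex.I)) ∂F).re
      = ∫ y : ℝ, (1 - cos (y / x)) ∂F := by
    rw [← RCLike.re_eq_complex_re, ← integral_re hi]
    congr 1; ext y
    have e : (((1 / x : ℝ) : ℂ) * y * Complex.I) = ((y / x : ℝ) : ℂ) * Complex.I := by
      push_cast; ring
    rw [e]
    simp only [RCLike.re_eq_complex_re, Complex.sub_re, Complex.one_re,
      Complex.exp_ofReal_mul_I_re]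
  rw [e]
  have hs : rtail F x - rtail F (2 * x) = F.real (Ioc x (2 * x)) := by
    have h1 : Ioi x \ Ioi (2 * x) = Ioc x (2 * x) := by
      ext y; simp
    rw [← h1, measureReal_sdiff (Ioi_subset_Ioi (by linarith)) measurableSet_Ioi]
    rfl
  rw [hs]
  have hmono : ∫ y, (Ioc x (2 * x)).indicator (fun _ => 1 - cos 1) y ∂F
      ≤ ∫ y : ℝ, (1 - cos (y / x)) ∂F := by
    refine integral_mono ((integrable_const _).indicator measurableSet_Ioc) ?_ fun y => ?_
    · refine (integrable_const (2:ℝ)).mono' (by fun_prop) (ae_of_all _ fun y => ?_)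
      rw [Real.norm_eq_abs, abs_le]
      constructor <;> linarith [Real.cos_le_one (y / x), Real.neg_one_le_cos (y / x)]
    · by_cases hy : y ∈ Ioc x (2 * x)
      · rw [indicator_of_mem hy]
        have h1 : 1 ≤ y / x := (one_le_div hx).2 hy.1.le
        have h2 : y / x ≤ 2 := (div_le_iff₀ hx).2 hy.2
        have := Real.cos_le_cos_of_nonneg_of_le_pi zero_le_one
          (by linarith [Real.pi_gt_three]) h1
        linarith
      · rw [indicator_of_notMem hy]; simp [Real.cos_le_one]
  refine le_trans (le_of_eq ?_) hmono
  rw [integral_indicator measurableSet_Ioc, setIntegral_const]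
  simp [mul_comm]

/-- Modulus of continuity of the characteristic function at scale `π / x`. -/
lemma norm_charFun_sub_le {F : Measure ℝ} [IsProbabilityMeasure F] {α : ℝ}
    (hα0 : 0 < α) (hα1 : α < 1) (hG : RegTail (rtail F) α) (hTR : TailRatio F) :
    ∃ K > 0, ∀ x > 0, ∀ θ : ℝ, ‖charFun F θ - charFun F (θ + π / x)‖ ≤ K * rtail F x := by
  obtain ⟨K, hK, hKb⟩ := tail_abs_le hG hTR
  obtain ⟨β, hβ, hβ1⟩ := exists_between hα1
  obtain ⟨M, hM0, hM⟩ := hG.potter_lower (hα0.trans hβ).le hβ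
  have hJ : 0 ≤ ∫ s in (0:ℝ)..1, s ^ (-β) :=
    intervalIntegral.integral_nonneg zero_le_one fun s hs => rpow_nonneg hs.1 _
  refine ⟨π * (K * (M * ∫ s in (0:ℝ)..1, s ^ (-β)) + 1), by positivity, fun x hx θ => ?_⟩
  have hGx := hG.pos x
  have hexp : ∀ t : ℝ, Integrable (fun y : ℝ => Complex.exp (t * y * Complex.I)) F := fun t => by
    refine (integrable_const (1:ℝ)).mono' (by fun_prop) (ae_of_all _ fun y => ?_)
    rw [← Complex.ofReal_mul, Complex.norm_exp_ofReal_mul_I]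
  have hpt : ∀ y : ℝ, ‖Complex.exp (θ * y * Complex.I)
      - Complex.exp (((θ + π / x : ℝ) : ℂ) * y * Complex.I)‖ ≤ π * max 0 (min (|y| / x) 1) := by
    intro y
    have e1 : Complex.exp (θ * y * Complex.I) - Complex.exp (((θ + π / x : ℝ) : ℂ) * y * Complex.I)
        = Complex.exp ((θ * y : ℝ) * Complex.I)
          * (1 - Complex.exp (Complex.I * ((π / x * y : ℝ) : ℂ))) := by
      rw [mul_sub, ← Complex.exp_add]; push_cast; ring_nf
    rw [e1, norm_mul, Complex.norm_exp_ofReal_mul_I, one_mul, norm_sub_rev,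
      max_eq_right (by positivity)]
    rcases le_total (|y| / x) 1 with h | h
    · rw [min_eq_left h]
      refine (Real.norm_exp_I_mul_ofReal_sub_one_le).trans_eq ?_
      rw [Real.norm_eq_abs, abs_mul, abs_of_pos (by positivity)]; ring
    · rw [min_eq_right h]
      have := norm_exp_sub_exp_le_two (π / x * y) 0
      rw [mul_comm] at this
      simp only [Complex.ofReal_zero, zero_mul, Complex.exp_zero] at this
      linarith [Real.pi_gt_three]
  have hcl : ∫ y, max 0 (min (|y| / x) 1) ∂F ≤ (K * (M * ∫ s in (0:ℝ)..1, s ^ (-β))) * rtail F x := by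
    have h1 := integral_primitive_clamp F (v := fun y => |y| / x) (by fun_prop)
      (g := fun _ => 1) continuous_const zero_le_one
    simp only [intervalIntegral.integral_const, sub_zero, one_mul] at h1
    have h2 : ((∫ y, max 0 (min (|y| / x) 1) ∂F : ℝ) : ℂ)
        = ((∫ s in (0:ℝ)..1, F.real {y | s < |y| / x} : ℝ) : ℂ) := by
      rw [← integral_complex_ofReal, ← intervalIntegral.integral_ofReal, ← h1]
      simp
    rw [Complex.ofReal_inj.1 h2, ← intervalIntegral.integral_const_mul,
      ← intervalIntegral.integral_const_mul, ← intervalIntegral.integral_mul_const]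
    have hanti : Antitone fun s : ℝ => F.real {y | s < |y| / x} := fun a b hab =>
      measureReal_mono fun y hy => lt_of_le_of_lt hab hy
    refine intervalIntegral.integral_mono_on_of_le_Ioo zero_le_one
      hanti.intervalIntegrable ?_ fun s hs => ?_
    · exact (((intervalIntegral.intervalIntegrable_rpow' (by linarith)).const_mul M).const_mul
        K).mul_const _
    · have e : {y : ℝ | s < |y| / x} = {y | s * x < |y|} := by
        ext y; simp [lt_div_iff₀ hx]
      rw [e]
      have h3 := hM (s * x) (mul_pos hs.1 hx) x (by nlinarith [hs.2])
      have h4 : x / (s * x) = s⁻¹ := by have := hs.1; field_simp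
      rw [h4, inv_rpow hs.1.le, ← rpow_neg hs.1.le] at h3
      calc _ ≤ K * rtail F (s * x) := hKb _
        _ ≤ K * (M * s ^ (-β) * rtail F x) := by gcongr
        _ = _ := by ring
  have hint : Integrable (fun y : ℝ => max 0 (min (|y| / x) 1)) F := by
    refine (integrable_const (1:ℝ)).mono' (by fun_prop) (ae_of_all _ fun y => ?_)
    rw [Real.norm_eq_abs, abs_of_nonneg (le_max_left _ _)]
    exact max_le zero_le_one (min_le_right _ _)
  rw [charFun_apply_real, charFun_apply_real, ← integral_sub (hexp _) (hexp _)]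
  refine (norm_integral_le_of_norm_le (hint.const_mul π) (ae_of_all _ hpt)).trans ?_
  rw [integral_const_mul]
  calc _ ≤ π * ((K * (M * ∫ s in (0:ℝ)..1, s ^ (-β))) * rtail F x) := by gcongr
    _ ≤ _ := by nlinarith [mul_pos Real.pi_pos hGx]

/-- The asymptotic data of the characteristic function of `F` at the origin. -/
structure CharAsymp (F : Measure ℝ) (α : ℝ) (C : ℂ) : Prop where
  half_lt : 1 / 2 < α
  lt_one : α < 1
  tail : RegTail (rtail F) α
  re_pos : 0 < C.re
  tendsto : Tendsto (fun x : ℝ => (1 - charFun F (1 / x)) / (rtail F x : ℂ)) atTop (𝓝 C)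
  modulus : ∃ K > 0, ∀ x > 0, ∀ θ : ℝ, ‖charFun F θ - charFun F (θ + π / x)‖ ≤ K * rtail F x

/-- The exponent of the limiting stable law. -/
def stableExp (α : ℝ) (C : ℂ) (t : ℝ) : ℂ :=
  ((|t| ^ α : ℝ) : ℂ) * if 0 ≤ t then C else (starRingEnd ℂ) C

lemma stableExp_re (α : ℝ) (C : ℂ) (t : ℝ) : (stableExp α C t).re = |t| ^ α * C.re := by
  unfold stableExp
  rw [Complex.re_ofReal_mul]
  split_ifs <;> simp

lemma stableExp_ne_zero {α : ℝ} {C : ℂ} (hC : 0 < C.re) {t : ℝ} (ht : t ≠ 0) :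
    stableExp α C t ≠ 0 := by
  intro h
  have h1 := stableExp_re α C t
  rw [h, Complex.zero_re] at h1
  have : 0 < |t| ^ α * C.re := mul_pos (rpow_pos_of_pos (abs_pos.2 ht) _) hC
  linarith

lemma stableExp_mul {α : ℝ} (C : ℂ) {s : ℝ} (hs : 0 < s) (t : ℝ) :
    stableExp α C (s * t) = ((s ^ α : ℝ) : ℂ) * stableExp α C t := by
  unfold stableExp
  have h : 0 ≤ s * t ↔ 0 ≤ t := mul_nonneg_iff_of_pos_left hs
  simp only [h]
  rw [abs_mul, abs_of_pos hs, mul_rpow hs.le (abs_nonneg _)]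
  push_cast
  ring

lemma continuous_stableExp {α : ℝ} (hα : 0 < α) (C : ℂ) : Continuous (stableExp α C) := by
  have e : stableExp α C = fun t : ℝ => (((max t 0) ^ α : ℝ) : ℂ) * C
      + (((max (-t) 0) ^ α : ℝ) : ℂ) * (starRingEnd ℂ) C := by
    ext t
    unfold stableExp
    split_ifs with h
    · rw [abs_of_nonneg h, max_eq_left h, max_eq_right (by linarith), zero_rpow hα.ne']
      simp
    · push Not at h
      rw [abs_of_neg h, max_eq_right h.le, max_eq_left (by linarith), zero_rpow hα.ne']
      simp
  rw [e]
  have h1 : Continuous fun t : ℝ => (max t 0) ^ α :=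
    (continuous_id.max continuous_const).rpow_const fun _ => Or.inr hα.le
  have h2 : Continuous fun t : ℝ => (max (-t) 0) ^ α :=
    (continuous_neg.max continuous_const).rpow_const fun _ => Or.inr hα.le
  exact ((Complex.continuous_ofReal.comp h1).mul continuous_const).add
    ((Complex.continuous_ofReal.comp h2).mul continuous_const)

lemma norm_one_sub_charFun_abs (F : Measure ℝ) (θ : ℝ) :
    ‖1 - charFun F |θ|‖ = ‖1 - charFun F θ‖ := by
  rcases abs_choice θ with h | h
  · rw [h]
  · rw [h, charFun_neg, ← Complex.norm_conj]; simp

namespace CharAsymp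

variable {F : Measure ℝ} {α : ℝ} {C : ℂ}

lemma pos (hF : CharAsymp F α C) : 0 < α := by linarith [hF.half_lt]

lemma tendsto_ratio (hF : CharAsymp F α C) (t : ℝ) (ht : t ≠ 0) :
    Tendsto (fun x : ℝ => (1 - charFun F (t / x)) / (rtail F x : ℂ)) atTop
      (𝓝 (stableExp α C t)) := by
  have key : ∀ s : ℝ, 0 < s → Tendsto (fun x : ℝ => (1 - charFun F (s / x)) / (rtail F x : ℂ))
      atTop (𝓝 (((s ^ α : ℝ) : ℂ) * C)) := by
    intro s hs
    have h1 := hF.tendsto.comp (tendsto_id.const_mul_atTop (inv_pos.2 hs))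
    have h2 := (Complex.continuous_ofReal.tendsto _).comp (hF.tail.ratio s⁻¹ (inv_pos.2 hs))
    have h3 := h2.mul h1
    rw [inv_rpow hs.le, rpow_neg hs.le, inv_inv] at h3
    refine h3.congr fun x => ?_
    simp only [Function.comp, id]
    have := Complex.ofReal_ne_zero.2 (hF.tail.pos x).ne'
    have := Complex.ofReal_ne_zero.2 (hF.tail.pos (s⁻¹ * x)).ne'
    push_cast
    rw [show 1 / (s⁻¹ * x) = s / x by rw [one_div, mul_inv, inv_inv]; rfl,
      div_mul_div_cancel₀']
    assumption
  rcases lt_or_gt_of_ne ht with h | h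
  · have h1 := (Complex.continuous_conj.tendsto _).comp (key (-t) (by linarith))
    have e : stableExp α C t = (starRingEnd ℂ) ((((-t) ^ α : ℝ) : ℂ) * C) := by
      unfold stableExp
      rw [abs_of_neg h, if_neg (by linarith), map_mul, Complex.conj_ofReal]
    rw [e]
    refine h1.congr fun x => ?_
    simp only [Function.comp, map_div₀, map_sub, map_one, Complex.conj_ofReal]
    rw [← charFun_neg, neg_div, neg_neg]
  · have e : stableExp α C t = (((t ^ α : ℝ) : ℂ) * C) := by
      unfold stableExp
      rw [abs_of_pos h, if_pos h.le]
    rw [e]; exact key t h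

lemma exists_lower (hF : CharAsymp F α C) [IsProbabilityMeasure F] {B : ℝ}
    (hB : ∀ θ : ℝ, 0 < |θ| → |θ| ≤ B → charFun F θ ≠ 1) :
    ∃ c > 0, ∀ θ : ℝ, 0 < |θ| → |θ| ≤ B → c * rtail F (1 / |θ|) ≤ ‖1 - charFun F θ‖ := by
  have hC : C.re / 2 < ‖C‖ := by
    linarith [hF.re_pos, Complex.re_le_norm C]
  obtain ⟨N, hN⟩ := eventually_atTop.1
    ((hF.tendsto.norm.eventually (lt_mem_nhds hC)).and (eventually_gt_atTop 0))
  have hN0 : 0 < N := (hN N le_rfl).2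
  have hcomp : ∃ m > 0, ∀ θ ∈ Icc (1 / N) B, m ≤ ‖1 - charFun F θ‖ := by
    rcases (Icc (1 / N) B).eq_empty_or_nonempty with h | h
    · exact ⟨1, one_pos, by rw [h]; simp⟩
    · obtain ⟨θ₀, hθ₀, hm⟩ := isCompact_Icc.exists_isMinOn h
        (f := fun θ => ‖1 - charFun F θ‖)
        (continuous_const.sub continuous_charFun).norm.continuousOn
      have h0 : 0 < θ₀ := (by positivity : 0 < 1 / N).trans_le hθ₀.1
      refine ⟨_, norm_pos_iff.2 (sub_ne_zero.2 (hB θ₀ (abs_pos.2 h0.ne') ?_).symm),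
        fun θ hθ => hm hθ⟩
      rw [abs_of_pos h0]; exact hθ₀.2
  obtain ⟨m, hm0, hm⟩ := hcomp
  refine ⟨min (C.re / 2) m, lt_min (by linarith [hF.re_pos]) hm0, fun θ h0 hθB => ?_⟩
  rw [← norm_one_sub_charFun_abs]
  have hG := hF.tail.pos (1 / |θ|)
  rcases le_total N (1 / |θ|) with h | h
  · have h1 := (hN _ h).1
    rw [one_div_one_div, norm_div, Complex.norm_real, Real.norm_of_nonneg hG.le,
      lt_div_iff₀ hG] at h1
    refine le_trans ?_ h1.le
    gcongr
    exact min_le_left _ _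
  · have h2 : |θ| ∈ Icc (1 / N) B := by
      refine ⟨?_, hθB⟩
      rw [div_le_iff₀ h0, mul_comm] at h
      rwa [div_le_iff₀ hN0]
    calc _ ≤ m * 1 := by
          gcongr
          · exact min_le_right _ _
          · exact hF.tail.le_one _
      _ ≤ _ := by rw [mul_one]; exact hm _ h2

/-- Domination of the rescaled resolvent by powers. -/
lemma exists_bound (hF : CharAsymp F α C) [IsProbabilityMeasure F] {B α₁ α₂ : ℝ} (hB0 : 0 < B)
    (hα₁ : 0 ≤ α₁) (h1 : α₁ < α) (h2 : α < α₂)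
    (hB : ∀ θ : ℝ, 0 < |θ| → |θ| ≤ B → charFun F θ ≠ 1) :
    ∃ K > 0, ∀ x > 0, ∀ t : ℝ, |t| ≤ B * x →
      rtail F x * ‖(1 - charFun F (t / x))⁻¹‖ ≤ K * (|t| ^ (-α₁) + |t| ^ (-α₂)) ∧
      (1 ≤ |t| → rtail F x * ‖(1 - charFun F (t / x))⁻¹‖ ≤ K * |t| ^ (-α₁)) := by
  obtain ⟨c, hc, hlow⟩ := hF.exists_lower hB
  obtain ⟨K₁, hK₁, hU⟩ := hF.tail.potter_upper hα₁ h1 (b := 1 / B) (by positivity)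
  obtain ⟨K₂, hK₂, hL⟩ := hF.tail.potter_lower (hF.pos.trans h2).le h2
  refine ⟨(K₁ + K₂) / c, by positivity, fun x hx t htB => ?_⟩
  have hGx := hF.tail.pos x
  rcases eq_or_ne t 0 with rfl | ht
  · have : charFun F (0 / x) = 1 := by simp
    rw [this, sub_self, inv_zero, norm_zero, mul_zero]
    refine ⟨by positivity, fun h => ?_⟩
    simp at h
    linarith
  have ht0 : 0 < |t| := abs_pos.2 ht
  have hdiv : |t / x| = |t| / x := by rw [abs_div, abs_of_pos hx]
  have hl := hlow (t / x) (by rw [hdiv]; positivity) (by rw [hdiv, div_le_iff₀ hx]; exact htB)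
  rw [hdiv, one_div_div] at hl
  have hG' := hF.tail.pos (x / |t|)
  have hw : rtail F x * ‖(1 - charFun F (t / x))⁻¹‖ ≤ rtail F x / (c * rtail F (x / |t|)) := by
    rw [norm_inv, ← div_eq_mul_inv]
    gcongr
  have hbig : 1 ≤ |t| → rtail F x * ‖(1 - charFun F (t / x))⁻¹‖ ≤ (K₁ / c) * |t| ^ (-α₁) := by
    intro h
    refine hw.trans ?_
    have := hU (x / |t|) (by rw [ge_iff_le, div_le_div_iff₀ hB0 ht0]; linarith) x (div_le_self hx.le h)
    rw [show x / (x / |t|) = |t| by field_simp] at this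
    rw [div_le_iff₀ (by positivity)]
    refine this.trans (le_of_eq ?_)
    field_simp
  have hmono : (K₁ / c) ≤ (K₁ + K₂) / c := by gcongr; linarith
  refine ⟨?_, fun h => (hbig h).trans (by gcongr)⟩
  rcases le_total 1 |t| with h | h
  · refine (hbig h).trans ?_
    gcongr
    exact le_add_of_nonneg_right (by positivity)
  · refine hw.trans ?_
    have := hL x hx (x / |t|) (by rw [ge_iff_le, le_div_iff₀ ht0]; nlinarith)
    rw [show x / |t| / x = |t|⁻¹ by field_simp, inv_rpow ht0.le, ← rpow_neg ht0.le] at this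
    rw [div_le_iff₀ (by positivity)]
    refine this.trans ?_
    calc K₂ * |t| ^ (-α₂) * rtail F (x / |t|)
        ≤ (K₁ + K₂) * (|t| ^ (-α₁) + |t| ^ (-α₂)) * rtail F (x / |t|) := by
          gcongr
          · linarith
          · exact le_add_of_nonneg_left (by positivity)
      _ = _ := by field_simp

end CharAsymp

lemma integrable_comp_abs {f : ℝ → ℝ} (hf : IntegrableOn f (Ioi 0)) :
    Integrable fun t : ℝ => f |t| := by
  have h1 : IntegrableOn (fun x => f |x|) (Ioi 0) :=
    hf.congr_fun (fun x hx => by rw [abs_of_pos (show 0 < x from hx)]) measurableSet_Ioi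
  have h2 : IntegrableOn (fun x ↦ f |x|) (Iic 0) := by
    rw [← Measure.map_neg_eq_self (volume : Measure ℝ)]
    let m : MeasurableEmbedding fun x : ℝ => -x := (Homeomorph.neg ℝ).measurableEmbedding
    rw [m.integrableOn_map_iff]
    simp_rw [Function.comp_def, abs_neg, neg_preimage, neg_Iic, neg_zero]
    exact Iff.mpr integrableOn_Ici_iff_integrableOn_Ioi h1
  rw [← integrableOn_univ, ← Iic_union_Ioi (a := (0:ℝ))]
  exact h2.union h1

/-- `|t|^(-a)` cut to `|t| ≤ b`. -/
def nearPow (b a t : ℝ) : ℝ := (Iic b).indicator (fun s => s ^ (-a)) |t|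

/-- `|t|^(-a)` cut to `|t| > b`. -/
def farPow (b a t : ℝ) : ℝ := (Ioi b).indicator (fun s => s ^ (-a)) |t|

lemma nearPow_of_le {b a t : ℝ} (h : |t| ≤ b) : nearPow b a t = |t| ^ (-a) :=
  indicator_of_mem (mem_Iic.2 h) _

lemma farPow_of_lt {b a t : ℝ} (h : b < |t|) : farPow b a t = |t| ^ (-a) :=
  indicator_of_mem (mem_Ioi.2 h) _

lemma nearPow_nonneg (b a t : ℝ) : 0 ≤ nearPow b a t := by
  unfold nearPow indicator; split_ifs <;> positivity

lemma farPow_nonneg (b a t : ℝ) : 0 ≤ farPow b a t := by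
  unfold farPow indicator; split_ifs <;> positivity

lemma integrable_nearPow {b a : ℝ} (ha : a < 1) : Integrable (nearPow b a) := by
  refine integrable_comp_abs (f := (Iic b).indicator (fun s => s ^ (-a))) ?_
  rw [IntegrableOn, integrable_indicator_iff measurableSet_Iic, IntegrableOn,
    Measure.restrict_restrict measurableSet_Iic]
  have e : Iic b ∩ Ioi 0 = Ioc 0 b := by ext; simp [and_comm]
  rw [e]
  rcases le_total 0 b with h | h
  · have := intervalIntegral.intervalIntegrable_rpow' (a := 0) (b := b) (r := -a) (by linarith)
    exact (intervalIntegrable_iff_integrableOn_Ioc_of_le h).1 this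
  · rw [Ioc_eq_empty (by simpa using h)]; simp

lemma integrable_farPow {b a : ℝ} (hb : 0 < b) (ha : 1 < a) : Integrable (farPow b a) := by
  refine integrable_comp_abs (f := (Ioi b).indicator (fun s => s ^ (-a))) ?_
  rw [IntegrableOn, integrable_indicator_iff measurableSet_Ioi, IntegrableOn,
    Measure.restrict_restrict measurableSet_Ioi]
  refine (integrableOn_Ioi_rpow_of_lt (a := -a) (by linarith) hb).mono_set inter_subset_left

lemma norm_exp_neg_mul_I (t : ℝ) : ‖Complex.exp (-(t * Complex.I))‖ = 1 := by
  rw [← neg_mul, ← Complex.ofReal_neg, Complex.norm_exp_ofReal_mul_I]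

lemma integrable_exp_neg_mul {W : ℝ → ℂ} (hW : Integrable W) :
    Integrable fun t : ℝ => Complex.exp (-(t * Complex.I)) * W t := by
  refine hW.bdd_mul (c := 1) ?_ (ae_of_all _ fun t => (norm_exp_neg_mul_I t).le)
  exact Continuous.aestronglyMeasurable (by fun_prop)

lemma exp_neg_add_pi (t : ℝ) : Complex.exp (-(((t + π : ℝ) : ℂ) * Complex.I))
    = - Complex.exp (-(t * Complex.I)) := by
  rw [Complex.ofReal_add, add_mul, neg_add, Complex.exp_add, Complex.exp_neg (π * Complex.I),
    Complex.exp_pi_mul_I]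
  norm_num

/-- The half-period shift identity for Fourier integrals. -/
lemma integral_exp_eq_half {W : ℝ → ℂ} (hW : Integrable W) :
    ∫ t : ℝ, Complex.exp (-(t * Complex.I)) * W t
      = 1 / 2 * ∫ t : ℝ, Complex.exp (-(t * Complex.I)) * (W t - W (t + π)) := by
  have h1 : ∫ t : ℝ, Complex.exp (-(t * Complex.I)) * W (t + π)
      = - ∫ t : ℝ, Complex.exp (-(t * Complex.I)) * W t := by
    rw [← integral_add_right_eq_self (fun t : ℝ => Complex.exp (-(t * Complex.I)) * W t) π,
      ← integral_neg]
    congr 1; ext t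
    rw [exp_neg_add_pi]; ring
  simp_rw [mul_sub]
  rw [integral_sub (integrable_exp_neg_mul hW) (integrable_exp_neg_mul (hW.comp_add_right π)), h1]
  ring

/-- The limiting constant, as a regularized Fourier integral. -/
def limConst (α : ℝ) (C : ℂ) : ℂ :=
  1 / 2 * ∫ t : ℝ, Complex.exp (-(t * Complex.I))
    * ((stableExp α C t)⁻¹ - (stableExp α C (t + π))⁻¹)

namespace CharAsymp

variable {F : Measure ℝ} {α : ℝ} {C : ℂ}

/-- The rescaled localized resolvent. -/
def resc (F : Measure ℝ) (q : ℝ → ℂ) (x t : ℝ) : ℂ :=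
  q (t / x) * ((rtail F x : ℂ) * (1 - charFun F (t / x))⁻¹)

lemma norm_resc (hF : CharAsymp F α C) (q : ℝ → ℂ) (x t : ℝ) :
    ‖resc F q x t‖ = ‖q (t / x)‖ * (rtail F x * ‖(1 - charFun F (t / x))⁻¹‖) := by
  unfold resc
  rw [norm_mul, norm_mul, Complex.norm_real, Real.norm_of_nonneg (hF.tail.pos x).le]

lemma measurable_resc (F : Measure ℝ) [IsProbabilityMeasure F] {q : ℝ → ℂ} (hq : Measurable q)
    (x : ℝ) : Measurable (resc F q x) := by
  unfold resc
  have h1 : Measurable fun t : ℝ => t / x := by fun_prop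
  exact (hq.comp h1).mul (((measurable_const.sub
    (continuous_charFun.measurable.comp h1)).inv).const_mul _)

lemma integrable_resc (hF : CharAsymp F α C) [IsProbabilityMeasure F] {B M : ℝ} (hB0 : 0 < B)
    (hB : ∀ θ : ℝ, 0 < |θ| → |θ| ≤ B → charFun F θ ≠ 1) {q : ℝ → ℂ} (hq : Measurable q)
    (hM : ∀ a, ‖q a‖ ≤ M) (hsupp : ∀ θ, B < |θ| → q θ = 0) {x : ℝ} (hx : 0 < x) :
    Integrable (resc F q x) := by
  obtain ⟨α₂, h2, h2'⟩ := exists_between hF.lt_one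
  obtain ⟨K, hK, hb⟩ := hF.exists_bound hB0 le_rfl hF.pos h2 hB
  have hM0 : 0 ≤ M := (norm_nonneg _).trans (hM 0)
  refine (((integrable_nearPow (b := B * x) zero_lt_one).add
    (integrable_nearPow (b := B * x) h2')).const_mul (M * K)).mono'
    (measurable_resc F hq x).aestronglyMeasurable (ae_of_all _ fun t => ?_)
  simp only [Pi.add_apply]
  rcases le_or_gt |t| (B * x) with h | h
  · rw [hF.norm_resc, nearPow_of_le h, nearPow_of_le h, mul_assoc]
    exact mul_le_mul (hM _) (hb x hx t h).1 (mul_nonneg (hF.tail.pos x).le (norm_nonneg _)) hM0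
  · have : q (t / x) = 0 := hsupp _ (by rwa [abs_div, abs_of_pos hx, lt_div_iff₀ hx])
    rw [hF.norm_resc, this, norm_zero, zero_mul]
    have := nearPow_nonneg (B * x) 0 t
    have := nearPow_nonneg (B * x) α₂ t
    positivity

lemma tendsto_resc (hF : CharAsymp F α C) {q : ℝ → ℂ} (hq : Continuous q) {t : ℝ} (ht : t ≠ 0) :
    Tendsto (fun x => resc F q x t) atTop (𝓝 (q 0 * (stableExp α C t)⁻¹)) := by
  unfold resc
  have h0 : Tendsto (fun x : ℝ => t / x) atTop (𝓝 0) := tendsto_const_nhds.div_atTop tendsto_id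
  refine ((hq.tendsto 0).comp h0).mul ?_
  refine ((hF.tendsto_ratio t ht).inv₀ (stableExp_ne_zero hF.re_pos ht)).congr fun x => ?_
  rw [inv_div, div_eq_mul_inv]

lemma norm_resc_sub_le (hF : CharAsymp F α C) [IsProbabilityMeasure F] {B B' M L α₁ : ℝ}
    (hB0 : 0 < B)
    (hB : ∀ θ : ℝ, 0 < |θ| → |θ| ≤ B → charFun F θ ≠ 1) {q : ℝ → ℂ}
    (hM : ∀ a, ‖q a‖ ≤ M) (hL : ∀ a b, ‖q a - q b‖ ≤ L * |a - b|)
    (hsupp : ∀ θ, B' < |θ| → q θ = 0) (hα₁ : 0 ≤ α₁) (h1 : α₁ < α) :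
    ∃ K > 0, ∀ x > 0, π / x ≤ B - B' → ∀ t, 2 * π < |t| →
      ‖resc F q x t - resc F q x (t + π)‖ ≤ K * |t| ^ (-(2 * α₁)) := by
  obtain ⟨α₂, h2, h2'⟩ := exists_between hF.lt_one
  obtain ⟨K, hK, hb⟩ := hF.exists_bound hB0 hα₁ h1 h2 hB
  obtain ⟨K', hK', hmod⟩ := hF.modulus
  have hM0 : 0 ≤ M := (norm_nonneg _).trans (hM 0)
  have hL0 : 0 ≤ L := by simpa using (norm_nonneg _).trans (hL 1 0)
  refine ⟨L * π * B * K + M * (K' * K * (K * 2 ^ α₁)) + 1, by positivity,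
    fun x hx hxB t ht => ?_⟩
  have hpi := Real.pi_gt_three
  have ht1 : 1 ≤ |t| := by linarith
  have ht0 : 0 < |t| := by linarith
  have htp : |t| / 2 ≤ |t + π| := by
    have := abs_sub_abs_le_abs_sub t (-π)
    rw [sub_neg_eq_add, abs_neg, abs_of_pos Real.pi_pos] at this
    linarith
  have htp1 : 1 ≤ |t + π| := by linarith
  have hGx := hF.tail.pos x
  have hpx : π ≤ (B - B') * x := by rwa [div_le_iff₀ hx] at hxB
  by_cases hz : q (t / x) = 0 ∧ q ((t + π) / x) = 0
  · unfold resc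
    rw [hz.1, hz.2]
    simp only [zero_mul, sub_zero, norm_zero]
    positivity
  have hboth : |t| ≤ B * x ∧ |t + π| ≤ B * x := by
    have hor : |t| ≤ B' * x ∨ |t + π| ≤ B' * x := by
      by_contra hcon
      push Not at hcon
      refine hz ⟨hsupp _ ?_, hsupp _ ?_⟩
      · rw [abs_div, abs_of_pos hx, lt_div_iff₀ hx]; exact hcon.1
      · rw [abs_div, abs_of_pos hx, lt_div_iff₀ hx]; exact hcon.2
    have e1 : |t + π| ≤ |t| + π := by
      simpa [abs_of_pos Real.pi_pos] using abs_add_le t π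
    have e2 : |t| ≤ |t + π| + π := by
      have := abs_add_le (t + π) (-π)
      rwa [add_neg_cancel_right, abs_neg, abs_of_pos Real.pi_pos] at this
    rcases hor with h | h <;> constructor <;> nlinarith
  have hne : ∀ s : ℝ, s ≠ 0 → |s| ≤ B * x → 1 - charFun F (s / x) ≠ 0 := by
    intro s hs hsB
    refine sub_ne_zero.2 (hB _ (abs_pos.2 (div_ne_zero hs hx.ne')) ?_).symm
    rw [abs_div, abs_of_pos hx, div_le_iff₀ hx]; exact hsB
  have hne1 := hne t (abs_pos.1 ht0) hboth.1
  have hne2 := hne (t + π) (abs_pos.1 (by linarith)) hboth.2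
  have hb1 := (hb x hx t hboth.1).2 ht1
  have hb2 := (hb x hx (t + π) hboth.2).2 htp1
  have hb2' : rtail F x * ‖(1 - charFun F ((t + π) / x))⁻¹‖ ≤ K * 2 ^ α₁ * |t| ^ (-α₁) := by
    refine hb2.trans ?_
    rw [mul_assoc]
    gcongr
    calc |t + π| ^ (-α₁) ≤ (|t| / 2) ^ (-α₁) :=
          rpow_le_rpow_of_nonpos (by positivity) htp (by linarith)
      _ = _ := by
        rw [div_rpow ht0.le zero_le_two, rpow_neg zero_le_two]
        field_simp
  have hsplit : resc F q x t - resc F q x (t + π)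
      = (q (t / x) - q ((t + π) / x)) * ((rtail F x : ℂ) * (1 - charFun F (t / x))⁻¹)
        + q ((t + π) / x) * ((charFun F (t / x) - charFun F ((t + π) / x))
          * (1 - charFun F (t / x))⁻¹ * ((rtail F x : ℂ) * (1 - charFun F ((t + π) / x))⁻¹)) := by
    unfold resc
    field_simp
    ring
  have hnorm : ∀ s : ℝ, ‖(rtail F x : ℂ) * (1 - charFun F (s / x))⁻¹‖
      = rtail F x * ‖(1 - charFun F (s / x))⁻¹‖ := fun s => by
    rw [norm_mul, Complex.norm_real, Real.norm_of_nonneg hGx.le]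
  have hlip : ‖q (t / x) - q ((t + π) / x)‖ ≤ L * π * B * |t| ^ (-(1:ℝ)) := by
    refine (hL _ _).trans ?_
    have e : |t / x - (t + π) / x| = π / x := by
      rw [← sub_div, abs_div, abs_of_pos hx, sub_add_cancel_left, abs_neg, abs_of_pos Real.pi_pos]
    rw [e, rpow_neg_one, mul_assoc, mul_assoc]
    gcongr
    rw [div_le_iff₀ hx, mul_assoc, mul_assoc]
    have : 1 ≤ B * (|t|⁻¹ * x) := by
      rw [← mul_assoc, mul_right_comm, ← div_eq_mul_inv, one_le_div ht0]; exact hboth.1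
    nlinarith [Real.pi_pos]
  have hφ := hmod x hx (t / x)
  rw [← add_div] at hφ
  have hpow1 : |t| ^ (-(1:ℝ)) * |t| ^ (-α₁) ≤ |t| ^ (-(2 * α₁)) := by
    rw [← rpow_add ht0]
    exact rpow_le_rpow_of_exponent_le ht1 (by linarith [hF.lt_one])
  have hpow2 : |t| ^ (-α₁) * |t| ^ (-α₁) = |t| ^ (-(2 * α₁)) := by
    rw [← rpow_add ht0]; congr 1; ring
  rw [hsplit]
  refine (norm_add_le _ _).trans ?_
  rw [norm_mul, hnorm, norm_mul (q ((t + π) / x)), norm_mul (_ * _), norm_mul (_ - _), hnorm]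
  have t1 : ‖q (t / x) - q ((t + π) / x)‖ * (rtail F x * ‖(1 - charFun F (t / x))⁻¹‖)
      ≤ (L * π * B * K) * |t| ^ (-(2 * α₁)) := by
    calc _ ≤ (L * π * B * |t| ^ (-(1:ℝ))) * (K * |t| ^ (-α₁)) := by gcongr
      _ = (L * π * B * K) * (|t| ^ (-(1:ℝ)) * |t| ^ (-α₁)) := by ring
      _ ≤ _ := by gcongr
  have t2 : ‖q ((t + π) / x)‖ * (‖charFun F (t / x) - charFun F ((t + π) / x)‖
      * ‖(1 - charFun F (t / x))⁻¹‖ * (rtail F x * ‖(1 - charFun F ((t + π) / x))⁻¹‖))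
      ≤ (M * (K' * K * (K * 2 ^ α₁))) * |t| ^ (-(2 * α₁)) := by
    calc _ ≤ M * (K' * rtail F x * ‖(1 - charFun F (t / x))⁻¹‖ * (K * 2 ^ α₁ * |t| ^ (-α₁))) := by
          gcongr
          exact hM _
      _ = M * (K' * (rtail F x * ‖(1 - charFun F (t / x))⁻¹‖) * (K * 2 ^ α₁ * |t| ^ (-α₁))) := by
          ring
      _ ≤ M * (K' * (K * |t| ^ (-α₁)) * (K * 2 ^ α₁ * |t| ^ (-α₁))) := by gcongr
      _ = (M * (K' * K * (K * 2 ^ α₁))) * (|t| ^ (-α₁) * |t| ^ (-α₁)) := by ring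
      _ = _ := by rw [hpow2]
  have t3 : 0 ≤ |t| ^ (-(2 * α₁)) := by positivity
  linarith

lemma tendsto_integral_resc (hF : CharAsymp F α C) [IsProbabilityMeasure F] {B B' M L : ℝ}
    (hB0 : 0 < B) (hB' : B' < B)
    (hB : ∀ θ : ℝ, 0 < |θ| → |θ| ≤ B → charFun F θ ≠ 1) {q : ℝ → ℂ} (hq : Continuous q)
    (hM : ∀ a, ‖q a‖ ≤ M) (hL : ∀ a b, ‖q a - q b‖ ≤ L * |a - b|)
    (hsupp : ∀ θ, B' < |θ| → q θ = 0) :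
    Tendsto (fun x : ℝ => ∫ t : ℝ, Complex.exp (-(t * Complex.I)) * resc F q x t)
      atTop (𝓝 (q 0 * limConst α C)) := by
  obtain ⟨α₁, h1', h1⟩ := exists_between hF.half_lt
  obtain ⟨α₂, h2, h2'⟩ := exists_between hF.lt_one
  obtain ⟨K, hK, hb⟩ := hF.exists_bound hB0 (by linarith) h1 h2 hB
  obtain ⟨K', hK', hfar⟩ := hF.norm_resc_sub_le hB0 hB hM hL hsupp (by linarith) h1
  have hM0 : 0 ≤ M := (norm_nonneg _).trans (hM 0)
  have hsupp' : ∀ θ, B < |θ| → q θ = 0 := fun θ hθ => hsupp θ (hB'.trans hθ)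
  have hptb : ∀ x > 0, ∀ t, ‖resc F q x t‖ ≤ M * (K * (|t| ^ (-α₁) + |t| ^ (-α₂))) := by
    intro x hx t
    rcases le_or_gt |t| (B * x) with h | h
    · rw [hF.norm_resc]
      exact mul_le_mul (hM _) (hb x hx t h).1 (mul_nonneg (hF.tail.pos x).le (norm_nonneg _)) hM0
    · have : q (t / x) = 0 := hsupp' _ (by rwa [abs_div, abs_of_pos hx, lt_div_iff₀ hx])
      rw [hF.norm_resc, this, norm_zero, zero_mul]
      positivity
  let N : ℝ → ℝ := fun t => M * (K * (nearPow (3 * π) α₁ t + nearPow (3 * π) α₂ t))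
  have hNint : Integrable N := ((((integrable_nearPow (by linarith)).add
    (integrable_nearPow h2')).const_mul K).const_mul M)
  have hN0 : ∀ t, 0 ≤ N t := fun t => by
    have := nearPow_nonneg (3 * π) α₁ t
    have := nearPow_nonneg (3 * π) α₂ t
    positivity
  let D : ℝ → ℝ := fun t => N t + N (t + π) + K' * farPow (2 * π) (2 * α₁) t
  have hDint : Integrable D := (hNint.add (hNint.comp_add_right π)).add
    ((integrable_farPow (by positivity) (by linarith)).const_mul K')
  have hlim : Tendsto (fun x : ℝ => ∫ t : ℝ, Complex.exp (-(t * Complex.I))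
      * (resc F q x t - resc F q x (t + π))) atTop (𝓝 (∫ t : ℝ, Complex.exp (-(t * Complex.I))
      * (q 0 * (stableExp α C t)⁻¹ - q 0 * (stableExp α C (t + π))⁻¹))) := by
    refine tendsto_integral_filter_of_dominated_convergence D ?_ ?_ hDint ?_
    · refine Eventually.of_forall fun x => Measurable.aestronglyMeasurable ?_
      have := measurable_resc F hq.measurable x
      have h2 : Measurable fun t => resc F q x (t + π) := this.comp (measurable_add_const π)
      have h3 : Measurable fun t : ℝ => Complex.exp (-(t * Complex.I)) :=
        Continuous.measurable (by fun_prop)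
      exact h3.mul (this.sub h2)
    · have hev : ∀ᶠ x : ℝ in atTop, π / x < B - B' :=
        (tendsto_const_nhds.div_atTop tendsto_id).eventually (gt_mem_nhds (by linarith))
      filter_upwards [hev, eventually_gt_atTop 0] with x hxB hx
      refine ae_of_all _ fun t => ?_
      rw [norm_mul, norm_exp_neg_mul_I, one_mul]
      have hpi := Real.pi_pos
      rcases le_or_gt |t| (2 * π) with h | h
      · refine (norm_sub_le _ _).trans ?_
        have e1 : |t + π| ≤ 3 * π := by
          have := abs_add_le t π
          rw [abs_of_pos hpi] at this
          linarith
        have h1 : ‖resc F q x t‖ ≤ N t := by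
          simp only [N]
          rw [nearPow_of_le (by linarith), nearPow_of_le (by linarith)]
          exact hptb x hx t
        have h2 : ‖resc F q x (t + π)‖ ≤ N (t + π) := by
          simp only [N]
          rw [nearPow_of_le e1, nearPow_of_le e1]
          exact hptb x hx _
        have := mul_nonneg hK'.le (farPow_nonneg (2 * π) (2 * α₁) t)
        simp only [D]
        linarith
      · have := hfar x hx hxB.le t h
        simp only [D]
        rw [farPow_of_lt h]
        linarith [hN0 t, hN0 (t + π)]
    · have h0 : ∀ᵐ t : ℝ, t ≠ 0 := by simp [ae_iff]
      have h1 : ∀ᵐ t : ℝ, t + π ≠ 0 := by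
        have : {t : ℝ | ¬ (t + π ≠ 0)} = {-π} := by
          ext t; simp [add_eq_zero_iff_eq_neg]
        rw [ae_iff, this]; simp
      filter_upwards [h0, h1] with t ht0 ht1
      exact ((hF.tendsto_resc hq ht0).sub (hF.tendsto_resc hq ht1)).const_mul _
  have hlim2 := hlim.const_mul (1 / 2 : ℂ)
  have e : (1 / 2 : ℂ) * ∫ t : ℝ, Complex.exp (-(t * Complex.I))
      * (q 0 * (stableExp α C t)⁻¹ - q 0 * (stableExp α C (t + π))⁻¹) = q 0 * limConst α C := by
    unfold limConst
    rw [mul_left_comm, ← integral_const_mul (q 0)]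
    congr 1
    refine integral_congr_ae (ae_of_all _ fun t => ?_)
    simp only
    ring
  rw [e] at hlim2
  refine hlim2.congr' ?_
  filter_upwards [eventually_gt_atTop 0] with x hx
  exact (integral_exp_eq_half (hF.integrable_resc hB0 hB hq.measurable hM hsupp' hx)).symm

/-- Asymptotics of the localized Fourier inversion integral. -/
lemma tendsto_integral (hF : CharAsymp F α C) [IsProbabilityMeasure F] {B B' M L : ℝ}
    (hB0 : 0 < B) (hB' : B' < B)
    (hB : ∀ θ : ℝ, 0 < |θ| → |θ| ≤ B → charFun F θ ≠ 1) {q : ℝ → ℂ} (hq : Continuous q)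
    (hM : ∀ a, ‖q a‖ ≤ M) (hL : ∀ a b, ‖q a - q b‖ ≤ L * |a - b|)
    (hsupp : ∀ θ, B' < |θ| → q θ = 0) :
    Tendsto (fun x : ℝ => ((x * rtail F x : ℝ) : ℂ)
        * ∫ θ : ℝ, q θ * Complex.exp (-(θ * x * Complex.I)) * (1 - charFun F θ)⁻¹)
      atTop (𝓝 (q 0 * limConst α C)) := by
  refine (hF.tendsto_integral_resc hB0 hB' hB hq hM hL hsupp).congr' ?_
  filter_upwards [eventually_gt_atTop 0] with x hx
  have h := Measure.integral_comp_div
    (fun θ : ℝ => q θ * Complex.exp (-(θ * x * Complex.I)) * (1 - charFun F θ)⁻¹) x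
  rw [abs_of_pos hx, Complex.real_smul] at h
  rw [Complex.ofReal_mul, mul_right_comm, ← h, mul_comm, ← integral_const_mul]
  congr 1; ext t
  have hx' : (x : ℂ) ≠ 0 := Complex.ofReal_ne_zero.2 hx.ne'
  unfold resc
  rw [Complex.ofReal_div, div_mul_cancel₀ _ hx']
  ring

end CharAsymp

lemma mconv_eq_conv (μ ν : Measure ℝ) [SFinite μ] [SFinite ν] : mconv μ ν = μ.conv ν := by
  ext s hs
  have hm : Measurable fun x : ℝ => ν.map fun y => x + y := by
    refine Measure.measurable_of_measurable_coe _ fun t ht => ?_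
    have e : (fun x : ℝ => (ν.map fun y => x + y) t)
        = fun x => ν (Prod.mk x ⁻¹' ((fun p : ℝ × ℝ => p.1 + p.2) ⁻¹' t)) := by
      ext x
      rw [Measure.map_apply (by fun_prop) ht]
      rfl
    rw [e]
    exact measurable_measure_prodMk_left (measurable_add ht)
  unfold mconv
  rw [Measure.bind_apply hs hm.aemeasurable, Measure.conv, Measure.map_apply measurable_add hs,
    Measure.prod_apply (measurable_add hs)]
  refine lintegral_congr fun x => ?_
  rw [Measure.map_apply (by fun_prop) hs]
  rfl

instance isProbabilityMeasure_convPow (F : Measure ℝ) [IsProbabilityMeasure F] (n : ℕ) :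
    IsProbabilityMeasure (convPow F n) := by
  induction n with
  | zero => unfold convPow; infer_instance
  | succ n ih => unfold convPow; rw [mconv_eq_conv]; infer_instance

lemma charFun_convPow (F : Measure ℝ) [IsProbabilityMeasure F] (n : ℕ) (t : ℝ) :
    charFun (convPow F n) t = charFun F t ^ n := by
  induction n with
  | zero => unfold convPow; simp [charFun_dirac]
  | succ n ih => unfold convPow; rw [mconv_eq_conv, charFun_conv, ih, pow_succ]

lemma RegTail.tendsto_zero {G : ℝ → ℝ} {α : ℝ} (hG : RegTail G α) (hα : 0 < α) :
    Tendsto G atTop (𝓝 0) := by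
  obtain ⟨β, hβ0, hβ⟩ := exists_between hα
  obtain ⟨K, hK, hb⟩ := hG.potter_upper hβ0.le hβ one_pos
  have h1 : Tendsto (fun x : ℝ => K * x ^ (-β) * G 1) atTop (𝓝 0) := by
    simpa using ((tendsto_rpow_neg_atTop hβ0).const_mul K).mul_const (G 1)
  refine tendsto_of_tendsto_of_tendsto_of_le_of_le' tendsto_const_nhds h1
    (Eventually.of_forall fun x => (hG.pos x).le) ?_
  filter_upwards [eventually_ge_atTop 1] with x hx
  simpa using hb 1 le_rfl x hx

section Norming

variable {F : Measure ℝ} {ℓ : ℝ → ℝ} {α : ℝ}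

lemma tendsto_norming_fun (hG : RegTail (rtail F) α) (hα : 0 < α) (hRT : RightTail F ℓ) :
    Tendsto ℓ atTop atTop := by
  have h0 : Tendsto (fun x => (rtail F x)⁻¹) atTop atTop :=
    (tendsto_nhdsWithin_iff.2 ⟨hG.tendsto_zero hα,
      Eventually.of_forall fun x => hG.pos x⟩).inv_tendsto_nhdsGT_zero
  refine (Tendsto.pos_mul_atTop one_pos hRT h0).congr fun x => ?_
  have := (hG.pos x).ne'
  field_simp

lemma linv_set_nonempty (hℓ : Tendsto ℓ atTop atTop) (x : ℝ) :
    {t : ℝ | 1 ≤ t ∧ x < ℓ t}.Nonempty := by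
  obtain ⟨t, h1, h2⟩ := ((eventually_ge_atTop 1).and (hℓ.eventually_gt_atTop x)).exists
  exact ⟨t, h1, h2⟩

lemma linv_bddBelow (ℓ : ℝ → ℝ) (x : ℝ) : BddBelow {t : ℝ | 1 ≤ t ∧ x < ℓ t} :=
  ⟨1, fun _ ht => ht.1⟩

lemma one_le_linv (hℓ : Tendsto ℓ atTop atTop) (x : ℝ) : 1 ≤ linv ℓ x :=
  le_csInf (linv_set_nonempty hℓ x) fun _ ht => ht.1

lemma linv_mono (hℓ : Tendsto ℓ atTop atTop) : Monotone (linv ℓ) := fun x y hxy =>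
  csInf_le_csInf (linv_bddBelow ℓ x) (linv_set_nonempty hℓ y) fun _ ht =>
    ⟨ht.1, hxy.trans_lt ht.2⟩

/-- If the norming constants diverge then `n F̄(aₙ) → 1`. -/
lemma tendsto_mul_rtail_linv (hG : RegTail (rtail F) α) (hα : 0 < α) (hα1 : α < 1)
    (hRT : RightTail F ℓ) (ha : Tendsto (fun n : ℕ => linv ℓ n) atTop atTop) :
    Tendsto (fun n : ℕ => (n : ℝ) * rtail F (linv ℓ n)) atTop (𝓝 1) := by
  have hℓ := tendsto_norming_fun hG hα hRT
  have hratio : ∀ c : ℝ, 0 < c → Tendsto (fun n : ℕ => rtail F (linv ℓ n) / rtail F (c * linv ℓ n))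
      atTop (𝓝 (c ^ α)) := by
    intro c hc
    have := ((hG.ratio c hc).comp ha).inv₀ (by positivity)
    rw [rpow_neg hc.le, inv_inv] at this
    exact this.congr fun n => by simp
  refine tendsto_order.2 ⟨fun b hb => ?_, fun b hb => ?_⟩
  · wlog hb0 : 0 < b generalizing b
    · filter_upwards [this (1 / 2) (by norm_num) (by norm_num)] with n hn
      linarith
    obtain ⟨c, hc0, hc1, hcb⟩ : ∃ c : ℝ, 0 < c ∧ c < 1 ∧ c ^ 3 = b :=
      ⟨b ^ ((3:ℕ):ℝ)⁻¹, by positivity, rpow_lt_one hb0.le hb (by positivity),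
        rpow_inv_natCast_pow hb0.le (by norm_num)⟩
    have hcα : c ^ 2 < c ^ α := by
      have := rpow_lt_rpow_of_exponent_gt hc0 hc1 (show α < (2:ℕ) by norm_num; linarith)
      rwa [rpow_natCast] at this
    have h1 : ∀ᶠ x in atTop, c < rtail F x * ℓ x := hRT.eventually (lt_mem_nhds hc1)
    have hca : Tendsto (fun n : ℕ => c * linv ℓ n) atTop atTop := ha.const_mul_atTop hc0
    filter_upwards [hca.eventually h1, (hratio c hc0).eventually (lt_mem_nhds hcα),
      hca.eventually_ge_atTop 1] with n h1 h2 h3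
    have hGa := hG.pos (linv ℓ n)
    have hGc := hG.pos (c * linv ℓ n)
    have hle : ℓ (c * linv ℓ n) ≤ n := by
      by_contra hcon
      push Not at hcon
      have h4 : linv ℓ n ≤ c * linv ℓ n := csInf_le (linv_bddBelow ℓ n) ⟨h3, hcon⟩
      have := one_le_linv hℓ (n : ℝ)
      nlinarith
    have h5 : c < n * rtail F (c * linv ℓ n) := by nlinarith
    rw [lt_div_iff₀ hGc] at h2
    have h6 : c ^ 3 * rtail F (c * linv ℓ n) < (n * rtail F (linv ℓ n)) * rtail F (c * linv ℓ n) := by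
      calc c ^ 3 * rtail F (c * linv ℓ n) = c * (c ^ 2 * rtail F (c * linv ℓ n)) := by ring
        _ < c * rtail F (linv ℓ n) := by gcongr
        _ ≤ (n * rtail F (c * linv ℓ n)) * rtail F (linv ℓ n) := by gcongr
        _ = _ := by ring
    rw [← hcb]
    exact lt_of_mul_lt_mul_right h6 hGc.le
  · obtain ⟨c, hc1, hcb⟩ : ∃ c : ℝ, 1 < c ∧ c ^ 3 = b :=
      ⟨b ^ ((3:ℕ):ℝ)⁻¹, one_lt_rpow hb (by positivity),
        rpow_inv_natCast_pow (by linarith) (by norm_num)⟩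
    have hc0 : 0 < c := by linarith
    have hcα : c ^ α < c ^ 2 := by
      have := rpow_lt_rpow_of_exponent_lt hc1 (show α < (2:ℕ) by norm_num; linarith)
      rwa [rpow_natCast] at this
    have h1 : ∀ᶠ x in atTop, ∀ y ≥ x, rtail F y * ℓ y < c :=
      eventually_forall_ge_atTop.2 (hRT.eventually (gt_mem_nhds hc1))
    filter_upwards [ha.eventually h1, (hratio c hc0).eventually (gt_mem_nhds hcα)] with n h1 h2
    have hGa := hG.pos (linv ℓ n)
    have hGc := hG.pos (c * linv ℓ n)
    have ha1 := one_le_linv hℓ (n : ℝ)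
    obtain ⟨t, ht, htlt⟩ := exists_lt_of_csInf_lt (linv_set_nonempty hℓ n)
      (show linv ℓ n < c * linv ℓ n by nlinarith)
    have htge : linv ℓ n ≤ t := csInf_le (linv_bddBelow ℓ n) ht
    have h3 := h1 t htge
    have hGt := hG.pos t
    have h4 : (n : ℝ) * rtail F (c * linv ℓ n) ≤ c := by
      calc (n : ℝ) * rtail F (c * linv ℓ n) ≤ ℓ t * rtail F t := by
            have := hG.anti htlt.le
            have := ht.2
            have : 0 ≤ ℓ t := (Nat.cast_nonneg n).trans this.le
            gcongr
        _ ≤ c := by linarith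
    rw [div_lt_iff₀ hGc] at h2
    have hn0 : (0:ℝ) ≤ n := by positivity
    have h6 : (n * rtail F (linv ℓ n)) * rtail F (c * linv ℓ n) < c ^ 3 * rtail F (c * linv ℓ n) := by
      calc _ = (n * rtail F (c * linv ℓ n)) * rtail F (linv ℓ n) := by ring
        _ ≤ c * rtail F (linv ℓ n) := by gcongr
        _ < c * (c ^ 2 * rtail F (c * linv ℓ n)) := by gcongr
        _ = _ := by ring
    rw [← hcb]
    exact lt_of_mul_lt_mul_right h6 hGc.le

end Norming

section Limit

variable {F : Measure ℝ} {ℓ : ℝ → ℝ} {α : ℝ} {C : ℂ} {g : ℝ → ℝ}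

/-- Fourier transform of the limit density, in the probabilistic normalization. -/
def densChar (g : ℝ → ℝ) (t : ℝ) : ℂ := ∫ u : ℝ, Complex.exp (t * u * Complex.I) * (g u : ℂ)

lemma StableLimit.integral_eq_one [IsProbabilityMeasure F] (hg : StableLimit F ℓ g) :
    ∫ u, g u = 1 := by
  have h := hg (BoundedContinuousFunction.const ℝ 1)
  have e : ∀ n : ℕ, ∫ x, (BoundedContinuousFunction.const ℝ (1:ℝ)) x
      ∂((convPow F n).map fun y => y / linv ℓ (n : ℝ)) = 1 := fun n => by
    have : IsProbabilityMeasure ((convPow F n).map fun y => y / linv ℓ (n : ℝ)) :=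
      Measure.isProbabilityMeasure_map (by fun_prop)
    simp
  simp_rw [e] at h
  have := tendsto_nhds_unique h tendsto_const_nhds
  simpa using this

lemma StableLimit.integrable [IsProbabilityMeasure F] (hg : StableLimit F ℓ g) :
    Integrable g := by
  by_contra h
  have := hg.integral_eq_one
  rw [integral_undef h] at this
  norm_num at this

lemma integrable_exp_mul_dens (hg : Integrable g) (t : ℝ) :
    Integrable fun u : ℝ => Complex.exp (t * u * Complex.I) * (g u : ℂ) := by
  refine hg.ofReal.bdd_mul (c := 1) (Continuous.aestronglyMeasurable (by fun_prop))
    (ae_of_all _ fun u => ?_)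
  rw [← Complex.ofReal_mul, Complex.norm_exp_ofReal_mul_I]

lemma continuous_densChar (hg : Integrable g) : Continuous (densChar g) := by
  refine continuous_of_dominated (bound := fun u => ‖g u‖)
    (fun t => (integrable_exp_mul_dens hg t).aestronglyMeasurable)
    (fun t => ae_of_all _ fun u => ?_) hg.norm (ae_of_all _ fun u => by fun_prop)
  rw [norm_mul, ← Complex.ofReal_mul, Complex.norm_exp_ofReal_mul_I, one_mul, Complex.norm_real]

lemma StableLimit.tendsto_charFun [IsProbabilityMeasure F] (hg : StableLimit F ℓ g) (t : ℝ) :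
    Tendsto (fun n : ℕ => charFun F (t / linv ℓ n) ^ n) atTop (𝓝 (densChar g t)) := by
  let fc : BoundedContinuousFunction ℝ ℝ := BoundedContinuousFunction.ofNormedAddCommGroup
    (fun u => cos (t * u)) (by fun_prop) 1 fun u => Real.abs_cos_le_one _
  let fs : BoundedContinuousFunction ℝ ℝ := BoundedContinuousFunction.ofNormedAddCommGroup
    (fun u => sin (t * u)) (by fun_prop) 1 fun u => Real.abs_sin_le_one _
  have hc := (Complex.continuous_ofReal.tendsto _).comp (hg fc)
  have hs := (Complex.continuous_ofReal.tendsto _).comp (hg fs)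
  have hsum := hc.add (hs.mul_const Complex.I)
  have hexp : ∀ u : ℝ, Complex.exp (t * u * Complex.I)
      = (fc u : ℂ) + (fs u : ℂ) * Complex.I := fun u => by
    rw [← Complex.ofReal_mul, Complex.exp_mul_I, ← Complex.ofReal_cos, ← Complex.ofReal_sin]
    rfl
  have elim : ((∫ x, fc x * g x : ℝ) : ℂ) + ((∫ x, fs x * g x : ℝ) : ℂ) * Complex.I
      = densChar g t := by
    have hgi := hg.integrable
    have i1 : Integrable fun x => ((fc x * g x : ℝ) : ℂ) :=
      (hgi.bdd_mul (c := 1) (fc.continuous.aestronglyMeasurable)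
        (ae_of_all _ fun u => Real.abs_cos_le_one _)).ofReal
    have i2 : Integrable fun x => ((fs x * g x : ℝ) : ℂ) :=
      (hgi.bdd_mul (c := 1) (fs.continuous.aestronglyMeasurable)
        (ae_of_all _ fun u => Real.abs_sin_le_one _)).ofReal
    rw [← integral_complex_ofReal, ← integral_complex_ofReal, ← integral_mul_const,
      ← integral_add i1 (i2.mul_const _)]
    unfold densChar
    refine integral_congr_ae (ae_of_all _ fun u => ?_)
    simp only [hexp]
    push_cast
    ring
  rw [elim] at hsum
  refine hsum.congr fun n => ?_
  simp only [Function.comp]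
  have hprob : IsProbabilityMeasure ((convPow F n).map fun y => y / linv ℓ (n : ℝ)) :=
    Measure.isProbabilityMeasure_map (by fun_prop)
  have e1 : charFun ((convPow F n).map fun y => y / linv ℓ (n : ℝ)) t
      = charFun F (t / linv ℓ n) ^ n := by
    have := charFun_map_mul (μ := convPow F n) (linv ℓ (n : ℝ))⁻¹ t
    simp_rw [inv_mul_eq_div] at this
    rw [this, charFun_convPow]
  rw [← e1, charFun_apply_real]
  rw [← integral_complex_ofReal, ← integral_complex_ofReal, ← integral_mul_const, ← integral_add]
  · exact integral_congr_ae (ae_of_all _ fun u => (hexp u).symm)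
  · exact (fc.integrable _).ofReal
  · exact ((fs.integrable _).ofReal).mul_const _

lemma densChar_zero (hg1 : ∫ u, g u = 1) : densChar g 0 = 1 := by
  unfold densChar
  simp only [Complex.ofReal_zero, zero_mul, Complex.exp_zero, one_mul]
  rw [integral_complex_ofReal, hg1, Complex.ofReal_one]

lemma CharAsymp.eventually_norm_charFun_lt_one (hF : CharAsymp F α C) :
    ∀ᶠ x : ℝ in atTop, ‖charFun F (1 / x)‖ < 1 := by
  have h1 : Tendsto (fun x : ℝ => 2 * ((1 - charFun F (1 / x)) / (rtail F x : ℂ)).re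
      - rtail F x * ‖(1 - charFun F (1 / x)) / (rtail F x : ℂ)‖ ^ 2) atTop
      (𝓝 (2 * C.re - 0 * ‖C‖ ^ 2)) :=
    (((Complex.continuous_re.tendsto C).comp hF.tendsto).const_mul 2).sub
      ((hF.tail.tendsto_zero hF.pos).mul (hF.tendsto.norm.pow 2))
  have h2 : (0:ℝ) < 2 * C.re - 0 * ‖C‖ ^ 2 := by linarith [hF.re_pos]
  filter_upwards [h1.eventually (lt_mem_nhds h2)] with x hx
  have hG := hF.tail.pos x
  rw [Complex.div_ofReal_re, norm_div, Complex.norm_real, Real.norm_of_nonneg hG.le, div_pow] at hx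
  have h3 : 0 < 2 * (1 - charFun F (1 / x)).re - ‖1 - charFun F (1 / x)‖ ^ 2 := by
    have := mul_pos hx hG
    field_simp at this
    linarith
  rw [Complex.sq_norm, Complex.normSq_apply] at h3
  simp only [Complex.sub_re, Complex.one_re, Complex.sub_im, Complex.one_im] at h3
  have h4 : ‖charFun F (1 / x)‖ ^ 2 < 1 := by
    rw [Complex.sq_norm, Complex.normSq_apply]; linarith
  nlinarith [norm_nonneg (charFun F (1 / x))]

lemma CharAsymp.tendsto_linv (hF : CharAsymp F α C) [IsProbabilityMeasure F]
    (hRT : RightTail F ℓ) (hg : StableLimit F ℓ g) :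
    Tendsto (fun n : ℕ => linv ℓ n) atTop atTop := by
  have hℓ := tendsto_norming_fun hF.tail hF.pos hRT
  have hmono : Monotone fun n : ℕ => linv ℓ n := fun m n hmn =>
    linv_mono hℓ (Nat.cast_le.2 hmn)
  rcases tendsto_atTop_of_monotone hmono with h | ⟨a, ha⟩
  · exact h
  exfalso
  have ha1 : 1 ≤ a := ge_of_tendsto' ha fun n => one_le_linv hℓ n
  have hzero : ∀ t : ℝ, ‖charFun F (t / a)‖ < 1 → densChar g t = 0 := by
    intro t ht
    obtain ⟨r, hr, hr1⟩ := exists_between ht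
    have hr0 : 0 ≤ r := (norm_nonneg _).trans hr.le
    have h1 : Tendsto (fun n : ℕ => ‖charFun F (t / linv ℓ n)‖) atTop (𝓝 ‖charFun F (t / a)‖) :=
      ((continuous_charFun.tendsto _).comp
        (tendsto_const_nhds.div ha (by linarith))).norm
    refine tendsto_nhds_unique (hg.tendsto_charFun t) (squeeze_zero_norm' ?_
      (tendsto_pow_atTop_nhds_zero_of_lt_one hr0 hr1))
    filter_upwards [h1.eventually (gt_mem_nhds hr)] with n hn
    rw [norm_pow]
    gcongr
  have hlim : Tendsto (fun x : ℝ => densChar g (a / x)) atTop (𝓝 1) := by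
    rw [← densChar_zero hg.integral_eq_one]
    exact ((continuous_densChar hg.integrable).tendsto 0).comp
      (tendsto_const_nhds.div_atTop tendsto_id)
  have hlim0 : Tendsto (fun x : ℝ => densChar g (a / x)) atTop (𝓝 0) := by
    refine tendsto_const_nhds.congr' ?_
    filter_upwards [hF.eventually_norm_charFun_lt_one] with x hx
    refine (hzero _ ?_).symm
    rwa [div_right_comm, div_self (by linarith)]
  exact zero_ne_one (tendsto_nhds_unique hlim0 hlim)

/-- The limit law has characteristic function `exp(-ψ)`. -/
lemma CharAsymp.densChar_eq (hF : CharAsymp F α C) [IsProbabilityMeasure F]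
    (hRT : RightTail F ℓ) (hg : StableLimit F ℓ g) (t : ℝ) :
    densChar g t = Complex.exp (-stableExp α C t) := by
  rcases eq_or_ne t 0 with rfl | ht
  · rw [densChar_zero hg.integral_eq_one]
    simp [stableExp, zero_rpow hF.pos.ne']
  have ha := hF.tendsto_linv hRT hg
  have h1 := tendsto_mul_rtail_linv hF.tail hF.pos hF.lt_one hRT ha
  have h2 := (hF.tendsto_ratio t ht).comp ha
  have h3 := (((Complex.continuous_ofReal.tendsto _).comp h1).mul h2).neg
  rw [Complex.ofReal_one, one_mul] at h3
  refine tendsto_nhds_unique (hg.tendsto_charFun t) ?_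
  have h4 := Complex.tendsto_one_add_pow_exp_of_tendsto
    (g := fun n : ℕ => charFun F (t / linv ℓ n) - 1) (t := -stableExp α C t) (h3.congr fun n => ?_)
  · simpa using h4
  · simp only [Function.comp]
    have := Complex.ofReal_ne_zero.2 (hF.tail.pos (linv ℓ n)).ne'
    push_cast
    field_simp
    ring

end Limit

open scoped FourierTransform SchwartzMap in
/-- The Fourier inversion theorem, in its almost everywhere form. -/
lemma ae_fourierInv_fourier_eq {g : ℝ → ℂ} (hg : Integrable g) (hG : Integrable (𝓕 g)) :
    ∀ᵐ u : ℝ, (𝓕⁻ (𝓕 g)) u = g u := by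
  have hadj : ∀ {k l : ℝ → ℂ}, Integrable k → Integrable l →
      ∫ ξ, 𝓕 k ξ * l ξ = ∫ x, k x * 𝓕 l x := fun hk hl => by
    simpa using! VectorFourier.integral_fourierIntegral_smul_eq_flip (L := innerₗ ℝ)
      continuous_fourierChar continuous_inner hk hl
  have hinv : Continuous (𝓕⁻ (𝓕 g)) := by
    rw [fourierInv_eq_fourier_comp_neg]
    exact VectorFourier.fourierIntegral_continuous continuous_fourierChar
      (by exact continuous_inner) hG.comp_neg
  refine ae_eq_of_integral_contDiff_smul_eq hinv.locallyIntegrable hg.locallyIntegrable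
    fun f hf hfc => ?_
  have hfc' : HasCompactSupport fun u => (f u : ℂ) := hfc.comp_left Complex.ofReal_zero
  let S : 𝓢(ℝ, ℂ) := hfc'.toSchwartzMap (Complex.ofRealCLM.contDiff.comp hf)
  have hS : ∀ u, S u = (f u : ℂ) := fun u => rfl
  have hk : Integrable (𝓕⁻ (S : ℝ → ℂ)) := by
    rw [← SchwartzMap.fourierInv_coe]; exact (𝓕⁻ S).integrable
  have h1 : 𝓕 (𝓕⁻ (S : ℝ → ℂ)) = S := by
    rw [← SchwartzMap.fourierInv_coe, ← SchwartzMap.fourier_coe]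
    exact congrArg _ (FourierTransform.fourier_fourierInv_eq S)
  simp_rw [Complex.real_smul, ← hS]
  have h2 : ∫ u, S u * g u = ∫ v, (𝓕⁻ (S : ℝ → ℂ)) v * 𝓕 g v := by
    rw [← hadj hk hg, h1]
  rw [h2, fourierInv_eq_fourier_comp_neg (S : ℝ → ℂ), hadj S.integrable.comp_neg hG,
    ← integral_neg_eq_self]
  refine integral_congr_ae (ae_of_all _ fun u => ?_)
  simp only [neg_neg, fourierInv_eq_fourier_neg]

open scoped FourierTransform in
lemma ae_integral_exp_mul_densChar {g : ℝ → ℝ} (hg : Integrable g)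
    (hG : Integrable (densChar g)) :
    ∀ᵐ u : ℝ, ∫ v : ℝ, Complex.exp (-(v * u * Complex.I)) * densChar g v
      = ((2 * π * g u : ℝ) : ℂ) := by
  have h2 : (2 * π) ≠ 0 := by positivity
  have e1 : 𝓕 (fun u => (g u : ℂ)) = fun ξ => densChar g (-(2 * π) * ξ) := by
    ext ξ
    rw [fourier_real_eq_integral_exp_smul]
    refine integral_congr_ae (ae_of_all _ fun u => ?_)
    simp only [smul_eq_mul]
    congr 2
    push_cast
    ring
  have hG' : Integrable (𝓕 (fun u => (g u : ℂ))) := by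
    rw [e1]; exact hG.comp_mul_left' (neg_ne_zero.2 h2)
  filter_upwards [ae_fourierInv_fourier_eq hg.ofReal hG'] with u hu
  have e2 : 𝓕⁻ (𝓕 (fun u => (g u : ℂ))) u
      = ∫ ξ : ℝ, (fun v : ℝ => Complex.exp (-(v * u * Complex.I)) * densChar g v)
        (-(2 * π) * ξ) := by
    rw [fourierInv_eq', e1]
    refine integral_congr_ae (ae_of_all _ fun ξ => ?_)
    simp only [smul_eq_mul, RCLike.inner_apply, conj_trivial]
    congr 2
    push_cast
    ring
  have hu' := e2.symm.trans hu
  rw [Measure.integral_comp_mul_left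
    (fun v : ℝ => Complex.exp (-(v * u * Complex.I)) * densChar g v)] at hu'
  rw [Complex.ofReal_mul, show (g u : ℂ) = _ from hu'.symm, inv_neg, abs_neg, abs_of_pos (by positivity), Complex.real_smul,
    ← mul_assoc, ← Complex.ofReal_mul, mul_inv_cancel₀ h2, Complex.ofReal_one, one_mul]

lemma integrable_exp_neg_stableExp {α : ℝ} (hα : 0 < α) {C : ℂ} (hC : 0 < C.re) {s : ℝ}
    (hs : 0 < s) : Integrable fun t : ℝ => Complex.exp (-(s * stableExp α C t)) := by
  have h1 := integrableOn_rpow_mul_exp_neg_mul_rpow (p := α) (s := 0) (b := s * C.re)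
    (by norm_num) hα (by positivity)
  refine (integrable_comp_abs h1).mono' ?_ (ae_of_all _ fun t => ?_)
  · have := continuous_stableExp hα C
    exact Continuous.aestronglyMeasurable (by fun_prop)
  · rw [Complex.norm_exp, Complex.neg_re, Complex.re_ofReal_mul, stableExp_re, rpow_zero, one_mul]
    apply le_of_eq
    congr 1
    ring

lemma norm_exp_sub_exp_le_mul {a b : ℂ} {r : ℝ} (ha : a.re ≤ r) (hb : b.re ≤ r) :
    ‖Complex.exp a - Complex.exp b‖ ≤ Real.exp r * ‖a - b‖ := by
  refine Convex.norm_image_sub_le_of_norm_hasDerivWithin_le (f' := Complex.exp)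
    (s := {z : ℂ | z.re ≤ r}) (fun z _ => (Complex.hasDerivAt_exp z).hasDerivWithinAt)
    (fun z hz => ?_) (convex_halfSpace_re_le r) hb ha
  rw [Complex.norm_exp]
  exact Real.exp_le_exp.2 hz

lemma integrableOn_exp_neg_mul {a : ℂ} (ha : 0 < a.re) :
    IntegrableOn (fun s : ℝ => Complex.exp (-(s * a))) (Ioi 0) := by
  refine (integrableOn_exp_mul_complex_Ioi (a := -a) (by simpa using ha) 0).congr_fun
    (fun s _ => ?_) measurableSet_Ioi
  simp only
  congr 1; ring

lemma integral_Ioi_exp_neg_mul {a : ℂ} (ha : 0 < a.re) :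
    ∫ s in Ioi (0:ℝ), Complex.exp (-(s * a)) = a⁻¹ := by
  have := integral_exp_mul_complex_Ioi (a := -a) (by simpa using ha) 0
  rw [Complex.ofReal_zero, mul_zero, Complex.exp_zero, neg_div_neg_eq, one_div] at this
  rw [← this]
  refine setIntegral_congr_fun measurableSet_Ioi fun s _ => ?_
  congr 1; ring

lemma integral_norm_exp_neg_mul {a : ℂ} (ha : 0 < a.re) :
    ∫ s in Ioi (0:ℝ), ‖Complex.exp (-(s * a))‖ = (a.re)⁻¹ := by
  have := integral_exp_mul_Ioi (a := -a.re) (by simpa using ha) 0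
  rw [mul_zero, Real.exp_zero, neg_div_neg_eq, one_div] at this
  rw [← this]
  refine setIntegral_congr_fun measurableSet_Ioi fun s _ => ?_
  simp only [Complex.norm_exp, Complex.neg_re, Complex.re_ofReal_mul]
  congr 1; ring

lemma integral_norm_exp_sub_exp_le {a b : ℂ} {m : ℝ} (hm : 0 < m) (ha : m ≤ a.re)
    (hb : m ≤ b.re) :
    ∫ s in Ioi (0:ℝ), ‖Complex.exp (-(s * a)) - Complex.exp (-(s * b))‖
      ≤ ‖a - b‖ * m⁻¹ ^ 2 := by
  have h1 : ∫ t in Ioi (0:ℝ), t ^ ((2:ℝ) - 1) * Real.exp (-(m * t)) = m⁻¹ ^ 2 := by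
    rw [Real.integral_rpow_mul_exp_neg_mul_Ioi two_pos hm, Real.Gamma_two, mul_one, one_div]
    norm_cast
  have h2 : IntegrableOn (fun t : ℝ => t ^ ((2:ℝ) - 1) * Real.exp (-(m * t))) (Ioi 0) := by
    refine Integrable.of_integral_ne_zero ?_
    rw [h1]; positivity
  rw [← h1, ← integral_const_mul]
  refine setIntegral_mono_on
    ((integrableOn_exp_neg_mul (hm.trans_le ha)).sub
      (integrableOn_exp_neg_mul (hm.trans_le hb))).norm (h2.const_mul _) measurableSet_Ioi
    fun s hs => ?_
  have hs : 0 < s := hs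
  have h3 := norm_exp_sub_exp_le_mul (a := -(s * a)) (b := -(s * b)) (r := -(m * s))
    (by rw [Complex.neg_re, Complex.re_ofReal_mul]; nlinarith)
    (by rw [Complex.neg_re, Complex.re_ofReal_mul]; nlinarith)
  refine h3.trans (le_of_eq ?_)
  rw [show -((s:ℂ) * a) - -(s * b) = -(s * (a - b)) by ring, norm_neg, norm_mul,
    Complex.norm_real, Real.norm_of_nonneg hs.le, show (2:ℝ) - 1 = 1 by norm_num, rpow_one]
  ring

lemma abs_rpow_sub_rpow_le {α a b : ℝ} (hα : 0 ≤ α) (hα1 : α ≤ 1) (ha : 0 ≤ a) (hb : 0 ≤ b) :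
    |a ^ α - b ^ α| ≤ |a - b| ^ α := by
  wlog h : b ≤ a generalizing a b
  · rw [abs_sub_comm, abs_sub_comm a b]
    exact this hb ha (le_of_not_ge h)
  rw [abs_of_nonneg (sub_nonneg.2 (rpow_le_rpow hb h hα)), abs_of_nonneg (sub_nonneg.2 h)]
  have := Real.rpow_add_le_add_rpow (sub_nonneg.2 h) hb hα hα1
  rw [sub_add_cancel] at this
  linarith

lemma norm_stableExp_sub_le {α : ℝ} (hα : 0 ≤ α) (hα1 : α ≤ 1) (C : ℂ) {t : ℝ}
    (ht : π < |t|) : ‖stableExp α C t - stableExp α C (t + π)‖ ≤ π ^ α * ‖C‖ := by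
  have hs : (0 ≤ t) ↔ (0 ≤ t + π) := by
    constructor
    · intro h; linarith [Real.pi_pos]
    · intro h
      by_contra h'
      push Not at h'
      rw [abs_of_neg h'] at ht
      linarith
  unfold stableExp
  simp only [← hs]
  rw [← sub_mul, norm_mul, ← Complex.ofReal_sub, Complex.norm_real, Real.norm_eq_abs]
  have h1 := abs_rpow_sub_rpow_le hα hα1 (abs_nonneg t) (abs_nonneg (t + π))
  have h2 : |(|t| - |t + π|)| ≤ π := by
    have := abs_abs_sub_abs_le_abs_sub t (t + π)
    rwa [show t - (t + π) = -π by ring, abs_neg, abs_of_pos Real.pi_pos] at this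
  have h3 : |(|t| ^ α - |t + π| ^ α)| ≤ π ^ α :=
    h1.trans (rpow_le_rpow (abs_nonneg _) h2 hα)
  split_ifs
  · gcongr
  · rw [RCLike.norm_conj]; gcongr


namespace CharAsymp

variable {F : Measure ℝ} {α : ℝ} {C : ℂ}

/-- Joint integrability behind the Laplace representation of `limConst`. -/
lemma integrable_prod_stableExp (hF : CharAsymp F α C) :
    Integrable (fun p : ℝ × ℝ => Complex.exp (-(p.2 * Complex.I))
      * (Complex.exp (-(p.1 * stableExp α C p.2))
        - Complex.exp (-(p.1 * stableExp α C (p.2 + π)))))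
      ((volume.restrict (Ioi 0)).prod volume) := by
  have hψ := continuous_stableExp hF.pos C
  have hpi := Real.pi_pos
  have hre : ∀ {t : ℝ}, t ≠ 0 → 0 < (stableExp α C t).re := fun ht => by
    rw [stableExp_re]; exact mul_pos (rpow_pos_of_pos (abs_pos.2 ht) _) hF.re_pos
  have hmeas : AEStronglyMeasurable (fun p : ℝ × ℝ => Complex.exp (-(p.2 * Complex.I))
      * (Complex.exp (-(p.1 * stableExp α C p.2))
        - Complex.exp (-(p.1 * stableExp α C (p.2 + π)))))
      ((volume.restrict (Ioi (0:ℝ))).prod volume) :=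
    Continuous.aestronglyMeasurable (by fun_prop)
  have hae : ∀ᵐ t : ℝ, t ≠ 0 ∧ t + π ≠ 0 := by
    have h0 : ∀ᵐ t : ℝ, t ≠ 0 := compl_mem_ae_iff.2 (measure_singleton (0:ℝ))
    have h1 : ∀ᵐ t : ℝ, t ≠ -π := compl_mem_ae_iff.2 (measure_singleton (-π))
    filter_upwards [h0, h1] with t ht ht'
    exact ⟨ht, fun h => ht' (eq_neg_of_add_eq_zero_left h)⟩
  rw [integrable_prod_iff' hmeas]
  constructor
  · filter_upwards [hae] with t ht
    exact ((integrableOn_exp_neg_mul (hre ht.1)).sub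
      (integrableOn_exp_neg_mul (hre ht.2))).const_mul _
  · have h2α : 1 < 2 * α := by linarith [hF.half_lt]
    have hb : Integrable fun t : ℝ => (C.re)⁻¹ * (nearPow (3 * π) α t + nearPow (3 * π) α (t + π))
        + π ^ α * ‖C‖ * ((C.re)⁻¹ * 2 ^ α) ^ 2 * farPow (2 * π) (2 * α) t :=
      (((integrable_nearPow hF.lt_one).add
        ((integrable_nearPow hF.lt_one).comp_add_right π)).const_mul _).add
        ((integrable_farPow (by positivity) h2α).const_mul _)
    refine hb.mono' hmeas.norm.prod_swap.integral_prod_right' ?_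
    filter_upwards [hae] with t ht
    simp only [norm_mul, norm_exp_neg_mul_I, one_mul]
    rw [Real.norm_of_nonneg (integral_nonneg fun _ => norm_nonneg _)]
    have hC0 := hF.re_pos
    have n1 := nearPow_nonneg (3 * π) α t
    have n2 := nearPow_nonneg (3 * π) α (t + π)
    have n3 := farPow_nonneg (2 * π) (2 * α) t
    rcases le_or_gt |t| (2 * π) with h | h
    · have h' : |t + π| ≤ 3 * π := by
        have := abs_add_le t π
        rw [abs_of_pos hpi] at this
        linarith
      have i1 := integrableOn_exp_neg_mul (hre ht.1)
      have i2 := integrableOn_exp_neg_mul (hre ht.2)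
      calc ∫ s in Ioi (0:ℝ), ‖Complex.exp (-(s * stableExp α C t))
              - Complex.exp (-(s * stableExp α C (t + π)))‖
          ≤ ∫ s in Ioi (0:ℝ), (‖Complex.exp (-(s * stableExp α C t))‖
              + ‖Complex.exp (-(s * stableExp α C (t + π)))‖) :=
            integral_mono (i1.sub i2).norm (i1.norm.add i2.norm) fun s => norm_sub_le _ _
        _ = (C.re)⁻¹ * (nearPow (3 * π) α t + nearPow (3 * π) α (t + π)) := by
            rw [integral_add i1.norm i2.norm, integral_norm_exp_neg_mul (hre ht.1),
              integral_norm_exp_neg_mul (hre ht.2), nearPow_of_le (by linarith),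
              nearPow_of_le h', stableExp_re, stableExp_re, mul_inv, mul_inv,
              rpow_neg (abs_nonneg _), rpow_neg (abs_nonneg _)]
            ring
        _ ≤ _ := le_add_of_nonneg_right (by positivity)
    · have htp : |t| / 2 ≤ |t + π| := by
        have := abs_sub_abs_le_abs_sub t (-π)
        rw [sub_neg_eq_add, abs_neg, abs_of_pos hpi] at this
        linarith
      have ht0 : 0 < |t| := by linarith
      have hm : 0 < (|t| / 2) ^ α * C.re := by positivity
      have := integral_norm_exp_sub_exp_le (a := stableExp α C t) (b := stableExp α C (t + π)) hm
        (by
          rw [stableExp_re]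
          gcongr
          · exact hF.pos.le
          · linarith)
        (by
          rw [stableExp_re]
          gcongr
          exact hF.pos.le)
      refine this.trans ?_
      have h3 : ((|t| / 2) ^ α * C.re)⁻¹ ^ 2
          = ((C.re)⁻¹ * 2 ^ α) ^ 2 * farPow (2 * π) (2 * α) t := by
        rw [farPow_of_lt h, div_rpow ht0.le two_pos.le, rpow_neg ht0.le, mul_comm 2 α,
          rpow_mul ht0.le, rpow_two]
        field_simp
      rw [h3, ← mul_assoc]
      have h4 : ‖stableExp α C t - stableExp α C (t + π)‖ ≤ π ^ α * ‖C‖ :=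
        norm_stableExp_sub_le hF.pos.le hF.lt_one.le C (by linarith)
      calc _ ≤ π ^ α * ‖C‖ * ((C.re)⁻¹ * 2 ^ α) ^ 2 * farPow (2 * π) (2 * α) t := by gcongr
        _ ≤ _ := le_add_of_nonneg_left (by positivity)

lemma limConst_eq_integral (hF : CharAsymp F α C) :
    limConst α C = ∫ s in Ioi (0:ℝ), ∫ t : ℝ,
      Complex.exp (-(t * Complex.I)) * Complex.exp (-(s * stableExp α C t)) := by
  have hre : ∀ {t : ℝ}, t ≠ 0 → 0 < (stableExp α C t).re := fun ht => by
    rw [stableExp_re]; exact mul_pos (rpow_pos_of_pos (abs_pos.2 ht) _) hF.re_pos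
  have e1 : ∀ s ∈ Ioi (0:ℝ), (∫ t : ℝ,
      Complex.exp (-(t * Complex.I)) * Complex.exp (-(s * stableExp α C t)))
      = 1 / 2 * ∫ t : ℝ, Complex.exp (-(t * Complex.I)) * (Complex.exp (-(s * stableExp α C t))
        - Complex.exp (-(s * stableExp α C (t + π)))) := fun s hs =>
    integral_exp_eq_half (integrable_exp_neg_stableExp hF.pos hF.re_pos hs)
  rw [setIntegral_congr_fun measurableSet_Ioi e1, integral_const_mul,
    integral_integral_swap hF.integrable_prod_stableExp]
  unfold limConst
  congr 1
  refine integral_congr_ae ?_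
  have h0 : ∀ᵐ t : ℝ, t ≠ 0 := compl_mem_ae_iff.2 (measure_singleton (0:ℝ))
  have h1 : ∀ᵐ t : ℝ, t ≠ -π := compl_mem_ae_iff.2 (measure_singleton (-π))
  filter_upwards [h0, h1] with t ht ht'
  have ht'' : t + π ≠ 0 := fun h => ht' (eq_neg_of_add_eq_zero_left h)
  rw [integral_const_mul, integral_sub (integrableOn_exp_neg_mul (hre ht))
    (integrableOn_exp_neg_mul (hre ht'')), integral_Ioi_exp_neg_mul (hre ht),
    integral_Ioi_exp_neg_mul (hre ht'')]

/-- The limiting constant in terms of the stable density. -/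
lemma limConst_eq (hF : CharAsymp F α C) [IsProbabilityMeasure F] {ℓ g : ℝ → ℝ}
    (hRT : RightTail F ℓ) (hg : StableLimit F ℓ g) :
    limConst α C = ((2 * π * (α * ∫ t in Ioi (0:ℝ), t ^ (-α) * g t) : ℝ) : ℂ) := by
  have hα := hF.pos
  have hdens : densChar g = fun t => Complex.exp (-stableExp α C t) :=
    funext fun t => hF.densChar_eq hRT hg t
  have hint : Integrable (densChar g) := by
    rw [hdens]
    simpa using integrable_exp_neg_stableExp hF.pos hF.re_pos one_pos
  have hJ := ae_integral_exp_mul_densChar hg.integrable hint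
  set J : ℝ → ℂ := fun u => ∫ v : ℝ, Complex.exp (-(v * u * Complex.I)) * densChar g v with hJdef
  have e1 : ∀ s ∈ Ioi (0:ℝ), (∫ t : ℝ,
      Complex.exp (-(t * Complex.I)) * Complex.exp (-(s * stableExp α C t)))
      = ((s ^ (-α⁻¹) : ℝ) : ℂ) * J (s ^ (-α⁻¹)) := by
    intro s hs
    have hs : 0 < s := hs
    have hr : 0 < s ^ (-α⁻¹) := rpow_pos_of_pos hs _
    have hinv : s ^ α⁻¹ * s ^ (-α⁻¹) = 1 := by
      rw [← rpow_add hs, add_neg_cancel, rpow_zero]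
    have hsα : (s ^ α⁻¹) ^ α = s := by rw [← rpow_mul hs.le, inv_mul_cancel₀ hα.ne', rpow_one]
    have e2 := Measure.integral_comp_mul_left
      (fun v : ℝ => Complex.exp (-(v * (s ^ (-α⁻¹) : ℝ) * Complex.I)) * densChar g v) (s ^ α⁻¹)
    rw [← rpow_neg hs.le, abs_of_pos hr, Complex.real_smul] at e2
    rw [hJdef, ← e2]
    refine integral_congr_ae (ae_of_all _ fun t => ?_)
    simp only [hdens]
    rw [stableExp_mul C (rpow_pos_of_pos hs _), hsα, ← Complex.ofReal_mul,
      show s ^ α⁻¹ * t * s ^ (-α⁻¹) = t by rw [mul_right_comm, hinv, one_mul]]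
  rw [hF.limConst_eq_integral, setIntegral_congr_fun measurableSet_Ioi e1,
    ← integral_comp_rpow_Ioi _ (neg_ne_zero.2 hα.ne')]
  rw [← integral_const_mul, ← integral_const_mul, ← integral_complex_ofReal]
  refine integral_congr_ae ?_
  filter_upwards [ae_restrict_of_ae hJ, ae_restrict_mem measurableSet_Ioi] with x hx hx0
  have hx0 : 0 < x := hx0
  have hxx : (x ^ (-α)) ^ (-α⁻¹) = x := by
    rw [← rpow_mul hx0.le, neg_mul_neg, mul_inv_cancel₀ hα.ne', rpow_one]
  have hx1 : x ^ (-α - 1) * x = x ^ (-α) := by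
    rw [← rpow_add_one hx0.ne', sub_add_cancel]
  rw [hxx, show J x = _ from hx, abs_neg, abs_of_pos hα, Complex.real_smul, ← hx1]
  push_cast
  ring

end CharAsymp

/-- A continuous function supported in `[-b, b]`, the only zero of `1 - charFun F` in a slightly
larger interval `[-B, B]` being the origin. -/
structure IsSymbol (F : Measure ℝ) (q : ℝ → ℂ) : Prop where
  cont : Continuous q
  exists_supp : ∃ b B : ℝ, b < B ∧ 0 < B ∧ (∀ θ, b < |θ| → q θ = 0) ∧
    ∀ θ : ℝ, 0 < |θ| → |θ| ≤ B → charFun F θ ≠ 1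

/-- The kernel with symbol `q`. -/
def kern (q : ℝ → ℂ) (y : ℝ) : ℂ := ∫ θ : ℝ, q θ * Complex.exp (θ * y * Complex.I)

lemma continuous_kern_of_integrable {q : ℝ → ℂ} (hqc : Continuous q) (hq : Integrable q) :
    Continuous (kern q) := by
  refine continuous_of_dominated (bound := fun θ => ‖q θ‖)
    (fun y => Continuous.aestronglyMeasurable (by fun_prop))
    (fun y => ae_of_all _ fun θ => ?_) hq.norm (ae_of_all _ fun θ => by fun_prop)
  rw [norm_mul, ← Complex.ofReal_mul, Complex.norm_exp_ofReal_mul_I, mul_one]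

namespace IsSymbol

variable {F : Measure ℝ} {q : ℝ → ℂ}

lemma hasCompactSupport (hq : IsSymbol F q) : HasCompactSupport q := by
  obtain ⟨b, B, -, -, h, -⟩ := hq.exists_supp
  refine HasCompactSupport.intro (isCompact_Icc (a := -b) (b := b)) fun θ hθ => h θ ?_
  by_contra h'
  exact hθ (abs_le.1 (not_lt.1 h'))

lemma integrable (hq : IsSymbol F q) : Integrable q :=
  hq.cont.integrable_of_hasCompactSupport hq.hasCompactSupport

lemma exists_bound (hq : IsSymbol F q) : ∃ M, ∀ θ, ‖q θ‖ ≤ M :=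
  hq.hasCompactSupport.exists_bound_of_continuous hq.cont

lemma norm_exp_neg (θ x : ℝ) : ‖Complex.exp (-(θ * x * Complex.I))‖ = 1 := by
  rw [← Complex.ofReal_mul]; exact norm_exp_neg_mul_I _

lemma charFun_ne_one_ae (hq : IsSymbol F q) :
    ∀ᵐ θ : ℝ, q θ = 0 ∨ charFun F θ ≠ 1 := by
  obtain ⟨b, B, hbB, -, h, h'⟩ := hq.exists_supp
  have h0 : ∀ᵐ t : ℝ, t ≠ 0 := compl_mem_ae_iff.2 (measure_singleton (0:ℝ))
  filter_upwards [h0] with θ hθ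
  rcases lt_or_ge b |θ| with hb | hb
  · exact Or.inl (h θ hb)
  · exact Or.inr (h' θ (abs_pos.2 hθ) (hb.trans hbB.le))

lemma continuous_kern (hq : IsSymbol F q) : Continuous (kern q) :=
  continuous_kern_of_integrable hq.cont hq.integrable

variable {α : ℝ} {C : ℂ} [IsProbabilityMeasure F]

lemma integrable_resolvent (hF : CharAsymp F α C) (hq : IsSymbol F q) :
    Integrable fun θ : ℝ => q θ * (1 - charFun F θ)⁻¹ := by
  obtain ⟨b, B, hbB, hB, h, h'⟩ := hq.exists_supp
  obtain ⟨M, hM⟩ := hq.exists_bound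
  have h1 := hF.integrable_resc hB h' hq.cont.measurable hM
    (fun θ hθ => h θ (hbB.trans hθ)) one_pos
  have hG : (rtail F 1 : ℂ) ≠ 0 := by exact_mod_cast (hF.tail.pos 1).ne'
  refine (h1.const_mul (rtail F 1 : ℂ)⁻¹).congr (ae_of_all _ fun θ => ?_)
  simp only [CharAsymp.resc, div_one]
  field_simp

lemma measurable_one_sub_mul_charFun (F : Measure ℝ) [IsProbabilityMeasure F] (r : ℂ) :
    Measurable fun θ : ℝ => (1 - r * charFun F θ)⁻¹ :=
  ((continuous_const.sub (continuous_const.mul continuous_charFun)).measurable).inv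

lemma norm_resolvent_le {r : ℝ} (hr0 : 0 ≤ r) (hr : r < 1) {z : ℂ} (hz : ‖z‖ ≤ 1) (hz1 : z ≠ 1) :
    ‖(1 - r * z)⁻¹‖ ≤ 2 * ‖(1 - z)⁻¹‖ := by
  have hn : ‖(r : ℂ) * z‖ ≤ r := by
    rw [norm_mul, Complex.norm_real, Real.norm_of_nonneg hr0]
    exact mul_le_of_le_one_right hr0 hz
  have h1 : 1 - r ≤ ‖1 - r * z‖ := by
    have := norm_sub_norm_le (1:ℂ) (r * z)
    rw [norm_one] at this
    linarith
  have h2 : ‖1 - z‖ ≤ 2 * ‖1 - r * z‖ := by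
    calc ‖1 - z‖ = ‖(1 - r * z) - ((1 - r : ℝ) : ℂ) * z‖ := by push_cast; ring_nf
      _ ≤ ‖1 - r * z‖ + ‖((1 - r : ℝ) : ℂ) * z‖ := norm_sub_le _ _
      _ ≤ ‖1 - r * z‖ + (1 - r) := by
          gcongr
          rw [norm_mul, Complex.norm_real, Real.norm_of_nonneg (by linarith)]
          exact mul_le_of_le_one_right (by linarith) hz
      _ ≤ _ := by linarith
  have h3 : 0 < ‖1 - z‖ := norm_pos_iff.2 (sub_ne_zero.2 hz1.symm)
  rw [norm_inv, norm_inv, ← div_eq_mul_inv, inv_le_comm₀ (by linarith) (by positivity), inv_div]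
  linarith

lemma norm_symbol_mul_resolvent_le (hq : IsSymbol F q) (x : ℝ) {r : ℝ} (hr0 : 0 ≤ r)
    (hr : r < 1) : ∀ᵐ θ : ℝ,
      ‖q θ * Complex.exp (-(θ * x * Complex.I)) * (1 - r * charFun F θ)⁻¹‖
        ≤ 2 * ‖q θ * (1 - charFun F θ)⁻¹‖ := by
  filter_upwards [hq.charFun_ne_one_ae] with θ hθ
  rcases hθ with hθ | hθ
  · simp [hθ]
  rw [norm_mul, norm_mul, norm_exp_neg, mul_one, norm_mul, mul_left_comm]
  exact mul_le_mul_of_nonneg_left (norm_resolvent_le hr0 hr (norm_charFun_le_one _) hθ)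
    (norm_nonneg _)

lemma tendsto_integral_resolvent (hF : CharAsymp F α C) (hq : IsSymbol F q) (x : ℝ) :
    Tendsto (fun r : ℝ => ∫ θ : ℝ, q θ * Complex.exp (-(θ * x * Complex.I))
        * (1 - r * charFun F θ)⁻¹) (𝓝[<] 1)
      (𝓝 (∫ θ : ℝ, q θ * Complex.exp (-(θ * x * Complex.I)) * (1 - charFun F θ)⁻¹)) := by
  have hqc := hq.cont
  have hev : ∀ᶠ r : ℝ in 𝓝[<] 1, 0 ≤ r ∧ r < 1 := by
    filter_upwards [Ioo_mem_nhdsLT (zero_lt_one (α := ℝ))] with r hr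
    exact ⟨hr.1.le, hr.2⟩
  refine tendsto_integral_filter_of_dominated_convergence
    (fun θ => 2 * ‖q θ * (1 - charFun F θ)⁻¹‖) (Eventually.of_forall fun r => ?_)
    (hev.mono fun r hr => hq.norm_symbol_mul_resolvent_le x hr.1 hr.2)
    ((hq.integrable_resolvent hF).norm.const_mul 2) ?_
  · exact ((by fun_prop : Continuous fun θ : ℝ => q θ * Complex.exp (-(θ * x * Complex.I)))
      |>.measurable.mul (measurable_one_sub_mul_charFun F r)).aestronglyMeasurable
  · filter_upwards [hq.charFun_ne_one_ae] with θ hθ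
    rcases hθ with hθ | hθ
    · simp [hθ]
    have h1 : Tendsto (fun r : ℝ => 1 - (r:ℂ) * charFun F θ) (𝓝[<] 1) (𝓝 (1 - charFun F θ)) := by
      have : Continuous fun r : ℝ => 1 - (r:ℂ) * charFun F θ := by fun_prop
      simpa using (this.tendsto 1).mono_left nhdsWithin_le_nhds
    exact (h1.inv₀ (sub_ne_zero.2 hθ.symm)).const_mul _

/-- The Fourier side of the `n`-th term of the renewal series. -/
def term (F : Measure ℝ) (q : ℝ → ℂ) (x : ℝ) (n : ℕ) : ℂ :=
  ∫ θ : ℝ, q θ * Complex.exp (-(θ * x * Complex.I)) * charFun F θ ^ n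

lemma integrable_term (hq : IsSymbol F q) (x : ℝ) (n : ℕ) :
    Integrable fun θ : ℝ => q θ * Complex.exp (-(θ * x * Complex.I)) * charFun F θ ^ n := by
  have hqc := hq.cont
  have hφ : Continuous (charFun F) := continuous_charFun
  refine hq.integrable.norm.mono' (Continuous.aestronglyMeasurable (by fun_prop))
    (ae_of_all _ fun θ => ?_)
  rw [norm_mul, norm_mul, norm_exp_neg, mul_one, norm_pow]
  exact mul_le_of_le_one_right (norm_nonneg _)
    (pow_le_one₀ (norm_nonneg _) (norm_charFun_le_one _))

lemma hasSum_term_mul_pow (hq : IsSymbol F q) (x : ℝ) {r : ℝ} (hr0 : 0 ≤ r) (hr : r < 1) :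
    HasSum (fun n => term F q x n * (r:ℂ) ^ n)
      (∫ θ : ℝ, q θ * Complex.exp (-(θ * x * Complex.I)) * (1 - r * charFun F θ)⁻¹) := by
  have h := hasSum_integral_of_summable_integral_norm (μ := volume)
    (F := fun (n : ℕ) (θ : ℝ) =>
      q θ * Complex.exp (-(θ * x * Complex.I)) * charFun F θ ^ n * (r:ℂ) ^ n)
    (fun n => (hq.integrable_term x n).mul_const _) ?_
  · convert! h using 1
    · ext n
      rw [term, integral_mul_const]
    · refine integral_congr_ae (ae_of_all _ fun θ => ?_)
      simp_rw [mul_assoc (q θ * _), ← mul_pow]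
      rw [tsum_mul_left, tsum_geometric_of_norm_lt_one, mul_comm (r:ℂ)]
      rw [norm_mul, Complex.norm_real, Real.norm_of_nonneg hr0]
      exact (mul_le_of_le_one_left hr0 (norm_charFun_le_one _)).trans_lt hr
  · refine Summable.of_nonneg_of_le (fun n => integral_nonneg fun _ => norm_nonneg _)
      (fun n => ?_) ((summable_geometric_of_lt_one hr0 hr).mul_left (∫ θ, ‖q θ‖))
    rw [← integral_mul_const]
    refine integral_mono ((hq.integrable_term x n).mul_const _).norm
      (hq.integrable.norm.mul_const _) fun θ => ?_
    simp only
    rw [norm_mul, norm_mul, norm_mul, norm_exp_neg, mul_one, norm_pow, norm_pow,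
      Complex.norm_real, Real.norm_of_nonneg hr0]
    gcongr
    exact mul_le_of_le_one_right (norm_nonneg _)
      (pow_le_one₀ (norm_nonneg _) (norm_charFun_le_one _))

/-- Abel summation of the renewal series. -/
lemma hasSum_term (hF : CharAsymp F α C) (hq : IsSymbol F q) (x : ℝ)
    (hs : Summable (term F q x)) : HasSum (term F q x)
      (∫ θ : ℝ, q θ * Complex.exp (-(θ * x * Complex.I)) * (1 - charFun F θ)⁻¹) := by
  have h1 := Complex.tendsto_tsum_powerSeries_nhdsWithin_lt hs.hasSum.tendsto_sum_nat
  rw [tendsto_map'_iff] at h1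
  have h2 := (hq.tendsto_integral_resolvent hF x).congr' (f₂ := fun r : ℝ =>
    ∑' n, term F q x n * (r:ℂ) ^ n) (by
      filter_upwards [Ioo_mem_nhdsLT (zero_lt_one (α := ℝ))] with r hr
      exact (hq.hasSum_term_mul_pow x hr.1.le hr.2).tsum_eq.symm)
  rw [← tendsto_nhds_unique h1 h2]
  exact hs.hasSum

lemma summable_of_nonneg (hF : CharAsymp F α C) (hq : IsSymbol F q) (x : ℝ) {c : ℕ → ℝ}
    (hc : ∀ n, 0 ≤ c n) (hterm : ∀ n, term F q x n = c n) : Summable c := by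
  have hbound : ∀ r : ℝ, 0 ≤ r → r < 1 → ∀ N, ∑ n ∈ Finset.range N, c n * r ^ n
      ≤ ∫ θ : ℝ, 2 * ‖q θ * (1 - charFun F θ)⁻¹‖ := by
    intro r hr0 hr N
    have h1 := hq.hasSum_term_mul_pow x hr0 hr
    have e : (fun n => term F q x n * (r:ℂ) ^ n) = fun n => ((c n * r ^ n : ℝ) : ℂ) := by
      ext n; rw [hterm]; push_cast; ring
    rw [e] at h1
    have h2 := Complex.hasSum_re h1
    simp only [Complex.ofReal_re] at h2
    refine (sum_le_hasSum _ (fun n _ => mul_nonneg (hc n) (pow_nonneg hr0 n)) h2).trans ?_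
    refine (Complex.re_le_norm _).trans (norm_integral_le_of_norm_le
      ((hq.integrable_resolvent hF).norm.const_mul 2) ?_)
    exact hq.norm_symbol_mul_resolvent_le x hr0 hr
  refine summable_of_sum_range_le hc (c := ∫ θ : ℝ, 2 * ‖q θ * (1 - charFun F θ)⁻¹‖) fun N => ?_
  have hlim : Tendsto (fun r : ℝ => ∑ n ∈ Finset.range N, c n * r ^ n) (𝓝[<] 1)
      (𝓝 (∑ n ∈ Finset.range N, c n)) := by
    have : Continuous fun r : ℝ => ∑ n ∈ Finset.range N, c n * r ^ n := by fun_prop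
    simpa using (this.tendsto 1).mono_left nhdsWithin_le_nhds
  refine le_of_tendsto hlim ?_
  filter_upwards [Ioo_mem_nhdsLT (zero_lt_one (α := ℝ))] with r hr
  exact hbound r hr.1.le hr.2 N

lemma norm_kern_le (q : ℝ → ℂ) (y : ℝ) : ‖kern q y‖ ≤ ∫ θ, ‖q θ‖ := by
  refine (norm_integral_le_integral_norm _).trans (le_of_eq ?_)
  refine integral_congr_ae (ae_of_all _ fun θ => ?_)
  simp only
  rw [norm_mul, ← Complex.ofReal_mul, Complex.norm_exp_ofReal_mul_I, mul_one]

lemma integrable_kern_sub (hq : IsSymbol F q) (x : ℝ) (n : ℕ) :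
    Integrable (fun y => kern q (y - x)) (convPow F n) := by
  have := hq.continuous_kern
  exact Integrable.of_bound (Continuous.aestronglyMeasurable (by fun_prop)) _
    (ae_of_all _ fun y => norm_kern_le q _)

lemma integral_kern_sub (hq : IsSymbol F q) (x : ℝ) (n : ℕ) :
    ∫ y, kern q (y - x) ∂(convPow F n) = term F q x n := by
  have hqc := hq.cont
  unfold kern term
  rw [integral_integral_swap]
  · refine integral_congr_ae (ae_of_all _ fun θ => ?_)
    simp only
    rw [← charFun_convPow, charFun_apply_real, ← integral_const_mul]
    refine integral_congr_ae (ae_of_all _ fun y => ?_)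
    simp only
    rw [mul_assoc (q θ), ← Complex.exp_add]
    congr 2
    push_cast
    ring
  · have h1 : Integrable (fun p : ℝ × ℝ => ‖q p.2‖) ((convPow F n).prod volume) := by
      simpa using (integrable_const (1:ℝ) (μ := convPow F n)).mul_prod hq.integrable.norm
    refine h1.mono' (Continuous.aestronglyMeasurable ?_) (ae_of_all _ fun p => ?_)
    · unfold Function.uncurry; fun_prop
    · unfold Function.uncurry
      rw [norm_mul, ← Complex.ofReal_mul, Complex.norm_exp_ofReal_mul_I, mul_one]

/-- Integrability of a nonnegative kernel with respect to the renewal measure. -/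
lemma integrable_renewal_of_nonneg (hF : CharAsymp F α C) (hq : IsSymbol F q) {k : ℝ → ℝ}
    (hk : ∀ y, 0 ≤ k y) (hkern : ∀ y, kern q y = k y) (x : ℝ) :
    Integrable (fun y => k (y - x)) (renewal F) := by
  have hi : ∀ n, Integrable (fun y => k (y - x)) (convPow F n) := fun n => by
    simpa [hkern] using (hq.integrable_kern_sub x n).re
  refine integrable_sum_measure hi ?_
  simp_rw [Real.norm_of_nonneg (hk _)]
  refine hq.summable_of_nonneg hF x (fun n => integral_nonneg fun y => hk _) fun n => ?_
  rw [← hq.integral_kern_sub, ← integral_complex_ofReal]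
  simp_rw [hkern]

lemma integral_renewal (hF : CharAsymp F α C) (hq : IsSymbol F q) {x : ℝ}
    (hi : Integrable (fun y => kern q (y - x)) (renewal F)) :
    ∫ y, kern q (y - x) ∂(renewal F)
      = ∫ θ : ℝ, q θ * Complex.exp (-(θ * x * Complex.I)) * (1 - charFun F θ)⁻¹ := by
  have h := hasSum_integral_measure hi
  simp_rw [hq.integral_kern_sub] at h
  exact h.unique (hq.hasSum_term hF x h.summable)

end IsSymbol

/-- The triangular function. -/
def tri (A θ : ℝ) : ℝ := max (A - |θ|) 0

/-- The Fejér kernel, the Fourier transform of the triangular function. -/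
def fejer (A y : ℝ) : ℝ := if y = 0 then A ^ 2 else 2 * (1 - cos (A * y)) / y ^ 2

lemma continuous_tri (A : ℝ) : Continuous (tri A) := by unfold tri; fun_prop

lemma tri_zero {A : ℝ} (hA : 0 ≤ A) : tri A 0 = A := by simp [tri, hA]

lemma tri_neg (A θ : ℝ) : tri A (-θ) = tri A θ := by simp [tri]

lemma tri_of_le {A θ : ℝ} (h : A ≤ |θ|) : tri A θ = 0 := max_eq_right (by linarith)

lemma abs_tri_sub_le (A a b : ℝ) : |tri A a - tri A b| ≤ |a - b| := by
  have h1 := abs_max_sub_max_le_abs (A - |a|) (A - |b|) 0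
  have h2 := abs_abs_sub_abs_le_abs_sub b a
  rw [abs_sub_comm b a] at h2
  unfold tri
  refine h1.trans ?_
  rwa [show A - |a| - (A - |b|) = |b| - |a| by ring]

lemma hasCompactSupport_tri (A : ℝ) : HasCompactSupport (tri A) := by
  refine HasCompactSupport.intro (isCompact_Icc (a := -A) (b := A)) fun θ hθ => tri_of_le ?_
  by_contra h'
  exact hθ (abs_le.1 (not_le.1 h').le)

lemma integrable_tri (A : ℝ) : Integrable (tri A) :=
  (continuous_tri A).integrable_of_hasCompactSupport (hasCompactSupport_tri A)

lemma fejer_nonneg (A y : ℝ) : 0 ≤ fejer A y := by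
  unfold fejer
  split_ifs
  · positivity
  · have := cos_le_one (A * y)
    exact div_nonneg (by linarith) (by positivity)

lemma fejer_neg (A y : ℝ) : fejer A (-y) = fejer A y := by
  unfold fejer; simp

lemma fejer_pos {A y : ℝ} (hA : 0 < A) (hy : |y| < 2 * π / A) : 0 < fejer A y := by
  unfold fejer
  split_ifs with h
  · positivity
  · have h1 : |A * y| < 2 * π := by
      rw [abs_mul, abs_of_pos hA]; rwa [lt_div_iff₀ hA, mul_comm] at hy
    have h2 : cos (A * y) ≠ 1 := fun hc => by
      rw [cos_eq_one_iff_of_lt_of_lt (abs_lt.1 h1).1 (abs_lt.1 h1).2] at hc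
      exact (mul_ne_zero hA.ne' h) hc
    have h3 : cos (A * y) < 1 := lt_of_le_of_ne (cos_le_one _) h2
    exact div_pos (by linarith) (by positivity)

lemma integral_tri_cos {A : ℝ} (y : ℝ) :
    ∫ θ in (0:ℝ)..A, 2 * (A - θ) * cos (θ * y) = fejer A y := by
  unfold fejer
  split_ifs with h
  · subst h
    have h1 : ∀ θ ∈ uIcc 0 A, HasDerivAt (fun θ : ℝ => 2 * A * θ - θ ^ 2)
        (2 * (A - θ) * cos (θ * 0)) θ := fun θ _ => by
      have := ((hasDerivAt_id θ).const_mul (2 * A)).sub ((hasDerivAt_id θ).pow 2)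
      convert! this using 1
      simp
      ring
    rw [intervalIntegral.integral_eq_sub_of_hasDerivAt h1
      (Continuous.intervalIntegrable (by fun_prop) _ _)]
    ring
  · have h1 : ∀ θ ∈ uIcc 0 A, HasDerivAt
        (fun θ : ℝ => 2 * (A - θ) * sin (θ * y) / y - 2 * cos (θ * y) / y ^ 2)
        (2 * (A - θ) * cos (θ * y)) θ := fun θ _ => by
      have e := (hasDerivAt_id θ).mul_const y
      have := (((((hasDerivAt_id θ).const_sub A).const_mul 2).mul e.sin).div_const y).sub
        ((e.cos.const_mul 2).div_const (y ^ 2))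
      convert! this using 1
      simp
      field_simp
      ring
    rw [intervalIntegral.integral_eq_sub_of_hasDerivAt h1
      (Continuous.intervalIntegrable (by fun_prop) _ _)]
    simp
    ring

lemma kern_tri {A : ℝ} (hA : 0 ≤ A) (y : ℝ) : kern (fun θ => (tri A θ : ℂ)) y = fejer A y := by
  unfold kern
  have hi : Integrable fun θ : ℝ => (tri A θ : ℂ) * Complex.exp (θ * y * Complex.I) := by
    refine (integrable_tri A).norm.mono' ?_ (ae_of_all _ fun θ => ?_)
    · have := continuous_tri A
      exact Continuous.aestronglyMeasurable (by fun_prop)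
    · rw [norm_mul, ← Complex.ofReal_mul, Complex.norm_exp_ofReal_mul_I, mul_one,
        Complex.norm_real]
  have hneg := hi.comp_neg
  rw [← integral_add_compl (measurableSet_Ioi (a := (0:ℝ))) hi, compl_Ioi]
  have e1 := integral_comp_neg_Ioi (0:ℝ)
    (fun θ : ℝ => (tri A θ : ℂ) * Complex.exp (θ * y * Complex.I))
  rw [neg_zero] at e1
  rw [← e1, ← integral_add hi.integrableOn hneg.integrableOn]
  have e2 : ∀ θ : ℝ, (tri A θ : ℂ) * Complex.exp (θ * y * Complex.I)
      + (tri A (-θ) : ℂ) * Complex.exp ((-θ : ℝ) * y * Complex.I)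
      = ((2 * tri A θ * cos (θ * y) : ℝ) : ℂ) := fun θ => by
    rw [tri_neg]
    push_cast
    rw [Complex.cos]
    ring_nf
  simp_rw [e2]
  rw [integral_complex_ofReal, ← integral_tri_cos, intervalIntegral.integral_of_le hA]
  congr 1
  have e3 := setIntegral_eq_of_subset_of_forall_sdiff_eq_zero (μ := volume)
    (f := fun θ : ℝ => 2 * tri A θ * cos (θ * y)) measurableSet_Ioi
    (show Ioc 0 A ⊆ Ioi 0 from fun θ hθ => hθ.1) (fun θ hθ => by
      have h0 : 0 < θ := hθ.1
      have h1 : A ≤ |θ| := by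
        rw [abs_of_pos h0]
        by_contra h'
        exact hθ.2 ⟨h0, (not_le.1 h').le⟩
      rw [tri_of_le h1]; ring)
  rw [e3]
  refine setIntegral_congr_fun measurableSet_Ioc fun θ hθ => ?_
  simp only [tri]
  rw [abs_of_pos hθ.1, max_eq_left (by linarith [hθ.2])]

lemma continuous_fejer {A : ℝ} (hA : 0 ≤ A) : Continuous (fejer A) := by
  have h := continuous_kern_of_integrable (Complex.continuous_ofReal.comp (continuous_tri A))
    (integrable_tri A).ofReal
  refine (Complex.continuous_re.comp h).congr fun y => ?_
  have := kern_tri hA y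
  simp only [Function.comp_apply]
  rw [show kern (Complex.ofReal ∘ tri A) y = fejer A y from this, Complex.ofReal_re]

lemma integrable_fejer {A : ℝ} (hA : 0 ≤ A) : Integrable (fejer A) := by
  obtain ⟨M, hM⟩ := (isCompact_Icc (a := (-1:ℝ)) (b := 1)).exists_bound_of_continuousOn
    (continuous_fejer hA).continuousOn
  have hM0 : 0 ≤ M := (norm_nonneg _).trans (hM 0 (by simp))
  refine (((integrable_nearPow (b := 1) (a := 0) one_pos).const_mul M).add
    ((integrable_farPow (b := 1) (a := 2) one_pos (by norm_num)).const_mul 4)).mono'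
    (continuous_fejer hA).aestronglyMeasurable (ae_of_all _ fun y => ?_)
  simp only [Pi.add_apply]
  have n1 := nearPow_nonneg 1 0 y
  have n2 := farPow_nonneg 1 2 y
  rcases le_or_gt |y| 1 with h | h
  · rw [nearPow_of_le h, neg_zero, rpow_zero]
    have := hM y (abs_le.1 h)
    linarith
  · have hy : y ≠ 0 := fun h0 => by rw [h0, abs_zero] at h; linarith
    rw [farPow_of_lt h, rpow_neg (abs_nonneg _), rpow_two, sq_abs,
      Real.norm_of_nonneg (fejer_nonneg _ _), fejer, if_neg hy, div_eq_mul_inv]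
    have hc := neg_one_le_cos (A * y)
    have : 2 * (1 - cos (A * y)) * (y ^ 2)⁻¹ ≤ 4 * (y ^ 2)⁻¹ := by gcongr; linarith
    have := mul_nonneg hM0 n1
    linarith

open scoped FourierTransform in
lemma integral_fejer_mul_exp {A : ℝ} (hA : 0 ≤ A) (t : ℝ) :
    ∫ y : ℝ, Complex.exp (t * y * Complex.I) * (fejer A y : ℂ) = ((2 * π * tri A t : ℝ) : ℂ) := by
  have h2 : (2 * π) ≠ 0 := by positivity
  have e1 : 𝓕 (fun θ => (tri A θ : ℂ)) = fun ξ => ((fejer A (2 * π * ξ) : ℝ) : ℂ) := by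
    ext ξ
    rw [fourier_real_eq_integral_exp_smul, ← fejer_neg, ← kern_tri hA]
    refine integral_congr_ae (ae_of_all _ fun u => ?_)
    simp only [smul_eq_mul]
    rw [mul_comm]
    congr 2
    push_cast
    ring
  have hG : Integrable (𝓕 (fun θ => (tri A θ : ℂ))) := by
    rw [e1]; exact ((integrable_fejer hA).comp_mul_left' h2).ofReal
  have hinv := congrFun (Continuous.fourierInv_fourier_eq
    (Complex.continuous_ofReal.comp (continuous_tri A)) (integrable_tri A).ofReal hG) t
  have e2 : 𝓕⁻ (𝓕 (fun θ => (tri A θ : ℂ))) t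
      = ∫ ξ : ℝ, (fun y : ℝ => Complex.exp (t * y * Complex.I) * (fejer A y : ℂ))
        (2 * π * ξ) := by
    rw [fourierInv_eq', e1]
    refine integral_congr_ae (ae_of_all _ fun ξ => ?_)
    simp only [smul_eq_mul, RCLike.inner_apply, conj_trivial]
    congr 2
    push_cast
    ring
  have h3 := e2.symm.trans hinv
  rw [Measure.integral_comp_mul_left
    (fun y : ℝ => Complex.exp (t * y * Complex.I) * (fejer A y : ℂ))] at h3
  rw [Complex.ofReal_mul, show (tri A t : ℂ) = _ from h3.symm, abs_of_pos (by positivity),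
    Complex.real_smul, ← mul_assoc, ← Complex.ofReal_mul, mul_inv_cancel₀ h2,
    Complex.ofReal_one, one_mul]

namespace IsSymbol

variable {F : Measure ℝ} {q : ℝ → ℂ} {α : ℝ} {C : ℂ} [IsProbabilityMeasure F]

lemma tendsto_renewal (hF : CharAsymp F α C) (hq : IsSymbol F q) {L : ℝ}
    (hL : ∀ a b, ‖q a - q b‖ ≤ L * |a - b|)
    (hi : ∀ x, Integrable (fun y => kern q (y - x)) (renewal F)) :
    Tendsto (fun x : ℝ => ((x * rtail F x : ℝ) : ℂ) * ∫ y, kern q (y - x) ∂(renewal F)) atTop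
      (𝓝 (q 0 * limConst α C)) := by
  obtain ⟨b, B, hbB, hB, h, h'⟩ := hq.exists_supp
  obtain ⟨M, hM⟩ := hq.exists_bound
  refine (hF.tendsto_integral hB hbB h' hq.cont hM hL h).congr fun x => ?_
  rw [hq.integral_renewal hF (hi x)]

end IsSymbol

lemma concOn_of_charFun_eq_one {F : Measure ℝ} [IsProbabilityMeasure F] {θ : ℝ} (hθ : θ ≠ 0)
    (h : charFun F θ = 1) : ConcOn F (2 * π / |θ|) := by
  have hi : Integrable (fun y : ℝ => Complex.exp (θ * y * Complex.I)) F := by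
    refine Integrable.of_bound (Continuous.aestronglyMeasurable (by fun_prop)) 1
      (ae_of_all _ fun y => ?_)
    rw [← Complex.ofReal_mul, Complex.norm_exp_ofReal_mul_I]
  have hcos : ∫ y, cos (θ * y) ∂F = 1 := by
    rw [charFun_apply_real] at h
    have h1 := congrArg Complex.re h
    rw [← RCLike.re_eq_complex_re, ← integral_re hi] at h1
    rw [← Complex.one_re, ← RCLike.re_eq_complex_re, ← h1]
    refine integral_congr_ae (ae_of_all _ fun y => ?_)
    simp only [RCLike.re_eq_complex_re]
    rw [← Complex.ofReal_mul, Complex.exp_ofReal_mul_I_re]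
  have hci : Integrable (fun y => cos (θ * y)) F :=
    Integrable.of_bound (Continuous.aestronglyMeasurable (by fun_prop)) 1
      (ae_of_all _ fun y => abs_cos_le_one _)
  have h0 : ∫ y, (1 - cos (θ * y)) ∂F = 0 := by
    rw [integral_sub (integrable_const _) hci, hcos]; simp
  rw [integral_eq_zero_iff_of_nonneg (fun y => sub_nonneg.2 (cos_le_one _))
    ((integrable_const _).sub hci)] at h0
  have hm : MeasurableSet {x : ℝ | ∃ k : ℤ, x = k * (2 * π / |θ|)} := by
    have : {x : ℝ | ∃ k : ℤ, x = k * (2 * π / |θ|)} = range fun k : ℤ => k * (2 * π / |θ|) := by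
      ext x; simp [eq_comm]
    rw [this]
    exact (countable_range _).measurableSet
  refine (mem_ae_iff_prob_eq_one hm).1 ?_
  filter_upwards [h0] with y hy
  have h1 : cos (|θ| * y) = 1 := by
    have : 1 - cos (θ * y) = 0 := hy
    rcases abs_choice θ with h | h <;> rw [h]
    · linarith
    · rw [neg_mul, cos_neg]; linarith
  obtain ⟨k, hk⟩ := (cos_eq_one_iff _).1 h1
  refine ⟨k, ?_⟩
  have := abs_pos.2 hθ
  field_simp
  linarith

lemma ConcOn.ae {F : Measure ℝ} [IsProbabilityMeasure F] {d : ℝ} (h : ConcOn F d) :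
    ∀ᵐ y ∂F, ∃ k : ℤ, y = k * d := by
  have hm : MeasurableSet {x : ℝ | ∃ k : ℤ, x = k * d} := by
    have : {x : ℝ | ∃ k : ℤ, x = k * d} = range fun k : ℤ => k * d := by
      ext x; simp [eq_comm]
    rw [this]
    exact (countable_range _).measurableSet
  exact (mem_ae_iff_prob_eq_one hm).2 h

lemma ConcOn.charFun_eq_one {F : Measure ℝ} [IsProbabilityMeasure F] {d : ℝ} (hd : 0 < d)
    (h : ConcOn F d) : charFun F (2 * π / d) = 1 := by
  rw [charFun_apply_real]
  have : ∫ y : ℝ, Complex.exp (((2 * π / d : ℝ) : ℂ) * y * Complex.I) ∂F = ∫ _ : ℝ, 1 ∂F := by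
    refine integral_congr_ae ?_
    filter_upwards [h.ae] with y hy
    obtain ⟨k, rfl⟩ := hy
    rw [← Complex.exp_int_mul_two_pi_mul_I k]
    congr 1
    have : (d : ℂ) ≠ 0 := by exact_mod_cast hd.ne'
    push_cast
    field_simp
  simpa using this

lemma ConcOn.ae_renewal {F : Measure ℝ} [IsProbabilityMeasure F] {d : ℝ} (hd : 0 < d)
    (h : ConcOn F d) : ∀ᵐ y ∂(renewal F), ∃ k : ℤ, y = k * d := by
  refine Measure.ae_sum_iff.2 fun n => ?_
  have h2 : 2 * π / d ≠ 0 := by positivity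
  have h1 := concOn_of_charFun_eq_one (F := convPow F n) h2
    (by rw [charFun_convPow, h.charFun_eq_one hd, one_pow])
  rw [abs_of_pos (by positivity), div_div_cancel₀ (by positivity)] at h1
  exact h1.ae

lemma charFun_ne_one_of_not_arith {F : Measure ℝ} [IsProbabilityMeasure F] (h : ¬ Arith F) {θ : ℝ}
    (hθ : 0 < |θ|) : charFun F θ ≠ 1 := fun h1 =>
  h ⟨_, by positivity, concOn_of_charFun_eq_one (abs_pos.1 hθ) h1⟩

lemma charFun_ne_one_of_span {F : Measure ℝ} [IsProbabilityMeasure F] {h : ℝ} (h0 : 0 < h)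
    (hs : ∀ d > 0, ConcOn F d → d ≤ h) {θ : ℝ} (hθ : 0 < |θ|) (hlt : |θ| < 2 * π / h) :
    charFun F θ ≠ 1 := fun h1 => by
  have := hs _ (by positivity) (concOn_of_charFun_eq_one (abs_pos.1 hθ) h1)
  rw [div_le_iff₀ hθ] at this
  rw [lt_div_iff₀ h0] at hlt
  linarith

lemma kern_tri_shift {A : ℝ} (hA : 0 ≤ A) (s y : ℝ) :
    kern (fun θ => (tri A (θ - s) : ℂ)) y = Complex.exp (s * y * Complex.I) * fejer A y := by
  rw [← kern_tri hA]
  unfold kern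
  rw [← integral_const_mul, ← integral_sub_right_eq_self
    (fun θ : ℝ => Complex.exp (s * y * Complex.I) *
      ((tri A θ : ℂ) * Complex.exp (θ * y * Complex.I))) s]
  refine integral_congr_ae (ae_of_all _ fun θ => ?_)
  simp only
  rw [mul_left_comm, ← Complex.exp_add]
  congr 2
  push_cast
  ring

lemma isSymbol_tri_shift {F : Measure ℝ} {A B s : ℝ} (hB : 0 < B) (hAB : |s| + A < B)
    (hne : ∀ θ : ℝ, 0 < |θ| → |θ| ≤ B → charFun F θ ≠ 1) :
    IsSymbol F fun θ => (tri A (θ - s) : ℂ) where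
  cont := by
    have := continuous_tri A
    fun_prop
  exists_supp := by
    refine ⟨|s| + A, B, hAB, hB, fun θ hθ => ?_, hne⟩
    rw [tri_of_le, Complex.ofReal_zero]
    have := abs_sub_abs_le_abs_sub θ s
    linarith

lemma isSymbol_tri {F : Measure ℝ} {A B : ℝ} (hB : 0 < B) (hAB : A < B)
    (hne : ∀ θ : ℝ, 0 < |θ| → |θ| ≤ B → charFun F θ ≠ 1) :
    IsSymbol F fun θ => (tri A θ : ℂ) := by
  simpa using isSymbol_tri_shift (s := 0) hB (by simpa using hAB) hne

lemma integrable_fejer_renewal {F : Measure ℝ} [IsProbabilityMeasure F] {α : ℝ} {C : ℂ}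
    (hF : CharAsymp F α C) {A B : ℝ} (hA : 0 ≤ A) (hAB : A < B)
    (hne : ∀ θ : ℝ, 0 < |θ| → |θ| ≤ B → charFun F θ ≠ 1) (x : ℝ) :
    Integrable (fun y => fejer A (y - x)) (renewal F) :=
  (isSymbol_tri (hA.trans_lt hAB) hAB hne).integrable_renewal_of_nonneg hF (fejer_nonneg A)
    (kern_tri hA) x

/-- The symbol whose kernel singles out the origin on the lattice `hℤ`. -/
def latSymbol (h θ : ℝ) : ℝ :=
  (tri (3 * π / (2 * h)) θ - tri (π / (2 * h)) θ) * (h / π)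

/-- The kernel with symbol `latSymbol h`. -/
def latKernel (h y : ℝ) : ℝ :=
  (fejer (3 * π / (2 * h)) y - fejer (π / (2 * h)) y) * (h / π)

lemma continuous_latSymbol (h : ℝ) : Continuous (latSymbol h) :=
  ((continuous_tri _).sub (continuous_tri _)).mul_const _

lemma latSymbol_zero {h : ℝ} (hh : 0 < h) : latSymbol h 0 = 1 := by
  unfold latSymbol
  rw [tri_zero (by positivity), tri_zero (by positivity)]
  field_simp
  ring

lemma abs_latSymbol_sub_le {h : ℝ} (hh : 0 < h) (a b : ℝ) :
    |latSymbol h a - latSymbol h b| ≤ 2 * (h / π) * |a - b| := by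
  unfold latSymbol
  rw [← sub_mul, abs_mul, abs_of_pos (show 0 < h / π by positivity)]
  have h1 := abs_le.1 (abs_tri_sub_le (3 * π / (2 * h)) a b)
  have h2 := abs_le.1 (abs_tri_sub_le (π / (2 * h)) a b)
  have h3 : |tri (3 * π / (2 * h)) a - tri (π / (2 * h)) a -
      (tri (3 * π / (2 * h)) b - tri (π / (2 * h)) b)| ≤ 2 * |a - b| :=
    abs_le.2 ⟨by linarith, by linarith⟩
  calc _ ≤ 2 * |a - b| * (h / π) := by gcongr
    _ = _ := by ring

lemma kern_latSymbol {h : ℝ} (hh : 0 < h) (y : ℝ) :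
    kern (fun θ => (latSymbol h θ : ℂ)) y = latKernel h y := by
  have hi : ∀ A : ℝ, Integrable fun θ : ℝ => (tri A θ : ℂ) * Complex.exp (θ * y * Complex.I) := by
    intro A
    have := continuous_tri A
    refine (integrable_tri A).norm.mono' (Continuous.aestronglyMeasurable (by fun_prop))
      (ae_of_all _ fun θ => ?_)
    rw [norm_mul, ← Complex.ofReal_mul, Complex.norm_exp_ofReal_mul_I, mul_one, Complex.norm_real]
  unfold latKernel
  rw [Complex.ofReal_mul, Complex.ofReal_sub, ← kern_tri (by positivity),
    ← kern_tri (by positivity)]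
  unfold kern
  rw [← integral_sub (hi _) (hi _), ← integral_mul_const]
  refine integral_congr_ae (ae_of_all _ fun θ => ?_)
  simp only [latSymbol]
  push_cast
  ring

lemma latKernel_zero {h : ℝ} (hh : 0 < h) : latKernel h 0 = 2 * π / h := by
  simp only [latKernel, fejer, if_true]
  field_simp
  ring

lemma latKernel_mul {h : ℝ} (hh : 0 < h) {k : ℤ} (hk : k ≠ 0) : latKernel h (k * h) = 0 := by
  have h0 : (k : ℝ) * h ≠ 0 := mul_ne_zero (by exact_mod_cast hk) hh.ne'
  have e : cos (3 * π / (2 * h) * (k * h)) = cos (π / (2 * h) * (k * h)) := by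
    have : 3 * π / (2 * h) * (k * h) = k * (2 * π) - π / (2 * h) * (k * h) := by
      field_simp; ring
    rw [this, cos_int_mul_two_pi_sub]
  simp only [latKernel, fejer, if_neg h0, e, sub_self, zero_mul]

lemma isSymbol_latSymbol {F : Measure ℝ} [IsProbabilityMeasure F] {h : ℝ} (hh : 0 < h)
    (hs : ∀ d > 0, ConcOn F d → d ≤ h) : IsSymbol F fun θ => (latSymbol h θ : ℂ) where
  cont := Complex.continuous_ofReal.comp (continuous_latSymbol h)
  exists_supp := by
    refine ⟨3 * π / (2 * h), 7 * π / (4 * h), ?_, by positivity, fun θ hθ => ?_, fun θ h1 h2 =>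
      charFun_ne_one_of_span hh hs h1 (h2.trans_lt ?_)⟩
    · rw [div_lt_div_iff₀ (by positivity) (by positivity)]
      nlinarith [mul_pos pi_pos hh]
    · have : π / (2 * h) ≤ 3 * π / (2 * h) := by gcongr; linarith [pi_pos]
      simp [latSymbol, tri_of_le hθ.le, tri_of_le (this.trans hθ.le)]
    · rw [div_lt_div_iff₀ (by positivity) (by positivity)]
      nlinarith [mul_pos pi_pos hh]

lemma latKernel_sub_ae {F : Measure ℝ} [IsProbabilityMeasure F] {h : ℝ} (hh : 0 < h)
    (hc : ConcOn F h) (m : ℤ) : (fun y => latKernel h (y - m * h)) =ᵐ[renewal F]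
      ({(m * h : ℝ)} : Set ℝ).indicator fun _ => 2 * π / h := by
  filter_upwards [hc.ae_renewal hh] with y hy
  obtain ⟨k, rfl⟩ := hy
  by_cases hkm : k = m
  · subst hkm
    simp [latKernel_zero hh]
  · have h1 : (k : ℝ) * h ≠ m * h := fun h' =>
      hkm (by exact_mod_cast mul_right_cancel₀ hh.ne' h')
    rw [indicator_of_notMem (by simpa using h1), ← sub_mul, ← Int.cast_sub,
      latKernel_mul hh (sub_ne_zero.2 hkm)]

lemma RegTail.tendsto_mul_ratio {G : ℝ → ℝ} {α h : ℝ} (hG : RegTail G α) (hh : 0 < h) {y : ℝ → ℝ}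
    (hy1 : ∀ x, x < y x) (hy2 : ∀ x, y x ≤ x + h) :
    Tendsto (fun x => x * G x / (y x * G (y x))) atTop (𝓝 1) := by
  have h1 : Tendsto (fun x => x / y x) atTop (𝓝 1) := by
    have h0 : Tendsto (fun x : ℝ => 1 - h / x) atTop (𝓝 1) := by
      simpa using (tendsto_const_nhds (x := h)).div_atTop tendsto_id |>.const_sub 1
    refine tendsto_of_tendsto_of_tendsto_of_le_of_le' h0 tendsto_const_nhds ?_ ?_
    · filter_upwards [eventually_gt_atTop 0] with x hx
      have := hy1 x
      have := hy2 x
      have hyp : 0 < y x := by linarith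
      rw [le_div_iff₀ hyp]
      have e : (1 - h / x) * (x + h) = x - h * h / x := by field_simp; ring
      rcases le_or_gt 0 (1 - h / x) with hn | hn
      · calc (1 - h / x) * y x ≤ (1 - h / x) * (x + h) := by gcongr
          _ ≤ x := by rw [e]; have : 0 ≤ h * h / x := by positivity
                      linarith
      · nlinarith
    · filter_upwards [eventually_gt_atTop 0] with x hx
      have := hy1 x
      exact (div_le_one (by linarith)).2 this.le
  have h2 : Tendsto (fun x => G x / G (y x)) atTop (𝓝 1) := by
    have h0 := (hG.tendsto_add_ratio hh.le).inv₀ one_ne_zero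
    rw [inv_one] at h0
    refine tendsto_of_tendsto_of_tendsto_of_le_of_le tendsto_const_nhds h0 (fun x => ?_)
      (fun x => ?_)
    · exact (one_le_div (hG.pos _)).2 (hG.anti (hy1 x).le)
    · simp only [inv_div]
      exact div_le_div_of_nonneg_left (hG.pos _).le (hG.pos _) (hG.anti (hy2 x))
  simpa [mul_div_mul_comm] using h1.mul h2

section Arithmetic

variable {F : Measure ℝ} [IsProbabilityMeasure F] {α h : ℝ} {C : ℂ}

lemma integrable_kern_latSymbol (hF : CharAsymp F α C) (hh : 0 < h)
    (hs : ∀ d > 0, ConcOn F d → d ≤ h) (x : ℝ) :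
    Integrable (fun y => kern (fun θ => (latSymbol h θ : ℂ)) (y - x)) (renewal F) := by
  have hne : ∀ θ : ℝ, 0 < |θ| → |θ| ≤ 7 * π / (4 * h) → charFun F θ ≠ 1 := fun θ h1 h2 =>
    charFun_ne_one_of_span hh hs h1 (h2.trans_lt (by
      rw [div_lt_div_iff₀ (by positivity) (by positivity)]
      nlinarith [mul_pos pi_pos hh]))
  have i1 := integrable_fejer_renewal hF (A := 3 * π / (2 * h)) (by positivity) (by
    rw [div_lt_div_iff₀ (by positivity) (by positivity)]
    nlinarith [mul_pos pi_pos hh]) hne x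
  have i2 := integrable_fejer_renewal hF (A := π / (2 * h)) (by positivity) (by
    rw [div_lt_div_iff₀ (by positivity) (by positivity)]
    nlinarith [mul_pos pi_pos hh]) hne x
  simp_rw [kern_latSymbol hh]
  exact ((i1.sub i2).mul_const _).ofReal

lemma tendsto_renewal_singleton (hF : CharAsymp F α C) (hh : 0 < h) (hc : ConcOn F h)
    (hs : ∀ d > 0, ConcOn F d → d ≤ h) {c : ℝ} (hlim : limConst α C = ((2 * π * c : ℝ) : ℂ))
    {m : ℝ → ℤ} (hm : Tendsto (fun x => (m x : ℝ) * h) atTop atTop) :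
    Tendsto (fun x => (m x : ℝ) * h * rtail F (m x * h) * (renewal F).real {(m x : ℝ) * h}) atTop
      (𝓝 (h * c)) := by
  have h1 := (isSymbol_latSymbol hh hs).tendsto_renewal hF (L := 2 * (h / π)) (fun a b => by
    rw [← Complex.ofReal_sub, Complex.norm_real]
    exact abs_latSymbol_sub_le hh a b) (integrable_kern_latSymbol hF hh hs)
  rw [latSymbol_zero hh, hlim] at h1
  have h2 := (Complex.continuous_re.tendsto _).comp (h1.comp hm)
  rw [Complex.ofReal_one, one_mul, Complex.ofReal_re] at h2
  have h3 := h2.const_mul (h / (2 * π))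
  rw [show h / (2 * π) * (2 * π * c) = h * c by field_simp] at h3
  refine h3.congr fun x => ?_
  simp only [Function.comp_apply]
  simp_rw [kern_latSymbol hh]
  rw [integral_complex_ofReal, ← Complex.ofReal_mul, Complex.ofReal_re,
    integral_congr_ae (latKernel_sub_ae hh hc (m x)),
    integral_indicator (measurableSet_singleton _), setIntegral_const, smul_eq_mul]
  field_simp

lemma renewal_Ioc_eq (hh : 0 < h) (hc : ConcOn F h) (x : ℝ) :
    renewal F (Ioc x (x + h)) = renewal F {((⌊x / h⌋ + 1 : ℤ) : ℝ) * h} := by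
  refine measure_congr ?_
  filter_upwards [hc.ae_renewal hh] with y hy
  obtain ⟨k, rfl⟩ := hy
  refine propext ?_
  show ((k : ℝ) * h ∈ Ioc x (x + h)) ↔ ((k : ℝ) * h ∈ ({((⌊x / h⌋ + 1 : ℤ) : ℝ) * h} : Set ℝ))
  rw [mem_singleton_iff, mul_left_inj' hh.ne', Int.cast_inj, mem_Ioc, ← div_lt_iff₀ hh,
    ← sub_le_iff_le_add, ← sub_one_mul, ← le_div_iff₀ hh, ← Int.floor_lt]
  have : (k : ℝ) - 1 ≤ x / h ↔ k - 1 ≤ ⌊x / h⌋ := by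
    rw [Int.le_floor]; push_cast; rfl
  rw [this]
  omega

theorem srt_arithmetic (hF : CharAsymp F α C) (hh : 0 < h) (hc : ConcOn F h)
    (hs : ∀ d > 0, ConcOn F d → d ≤ h) {c : ℝ} (hlim : limConst α C = ((2 * π * c : ℝ) : ℂ)) :
    Tendsto (fun x : ℝ => x * rtail F x * ((renewal F) (Set.Ioc x (x + h))).toReal)
      atTop (𝓝 (h * c)) := by
  set m : ℝ → ℤ := fun x => ⌊x / h⌋ + 1 with hm
  have hy1 : ∀ x, x < m x * h := fun x => by
    rw [← div_lt_iff₀ hh]; exact_mod_cast Int.lt_floor_add_one (x / h)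
  have hy2 : ∀ x, m x * h ≤ x + h := fun x => by
    have := Int.floor_le (x / h)
    rw [le_div_iff₀ hh] at this
    simp only [hm]; push_cast; linarith
  have h1 := tendsto_renewal_singleton hF hh hc hs hlim
    (tendsto_atTop_mono (fun x => (hy1 x).le) tendsto_id)
  have h2 := (hF.tail.tendsto_mul_ratio hh hy1 hy2).mul h1
  rw [one_mul] at h2
  refine h2.congr' ?_
  filter_upwards [eventually_gt_atTop 0] with x hx
  rw [renewal_Ioc_eq hh hc, Measure.real]
  have h3 : 0 < m x * h := hx.trans (hy1 x)
  have h4 := hF.tail.pos (m x * h)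
  have h5 : (m x * h) * rtail F (m x * h) ≠ 0 := by positivity
  rw [← mul_assoc, div_mul_cancel₀ _ h5]

end Arithmetic

lemma charFun_nnreal_smul (r : NNReal) (μ : Measure ℝ) (t : ℝ) :
    charFun (r • μ) t = r * charFun μ t := by
  rw [charFun_apply_real, charFun_apply_real, integral_smul_nnreal_measure]
  simp [NNReal.smul_def]

lemma charFun_finiteMeasure_zero (μ : FiniteMeasure ℝ) :
    charFun (μ : Measure ℝ) 0 = ((μ.mass : ℝ) : ℂ) := by
  rw [charFun_zero]
  rfl

/-- Lévy's continuity theorem for finite measures. -/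
lemma tendsto_finiteMeasure_of_charFun {μ : ℕ → FiniteMeasure ℝ} {ν : FiniteMeasure ℝ}
    (h : ∀ t, Tendsto (fun n => charFun (μ n : Measure ℝ) t) atTop (𝓝 (charFun (ν : Measure ℝ) t))) :
    Tendsto μ atTop (𝓝 ν) := by
  have hmass : Tendsto (fun n => (μ n).mass) atTop (𝓝 ν.mass) := by
    have h0 := (Complex.continuous_re.tendsto _).comp (h 0)
    simp only [charFun_finiteMeasure_zero, Complex.ofReal_re, Function.comp_def] at h0
    exact NNReal.tendsto_coe.1 h0
  by_cases hν : ν = 0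
  · subst hν
    exact FiniteMeasure.tendsto_zero_of_tendsto_zero_mass (by simpa using hmass)
  refine (FiniteMeasure.tendsto_normalize_iff_tendsto hν).1 ⟨?_, hmass⟩
  have hν' := ν.mass_nonzero_iff.2 hν
  refine ProbabilityMeasure.tendsto_iff_tendsto_charFun.2 fun t => ?_
  have hinv : Tendsto (fun n => (((μ n).mass⁻¹ : NNReal) : ℂ)) atTop (𝓝 ((ν.mass⁻¹ : NNReal) : ℂ)) :=
    (Complex.continuous_ofReal.comp NNReal.continuous_coe).tendsto _ |>.comp (hmass.inv₀ hν')
  have h1 := hinv.mul (h t)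
  rw [← charFun_nnreal_smul, ← ν.toMeasure_normalize_eq_of_nonzero hν] at h1
  refine h1.congr' ?_
  filter_upwards [hmass.eventually_ne hν'] with n hn
  rw [← charFun_nnreal_smul,
    ← (μ n).toMeasure_normalize_eq_of_nonzero ((μ n).mass_nonzero_iff.1 hn)]

lemma tendsto_finiteMeasure_apply {μ : ℕ → FiniteMeasure ℝ} {ν : FiniteMeasure ℝ}
    (h : Tendsto μ atTop (𝓝 ν)) {E : Set ℝ} (hE : (ν : Measure ℝ) (frontier E) = 0) :
    Tendsto (fun n => (μ n) E) atTop (𝓝 (ν E)) := by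
  by_cases hν : ν = 0
  · subst hν
    have := h.mass
    rw [FiniteMeasure.zero_mass] at this
    exact tendsto_of_tendsto_of_tendsto_of_le_of_le tendsto_const_nhds (by simpa using this)
      (fun n => zero_le) (fun n => (μ n).apply_le_mass E)
  have h1 := (FiniteMeasure.tendsto_normalize_iff_tendsto hν).2 h
  have h2 := ProbabilityMeasure.tendsto_measure_of_null_frontier_of_tendsto h1.1 (E := E) (by
    rw [ν.normalize_eq_of_nonzero hν]
    rw [← FiniteMeasure.null_iff_toMeasure_null] at hE
    rw [hE, mul_zero])
  simp_rw [FiniteMeasure.self_eq_mass_mul_normalize]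
  exact h1.2.mul h2

/-- The finite measure with integrable density `w` with respect to `μ`. -/
def densityMeasure (μ : Measure ℝ) (w : ℝ → ℝ) (hw : Integrable w μ) : FiniteMeasure ℝ :=
  ⟨μ.withDensity fun y => ENNReal.ofReal (w y), isFiniteMeasure_withDensity_ofReal hw.2⟩

section DensityMeasure

variable {μ : Measure ℝ} {w : ℝ → ℝ}

lemma integral_densityMeasure {E : Type*} [NormedAddCommGroup E] [NormedSpace ℝ E]
    (hw : Integrable w μ) (hm : Measurable w) (h0 : ∀ y, 0 ≤ w y) (f : ℝ → E) :
    ∫ y, f y ∂(densityMeasure μ w hw : Measure ℝ) = ∫ y, w y • f y ∂μ := by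
  have h := integral_withDensity_eq_integral_smul (μ := μ) hm.real_toNNReal f
  refine Eq.trans h (integral_congr_ae (ae_of_all _ fun y => ?_))
  simp only [NNReal.smul_def, Real.coe_toNNReal _ (h0 y)]

lemma charFun_densityMeasure (hw : Integrable w μ) (hm : Measurable w) (h0 : ∀ y, 0 ≤ w y)
    (t : ℝ) : charFun (densityMeasure μ w hw : Measure ℝ) t
      = ∫ y : ℝ, Complex.exp (t * y * Complex.I) * w y ∂μ := by
  rw [charFun_apply_real, integral_densityMeasure hw hm h0]
  refine integral_congr_ae (ae_of_all _ fun y => ?_)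
  simp only [Complex.real_smul, mul_comm]

lemma densityMeasure_apply (hw : Integrable w μ) {E : Set ℝ} (hE : MeasurableSet E)
    (h1 : ∀ y ∈ E, w y = 1) : (densityMeasure μ w hw : Measure ℝ) E = μ E := by
  refine (withDensity_apply _ hE).trans ?_
  rw [setLIntegral_congr_fun hE (g := fun _ => 1) fun y hy => by simp [h1 y hy]]
  simp

/-- The truncated reciprocal of a continuous weight. -/
def recipWeight (w : ℝ → ℝ) (δ y : ℝ) : ℝ := (max (w y) δ)⁻¹

lemma recipWeight_nonneg (w : ℝ → ℝ) {δ : ℝ} (hδ : 0 < δ) (y : ℝ) : 0 ≤ recipWeight w δ y :=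
  inv_nonneg.2 (hδ.le.trans (le_max_right _ _))

lemma recipWeight_le (w : ℝ → ℝ) {δ : ℝ} (hδ : 0 < δ) (y : ℝ) : recipWeight w δ y ≤ δ⁻¹ :=
  inv_anti₀ hδ (le_max_right _ _)

lemma continuous_recipWeight (hw : Continuous w) {δ : ℝ} (hδ : 0 < δ) :
    Continuous (recipWeight w δ) :=
  (hw.max continuous_const).inv₀ fun _ => (hδ.trans_le (le_max_right _ _)).ne'

lemma integrable_mul_recipWeight (hw : Integrable w μ) (hc : Continuous w) {δ : ℝ} (hδ : 0 < δ) :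
    Integrable (fun y => w y * recipWeight w δ y) μ := by
  refine (hw.norm.mul_const δ⁻¹).mono'
    (hc.mul (continuous_recipWeight hc hδ)).aestronglyMeasurable (ae_of_all _ fun y => ?_)
  rw [norm_mul, Real.norm_of_nonneg (recipWeight_nonneg w hδ y)]
  gcongr
  exact recipWeight_le w hδ y

end DensityMeasure

/-- Convergence of the characteristic functions of weighted measures entails convergence of the
measures of intervals on which the weight is positive. -/
lemma tendsto_measure_Ioc_of_weighted {V : ℕ → Measure ℝ} {W : Measure ℝ} [NullSingletonClass W] {w : ℝ → ℝ}
    (hc : Continuous w) (h0 : ∀ y, 0 ≤ w y) (hV : ∀ n, Integrable w (V n)) (hW : Integrable w W)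
    (hlim : ∀ t : ℝ, Tendsto (fun n => ∫ y : ℝ, Complex.exp (t * y * Complex.I) * w y ∂(V n)) atTop
      (𝓝 (∫ y : ℝ, Complex.exp (t * y * Complex.I) * w y ∂W)))
    {a b : ℝ} (hab : a < b) (hpos : ∀ y ∈ Icc a b, 0 < w y) :
    Tendsto (fun n => ((V n) (Ioc a b)).toReal) atTop (𝓝 (W (Ioc a b)).toReal) := by
  obtain ⟨y₀, hy₀, hmin⟩ := isCompact_Icc.exists_isMinOn (nonempty_Icc.2 hab.le) hc.continuousOn
  set δ := w y₀ with hδdef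
  have hδ : 0 < δ := hpos y₀ hy₀
  have hkc := continuous_recipWeight hc hδ
  have hweak : Tendsto (fun n => densityMeasure (V n) w (hV n)) atTop
      (𝓝 (densityMeasure W w hW)) := by
    refine tendsto_finiteMeasure_of_charFun fun t => ?_
    simp_rw [charFun_densityMeasure _ hc.measurable h0]
    exact hlim t
  have hkm : Measurable fun y => w y * recipWeight w δ y := (hc.mul hkc).measurable
  have hk0 : ∀ y, 0 ≤ w y * recipWeight w δ y := fun y =>
    mul_nonneg (h0 y) (recipWeight_nonneg w hδ y)
  have hweak' : Tendsto
      (fun n => densityMeasure (V n) _ (integrable_mul_recipWeight (hV n) hc hδ)) atTop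
      (𝓝 (densityMeasure W _ (integrable_mul_recipWeight hW hc hδ))) := by
    refine FiniteMeasure.tendsto_iff_forall_integral_tendsto.2 fun f => ?_
    let k : BoundedContinuousFunction ℝ ℝ := BoundedContinuousFunction.ofNormedAddCommGroup
      (recipWeight w δ) hkc δ⁻¹ fun y => by
        rw [Real.norm_of_nonneg (recipWeight_nonneg w hδ y)]; exact recipWeight_le w hδ y
    have h1 := FiniteMeasure.tendsto_iff_forall_integral_tendsto.1 hweak (k * f)
    have e : ∀ {μ : Measure ℝ} (hw : Integrable w μ),
        ∫ y, (k * f) y ∂(densityMeasure μ w hw : Measure ℝ) = ∫ y, f y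
          ∂(densityMeasure μ _ (integrable_mul_recipWeight hw hc hδ) : Measure ℝ) := fun hw => by
      rw [integral_densityMeasure _ hc.measurable h0,
        integral_densityMeasure _ hkm hk0]
      refine integral_congr_ae (ae_of_all _ fun y => ?_)
      simp only [smul_eq_mul, mul_assoc]
      rfl
    rw [e hW] at h1
    exact h1.congr fun n => e (hV n)
  have hone : ∀ y ∈ Ioc a b, w y * recipWeight w δ y = 1 := fun y hy => by
    have hy' := Ioc_subset_Icc_self hy
    have : δ ≤ w y := hmin hy'
    rw [recipWeight, max_eq_left this, mul_inv_cancel₀ (hpos y hy').ne']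
  have h2 := tendsto_finiteMeasure_apply hweak' (E := Ioc a b) (by
    refine withDensity_absolutelyContinuous _ _ ?_
    rw [frontier_Ioc hab]
    exact (toFinite {a, b}).measure_zero W)
  have h3 := NNReal.tendsto_coe.2 h2
  have e : ∀ {μ : Measure ℝ} (hw : Integrable w μ),
      ((densityMeasure μ _ (integrable_mul_recipWeight hw hc hδ) (Ioc a b) : NNReal) : ℝ)
        = (μ (Ioc a b)).toReal := fun hw => by
    rw [← densityMeasure_apply (integrable_mul_recipWeight hw hc hδ) measurableSet_Ioc hone]
    rfl
  rw [e hW] at h3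
  exact h3.congr fun n => e (hV n)

section ShiftedRenewal

variable {F : Measure ℝ}

/-- The rescaled renewal measure seen from `x`. -/
def shiftedRenewal (F : Measure ℝ) (x : ℝ) : Measure ℝ :=
  (x * rtail F x).toNNReal • (renewal F).map fun y => y - x

lemma integral_shiftedRenewal {E : Type*} [NormedAddCommGroup E] [NormedSpace ℝ E] (f : ℝ → E)
    {x : ℝ} (hx : 0 ≤ x) :
    ∫ y, f y ∂(shiftedRenewal F x) = (x * rtail F x) • ∫ y, f (y - x) ∂(renewal F) := by
  have h0 : 0 ≤ x * rtail F x := mul_nonneg hx ENNReal.toReal_nonneg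
  have he : MeasurableEmbedding fun y : ℝ => y - x :=
    (MeasurableEquiv.subRight x).measurableEmbedding
  rw [shiftedRenewal, integral_smul_nnreal_measure, he.integral_map, NNReal.smul_def,
    Real.coe_toNNReal _ h0]

lemma integrable_shiftedRenewal {f : ℝ → ℝ} {x : ℝ}
    (hf : Integrable (fun y => f (y - x)) (renewal F)) : Integrable f (shiftedRenewal F x) := by
  have he : MeasurableEmbedding fun y : ℝ => y - x :=
    (MeasurableEquiv.subRight x).measurableEmbedding
  refine Integrable.smul_measure_nnreal ?_
  exact he.integrable_map_iff.2 hf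

lemma shiftedRenewal_Ioc {h x : ℝ} (hx : 0 ≤ x) :
    (shiftedRenewal F x (Ioc 0 h)).toReal
      = x * rtail F x * (renewal F (Ioc x (x + h))).toReal := by
  have h0 : 0 ≤ x * rtail F x := mul_nonneg hx ENNReal.toReal_nonneg
  rw [shiftedRenewal, Measure.smul_apply, Measure.map_apply (by fun_prop) measurableSet_Ioc,
    preimage_sub_const_Ioc, zero_add, add_comm h, ENNReal.toReal_smul, NNReal.smul_def,
    Real.coe_toNNReal _ h0, smul_eq_mul]

end ShiftedRenewal

section NonArithmetic

variable {F : Measure ℝ} [IsProbabilityMeasure F] {α h : ℝ} {C : ℂ}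

lemma integrable_exp_mul_fejer_renewal (hF : CharAsymp F α C) (ha : ¬ Arith F) {A : ℝ}
    (hA : 0 < A) (t x : ℝ) : Integrable
      (fun y => kern (fun θ => (tri A (θ - t) : ℂ)) (y - x)) (renewal F) := by
  have h1 := integrable_fejer_renewal hF hA.le (lt_add_one A)
    (fun θ hθ _ => charFun_ne_one_of_not_arith ha hθ) x
  have hc := continuous_fejer hA.le
  simp_rw [kern_tri_shift hA.le]
  refine h1.norm.mono' (Continuous.aestronglyMeasurable (by fun_prop)) (ae_of_all _ fun y => ?_)
  rw [norm_mul, ← Complex.ofReal_mul, Complex.norm_exp_ofReal_mul_I, one_mul, Complex.norm_real]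

lemma tendsto_exp_mul_fejer_renewal (hF : CharAsymp F α C) (ha : ¬ Arith F) {A : ℝ}
    (hA : 0 < A) (t : ℝ) : Tendsto (fun x : ℝ => ((x * rtail F x : ℝ) : ℂ) *
      ∫ y : ℝ, Complex.exp (t * (y - x : ℝ) * Complex.I) * fejer A (y - x) ∂(renewal F)) atTop
      (𝓝 (tri A t * limConst α C)) := by
  have hs : IsSymbol F fun θ => (tri A (θ - t) : ℂ) :=
    isSymbol_tri_shift (B := |t| + A + 1) (by positivity) (by linarith)
      fun θ hθ _ => charFun_ne_one_of_not_arith ha hθ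
  have h1 := hs.tendsto_renewal hF (L := 1) (fun a b => by
    rw [← Complex.ofReal_sub, Complex.norm_real, one_mul]
    simpa using abs_tri_sub_le A (a - t) (b - t)) (integrable_exp_mul_fejer_renewal hF ha hA t)
  rw [zero_sub, tri_neg] at h1
  simpa only [kern_tri_shift hA.le] using h1

theorem srt_nonarithmetic (hF : CharAsymp F α C) (hh : 0 < h) (ha : ¬ Arith F) {c : ℝ}
    (hlim : limConst α C = ((2 * π * c : ℝ) : ℂ)) :
    Tendsto (fun x : ℝ => x * rtail F x * ((renewal F) (Set.Ioc x (x + h))).toReal)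
      atTop (𝓝 (h * c)) := by
  have hA : 0 < π / h := by positivity
  set A := π / h with hAdef
  have hc : 0 ≤ c := by
    have h1 := (Complex.continuous_re.tendsto _).comp (tendsto_exp_mul_fejer_renewal hF ha hA 0)
    rw [hlim, tri_zero hA.le, ← Complex.ofReal_mul, Complex.ofReal_re] at h1
    have h2 : 0 ≤ A * (2 * π * c) := by
      refine ge_of_tendsto h1 ?_
      filter_upwards [eventually_ge_atTop 0] with x hx
      simp only [Function.comp_apply, Complex.ofReal_zero, zero_mul, Complex.exp_zero, one_mul]
      rw [integral_complex_ofReal, ← Complex.ofReal_mul, Complex.ofReal_re]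
      exact mul_nonneg (mul_nonneg hx ENNReal.toReal_nonneg)
        (integral_nonneg fun y => fejer_nonneg _ _)
    exact nonneg_of_mul_nonneg_right (nonneg_of_mul_nonneg_right h2 hA) (by positivity)
  have hfc := continuous_fejer hA.le
  have hvol : Integrable (fejer A) (c.toNNReal • (volume : Measure ℝ)) :=
    (integrable_fejer hA.le).smul_measure_nnreal
  have hatoms : NullSingletonClass (c.toNNReal • (volume : Measure ℝ)) := ⟨fun x => by simp⟩
  refine tendsto_of_seq_tendsto fun u hu => ?_
  have key := tendsto_measure_Ioc_of_weighted (V := fun n => shiftedRenewal F (u n))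
    (W := c.toNNReal • (volume : Measure ℝ)) hfc (fejer_nonneg A)
    (fun n => integrable_shiftedRenewal (integrable_fejer_renewal hF hA.le (lt_add_one A)
      (fun θ hθ _ => charFun_ne_one_of_not_arith ha hθ) (u n))) hvol (fun t => ?_) hh
    (fun y hy => fejer_pos hA ?_)
  · have e : ((c.toNNReal • (volume : Measure ℝ)) (Ioc 0 h)).toReal = h * c := by
      rw [Measure.smul_apply, ENNReal.toReal_smul, NNReal.smul_def, Real.coe_toNNReal _ hc,
        Real.volume_Ioc, sub_zero, ENNReal.toReal_ofReal hh.le, smul_eq_mul, mul_comm]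
    rw [e] at key
    refine key.congr' ?_
    filter_upwards [hu.eventually_ge_atTop 0] with n hn
    exact shiftedRenewal_Ioc hn
  · have h1 := (tendsto_exp_mul_fejer_renewal hF ha hA t).comp hu
    have e : ∫ y : ℝ, Complex.exp (t * y * Complex.I) * fejer A y ∂(c.toNNReal • volume)
        = tri A t * limConst α C := by
      rw [integral_smul_nnreal_measure, integral_fejer_mul_exp hA.le, hlim, NNReal.smul_def,
        Real.coe_toNNReal _ hc, Complex.real_smul]
      push_cast
      ring
    rw [e]
    refine h1.congr' ?_
    filter_upwards [hu.eventually_ge_atTop 0] with n hn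
    rw [integral_shiftedRenewal _ hn, Complex.real_smul]
    rfl
  · rw [hAdef, show 2 * π / (π / h) = 2 * h by field_simp, abs_of_nonneg hy.1]
    linarith [hy.2]

end NonArithmetic

lemma exists_charAsymp {F : Measure ℝ} [IsProbabilityMeasure F] {α : ℝ} {ℓ : ℝ → ℝ}
    (hα : α ∈ Set.Ioo (1/2 : ℝ) 1) (hℓ : RegVary ℓ α) (hRT : RightTail F ℓ) (hTR : TailRatio F) :
    ∃ C, CharAsymp F α C := by
  have hα0 : 0 < α := by linarith [hα.1]
  have hG := rtail_regTail hℓ hRT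
  obtain ⟨C, hC⟩ := exists_tendsto_one_sub_charFun hα0 hα.2 hG hTR
  exact ⟨C, hα.1, hα.2, hG, re_pos_of_tendsto_one_sub_charFun hα0 hG hC, hC,
    norm_charFun_sub_le hα0 hα.2 hG hTR⟩

end SRT

/-- Theorem 1.2 of the paper: the SRT holds whenever
`α ∈ (1/2,1)` and the two tail conditions hold. -/
theorem srt_alpha_gt_half
    (F : Measure ℝ) [IsProbabilityMeasure F] (α h : ℝ) (ℓ : ℝ → ℝ)
    (hα : α ∈ Set.Ioo (1/2 : ℝ) 1) (hℓ : RegVary ℓ α)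
    (hRT : RightTail F ℓ) (hTR : TailRatio F) (hspan : SpanOK F h)
    (g : ℝ → ℝ) (hg : StableLimit F ℓ g) :
    SRTholds F h α g := by
  obtain ⟨C, hF⟩ := exists_charAsymp hα hℓ hRT hTR
  have hlim := hF.limConst_eq hRT hg
  obtain ⟨hh, ha | ⟨hc, hs⟩⟩ := hspan
  · have := srt_nonarithmetic hF hh ha hlim
    rwa [← mul_assoc, mul_comm h] at this
  · have := srt_arithmetic hF hh hc hs hlim
    rwa [← mul_assoc, mul_comm h] at this
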